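/- Let x, y ∈ W, s ∈ S and let r be a reflection of W with s ≠ r, such that x ≺ sx, x ≺ rx, sx ≤ y and rx ≤ y in Bruhat order. If moreover srx ≰ y, then y ≺ sy, srx ≤ sy, and the Bruhat intervals [rx, y] and [srx, sy] are isomorphic as posets, the isomorphism being given by w ↦ sw. -/

import Mathlib

open Pointwise RealInnerProductSpace

noncomputable section

/-- The cone (set of all nonnegative linear combinations) over a set `X`
in a real vector space. -/
def coneOf {V : Type} [AddCommGroup V] [Module ℝ V] (X : Set V) : Set V :=
  {v | ∃ (n : ℕ) (c : Fin n → ℝ) (x : Fin n → V),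
    (∀ i, 0 ≤ c i) ∧ (∀ i, x i ∈ X) ∧ v = ∑ i, c i • x i}

/-- `v` spans an extremal ray of the cone `C`. -/
def IsExtremeDir {V : Type} [AddCommGroup V] [Module ℝ V] (C : Set V) (v : V) : Prop :=
  v ∈ C ∧ v ≠ 0 ∧ ∀ a ∈ C, ∀ b ∈ C, a + b = v → ∃ c : ℝ, 0 ≤ c ∧ a = c • v

/-- The inner normal cone of the polyhedron `P` at a point `p` : the set of (inner products
with) linear functionals attaining their minimum over `P` exactly at `p`, together with `0`. -/
def normalConeVertex {V : Type} [NormedAddCommGroup V] [InnerProductSpace ℝ V]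
    (P : Set V) (p : V) : Set V :=
  {u | ∀ q ∈ P, ⟪u, p⟫ ≤ ⟪u, q⟫ ∧ (⟪u, q⟫ = ⟪u, p⟫ → q = p)} ∪ {0}

/-- A finite Coxeter system `(W, S)` together with its geometric action on a Euclidean
vector space `V`, a root system `Φ = Φ⁺ ⊔ (-Φ⁺)` with simple roots `α s` (`s ∈ S`),
reflections `sβ β` for positive roots `β`, fundamental weights `ω s` (`s ∈ S`),
and the length function `len`. -/
structure CoxeterRootSystem (V : Type) [NormedAddCommGroup V] [InnerProductSpace ℝ V] where
  W : Type
  [grp : Group W]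
  [fin : Fintype W]
  [deceq : DecidableEq W]
  S : Set W
  ρ : W →* (V ≃ₗ[ℝ] V)
  Φpos : Set V
  α : W → V
  sβ : V → W
  ω : W → V
  len : W → ℕ
  hS_inv : ∀ s ∈ S, s * s = 1
  hS_ne : ∀ s ∈ S, s ≠ 1
  hS_gen : Subgroup.closure S = ⊤
  hρ_inj : ∀ u v : W, ρ u = ρ v → u = v
  hΦfin : Φpos.Finite
  hΦdisj : ∀ β ∈ Φpos, -β ∉ Φpos
  hΦperm : ∀ u : W, ∀ β ∈ Φpos, ρ u β ∈ Φpos ∨ -(ρ u β) ∈ Φpos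
  hα_mem : ∀ s ∈ S, α s ∈ Φpos
  hα_indep : LinearIndependent ℝ (fun s : S => α s.1)
  hα_span : Submodule.span ℝ (α '' S) = ⊤
  horbit : ∀ β ∈ Φpos, ∃ u s : W, s ∈ S ∧ β = ρ u (α s)
  hsβ_simple : ∀ s ∈ S, sβ (α s) = s
  hsβ_conj : ∀ u s : W, s ∈ S → ρ u (α s) ∈ Φpos → sβ (ρ u (α s)) = u * s * u⁻¹
  hsβ_reflect : ∀ β ∈ Φpos, ρ (sβ β) β = -β
  hsβ_fix : ∀ β ∈ Φpos, ∀ v : V, ⟪β, v⟫ = 0 → ρ (sβ β) v = v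
  hlen : ∀ u : W,
    len u = sInf {n | ∃ l : List W, (∀ x ∈ l, x ∈ S) ∧ l.length = n ∧ l.prod = u}
  hlen_geom : ∀ u : W, ∀ s ∈ S, (len (u * s) = len u + 1 ↔ ρ u (α s) ∈ Φpos)
  hω_dual : ∀ s ∈ S, ∀ t ∈ S, ⟪ω s, α t⟫ = if s = t then ⟪α t, α t⟫ / 2 else 0

attribute [instance] CoxeterRootSystem.grp CoxeterRootSystem.fin CoxeterRootSystem.deceq

namespace CoxeterRootSystem

variable {V : Type} [NormedAddCommGroup V] [InnerProductSpace ℝ V] (D : CoxeterRootSystem V)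

/-- The full root system `Φ = Φ⁺ ∪ (-Φ⁺)`. -/
def Φ : Set V := D.Φpos ∪ -D.Φpos

/-- The reflections of `W` : the conjugates of the simple reflections. -/
def IsRefl (r : D.W) : Prop := ∃ u : D.W, ∃ s ∈ D.S, r = u * s * u⁻¹

/-- The Bruhat cover relation `x ≺ r x` with `ℓ(r x) = ℓ(x) + 1`, `r` a reflection. -/
def Cov (x y : D.W) : Prop :=
  (∃ r : D.W, D.IsRefl r ∧ y = r * x) ∧ D.len y = D.len x + 1

/-- Bruhat order: the partial order generated by the cover relations. -/
def BruhatLE : D.W → D.W → Prop := Relation.ReflTransGen D.Cov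

/-- `E⁺(x,y)` : the labels of the atoms of the Bruhat interval `[x,y]`. -/
def Eplus (x y : D.W) : Set V :=
  {β | β ∈ D.Φpos ∧ D.Cov x (D.sβ β * x) ∧ D.BruhatLE (D.sβ β * x) y}

/-- The upper Bruhat cone `C⁺(x,y)`. -/
def Cplus (x y : D.W) : Set V := coneOf (D.Eplus x y)

/-- `E⁻(x,y)` : the labels of the coatoms of the Bruhat interval `[x,y]`. -/
def Eminus (x y : D.W) : Set V :=
  {β | β ∈ D.Φpos ∧ D.Cov (D.sβ β * y) y ∧ D.BruhatLE x (D.sβ β * y)}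

/-- The lower Bruhat cone `C⁻(x,y)`. -/
def Cminus (x y : D.W) : Set V := coneOf (D.Eminus x y)

/-- The inversion set `Inv(u) = Φ⁺ ∩ u (Φ⁻)`. -/
def invSet (u : D.W) : Set V := {β | β ∈ D.Φpos ∧ -(D.ρ u⁻¹ β) ∈ D.Φpos}

/-- The Demazure product of a word. -/
def demazure (Q : List D.W) : D.W :=
  Q.foldl (fun v s => if D.len (v * s) = D.len v + 1 then v * s else v) 1

/-- The subword of `Q` on the positions in the complement of `P`. -/
def cword (Q : List D.W) (P : Finset (Fin Q.length)) : List D.W :=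
  ((List.finRange Q.length).filter (fun k => decide (k ∉ P))).map Q.get

/-- `I` is a facet of the subword complex `SC(Q,w)` : the complement of `I` in `Q` is a
reduced word for `w`. -/
def IsFacet (Q : List D.W) (w : D.W) (I : Finset (Fin Q.length)) : Prop :=
  (D.cword Q I).prod = w ∧ (D.cword Q I).length = D.len w

/-- The root function `r(I,k)`. -/
def rootf (Q : List D.W) (I : Finset (Fin Q.length)) (k : Fin Q.length) : V :=
  D.ρ (((List.finRange Q.length).filter (fun j => decide (j < k ∧ j ∉ I))).map Q.get).prod
    (D.α (Q.get k))

/-- The root configuration `R(I)` (as a set). -/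
def rootConf (Q : List D.W) (I : Finset (Fin Q.length)) : Set V :=
  {v | ∃ i ∈ I, D.rootf Q I i = v}

/-- The weight function `ω(I,k)`. -/
def weightf (Q : List D.W) (I : Finset (Fin Q.length)) (k : Fin Q.length) : V :=
  D.ρ (((List.finRange Q.length).filter (fun j => decide (j < k ∧ j ∉ I))).map Q.get).prod
    (D.ω (Q.get k))

/-- The brick vector `B(I) = -∑ₖ ω(I,k)`. -/
def brickVec (Q : List D.W) (I : Finset (Fin Q.length)) : V :=
  -∑ k : Fin Q.length, D.weightf Q I k

/-- The brick polyhedron : the Minkowski sum of the convex hull of the brick vectors of the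
facets of `SC(Q,w)` and the Bruhat cone `C⁺(w, δ(Q))`. -/
def brickPoly (Q : List D.W) (w : D.W) : Set V :=
  convexHull ℝ {v | ∃ I : Finset (Fin Q.length), D.IsFacet Q w I ∧ v = D.brickVec Q I} +
    D.Cplus w (D.demazure Q)

/-- The position `i` of the facet `I` is flippable. -/
def Flippable (Q : List D.W) (w : D.W) (I : Finset (Fin Q.length)) (i : Fin Q.length) : Prop :=
  ∃ J : Finset (Fin Q.length), D.IsFacet Q w J ∧ J ≠ I ∧ ∃ j ∈ J, I.erase i = J.erase j

/-- The facets `I` and `J` are related by an `f`-preserving flip. -/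
def FPresFlip (f : V →ₗ[ℝ] ℝ) (Q : List D.W) (w : D.W) (I J : Finset (Fin Q.length)) : Prop :=
  D.IsFacet Q w I ∧ D.IsFacet Q w J ∧ I ≠ J ∧
    ∃ i ∈ I, ∃ j ∈ J, I.erase i = J.erase j ∧ f (D.rootf Q I i) = 0

end CoxeterRootSystem

namespace CoxeterRootSystem
section L5
variable {V : Type} [NormedAddCommGroup V] [InnerProductSpace ℝ V] (D : CoxeterRootSystem V)

def IsWord (l : List D.W) : Prop := ∀ x ∈ l, x ∈ D.S

theorem exists_word (u : D.W) : ∃ l, D.IsWord l ∧ l.prod = u := by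
  have hu : u ∈ Subgroup.closure D.S := by rw [D.hS_gen]; trivial
  induction hu using Subgroup.closure_induction with
  | mem x hx => exact ⟨[x], by intro y hy; simp at hy; exact hy ▸ hx, by simp⟩
  | one => exact ⟨[], by intro y hy; simp at hy, by simp⟩
  | mul x y _ _ hx hy =>
    obtain ⟨l, hl, rfl⟩ := hx
    obtain ⟨m, hm, rfl⟩ := hy
    refine ⟨l ++ m, ?_, by simp⟩
    intro z hz
    rcases List.mem_append.1 hz with h | h
    · exact hl z h
    · exact hm z h
  | inv x _ hx =>
    obtain ⟨l, hl, rfl⟩ := hx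
    refine ⟨l.reverse, fun z hz => hl z (List.mem_reverse.1 hz), ?_⟩
    rw [List.prod_inv_reverse]
    congr 1
    rw [← List.map_reverse]
    symm
    conv_rhs => rw [← List.map_id l.reverse]
    apply List.map_congr_left
    intro z hz
    have := D.hS_inv z (hl z (List.mem_reverse.1 hz))
    simpa using inv_eq_of_mul_eq_one_left this

theorem inv_simple {s : D.W} (hs : s ∈ D.S) : s⁻¹ = s :=
  inv_eq_of_mul_eq_one_left (D.hS_inv s hs)

theorem mul_self_cancel {s : D.W} (hs : s ∈ D.S) (w : D.W) : s * (s * w) = w := by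
  rw [← mul_assoc, D.hS_inv s hs, one_mul]

theorem mul_cancel_self {s : D.W} (hs : s ∈ D.S) (w : D.W) : w * s * s = w := by
  rw [mul_assoc, D.hS_inv s hs, mul_one]

theorem word_inv {l : List D.W} (hl : D.IsWord l) : l.prod⁻¹ = l.reverse.prod := by
  rw [List.prod_inv_reverse]
  congr 1
  rw [← List.map_reverse]
  conv_rhs => rw [← List.map_id l.reverse]
  apply List.map_congr_left
  intro z hz
  exact D.inv_simple (hl z (List.mem_reverse.1 hz))

theorem exists_reduced (u : D.W) : ∃ l, D.IsWord l ∧ l.length = D.len u ∧ l.prod = u := by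
  have := Nat.sInf_mem (s := {n | ∃ l : List D.W, (∀ x ∈ l, x ∈ D.S) ∧ l.length = n ∧ l.prod = u})
    (by obtain ⟨l, hl, h⟩ := D.exists_word u; exact ⟨_, l, hl, rfl, h⟩)
  rw [← D.hlen u] at this
  exact this

theorem len_le {l : List D.W} (hl : D.IsWord l) : D.len l.prod ≤ l.length := by
  rw [D.hlen]
  exact Nat.sInf_le ⟨l, hl, rfl, rfl⟩

theorem len_inv (u : D.W) : D.len u⁻¹ = D.len u := by
  have key : ∀ u : D.W, D.len u⁻¹ ≤ D.len u := by
    intro u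
    obtain ⟨l, hl, hlen, rfl⟩ := D.exists_reduced u
    rw [D.word_inv hl, ← hlen, ← List.length_reverse]
    exact D.len_le (fun z hz => hl z (List.mem_reverse.1 hz))
  apply le_antisymm (key u)
  simpa using key u⁻¹

theorem len_one : D.len 1 = 0 := by
  have := D.len_le (l := []) (by intro x hx; simp at hx)
  simpa using this

/-- existence of a separating function for each simple reflection -/
def Key (s : D.W) : Prop := ∃ e : D.W → Bool, (∀ g, e (g * s) = !e g) ∧
  (∀ t ∈ D.S, ∀ g, e (t * g) ≠ e g → t * g = g * s)

theorem isWord_cons {a : D.W} {l : List D.W} : D.IsWord (a :: l) ↔ a ∈ D.S ∧ D.IsWord l := by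
  simp [IsWord]

theorem key_delete {s : D.W} {e : D.W → Bool}
    (h2 : ∀ t ∈ D.S, ∀ g, e (t * g) ≠ e g → t * g = g * s) :
    ∀ (l : List D.W) (g : D.W), D.IsWord l → e (l.prod⁻¹ * g) ≠ e g →
      ∃ l1 a l2, l = l1 ++ a :: l2 ∧ g * s * g⁻¹ * l.prod = (l1 ++ l2).prod := by
  intro l
  induction l with
  | nil => intro g _ h; simp at h
  | cons a l ih =>
    intro g hl h
    rw [isWord_cons] at hl
    by_cases hc : e (a * g) = e g
    · have h' : e (l.prod⁻¹ * (a * g)) ≠ e (a * g) := by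
        rw [hc]
        have : (a :: l).prod⁻¹ * g = l.prod⁻¹ * (a * g) := by
          rw [List.prod_cons, mul_inv_rev, D.inv_simple hl.1, mul_assoc]
        rwa [this] at h
      obtain ⟨l1, b, l2, rfl, hp⟩ := ih (a * g) hl.2 h'
      refine ⟨a :: l1, b, l2, rfl, ?_⟩
      rw [List.cons_append, List.prod_cons, List.prod_cons, ← hp]
      rw [mul_inv_rev, D.inv_simple hl.1]
      simp only [mul_assoc]
      rw [D.mul_self_cancel hl.1]
    · refine ⟨[], a, l, rfl, ?_⟩
      rw [← h2 a hl.1 g hc]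
      simp only [List.prod_cons, List.nil_append, mul_assoc, mul_inv_cancel_left]
      rw [D.mul_self_cancel hl.1]

theorem refl_sq {r : D.W} (hr : D.IsRefl r) : r * r = 1 := by
  obtain ⟨u, s, hs, rfl⟩ := hr
  have := D.hS_inv s hs
  calc u * s * u⁻¹ * (u * s * u⁻¹) = u * (s * s) * u⁻¹ := by group
    _ = 1 := by rw [this]; group

theorem refl_exchange (hK : ∀ s ∈ D.S, D.Key s) {r : D.W} (hr : D.IsRefl r) {l : List D.W} (hl : D.IsWord l)
    (hlt : D.len (r * l.prod) ≤ D.len l.prod) :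
    ∃ l1 a l2, l = l1 ++ a :: l2 ∧ r * l.prod = (l1 ++ l2).prod := by
  have hr2 := D.refl_sq hr
  obtain ⟨u, s, hs, rfl⟩ := hr
  obtain ⟨e, h1, h2⟩ := hK s hs
  by_cases hc : e (l.prod⁻¹ * u) ≠ e u
  · exact D.key_delete h2 l u hl hc
  · exfalso
    push Not at hc
    set r := u * s * u⁻¹ with hrdef
    obtain ⟨m, hm, hmlen, hmp⟩ := D.exists_reduced (r * l.prod)
    have hrinv : r⁻¹ = r := inv_eq_of_mul_eq_one_left hr2
    have hflip : e (m.prod⁻¹ * u) ≠ e u := by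
      have : m.prod⁻¹ * u = l.prod⁻¹ * u * s := by
        rw [hmp, mul_inv_rev, hrinv, hrdef]; group
      rw [this, h1, hc]
      simp
    obtain ⟨l1, a, l2, rfl, hp⟩ := D.key_delete h2 m u hm hflip
    rw [← hrdef, hmp, ← mul_assoc, hr2, one_mul] at hp
    have hw : D.IsWord (l1 ++ l2) := by
      intro x hx; apply hm; simp at hx ⊢; tauto
    have := D.len_le hw
    rw [← hp] at this
    simp at hmlen this
    omega

theorem refl_len_ne (hK : ∀ s ∈ D.S, D.Key s) {r : D.W} (hr : D.IsRefl r) (w : D.W) : D.len (r * w) ≠ D.len w := by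
  intro h
  obtain ⟨l, hl, hlen, rfl⟩ := D.exists_reduced w
  obtain ⟨l1, a, l2, rfl, hp⟩ := D.refl_exchange hK hr hl h.le
  have hw : D.IsWord (l1 ++ l2) := by
    intro x hx; apply hl; simp at hx ⊢; tauto
  have := D.len_le hw
  rw [← hp] at this
  simp at hlen this h
  omega

theorem isRefl_simple {s : D.W} (hs : s ∈ D.S) : D.IsRefl s := ⟨1, s, hs, by simp⟩

theorem len_mul_left_le {s : D.W} (hs : s ∈ D.S) (w : D.W) : D.len (s * w) ≤ D.len w + 1 := by
  obtain ⟨l, hl, hlen, rfl⟩ := D.exists_reduced w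
  have := D.len_le (l := s :: l) (by rw [isWord_cons]; exact ⟨hs, hl⟩)
  simp at this
  omega

theorem len_le_mul_left {s : D.W} (hs : s ∈ D.S) (w : D.W) : D.len w ≤ D.len (s * w) + 1 := by
  have := D.len_mul_left_le hs (s * w)
  rwa [D.mul_self_cancel hs] at this

theorem len_mul_left_cases (hK : ∀ s ∈ D.S, D.Key s) {s : D.W} (hs : s ∈ D.S) (w : D.W) :
    D.len (s * w) = D.len w + 1 ∨ D.len w = D.len (s * w) + 1 := by
  have h1 := D.len_mul_left_le hs w
  have h2 := D.len_le_mul_left hs w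
  have h3 := D.refl_len_ne hK (D.isRefl_simple hs) w
  omega

theorem cov_simple {s : D.W} (hs : s ∈ D.S) {w : D.W} (h : D.len (s * w) = D.len w + 1) :
    D.Cov w (s * w) := ⟨⟨s, D.isRefl_simple hs, rfl⟩, h⟩

theorem isRefl_conj {s : D.W} (hs : s ∈ D.S) {r : D.W} (hr : D.IsRefl r) :
    D.IsRefl (s * r * s) := by
  obtain ⟨u, t, ht, rfl⟩ := hr
  refine ⟨s * u, t, ht, ?_⟩
  rw [mul_inv_rev, D.inv_simple hs]; group

/-- Z-lemma -/
theorem z_lemma (hK : ∀ s ∈ D.S, D.Key s) {s : D.W} (hs : s ∈ D.S) {z w : D.W} (h : D.Cov z w)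
    (hz : D.len (s * z) = D.len z + 1) (hne : w ≠ s * z) :
    D.len (s * w) = D.len w + 1 ∧ D.Cov (s * z) (s * w) := by
  obtain ⟨⟨r, hr, rfl⟩, hlen⟩ := h
  have hr2 := D.refl_sq hr
  have main : D.len (s * (r * z)) = D.len (r * z) + 1 := by
    rcases D.len_mul_left_cases hK hs (r * z) with h | h
    · exact h
    exfalso
    obtain ⟨l, hl, hll, hlp⟩ := D.exists_reduced (s * (r * z))
    have hp : (s :: l).prod = r * z := by rw [List.prod_cons, hlp, D.mul_self_cancel hs]
    have hw : D.IsWord (s :: l) := by rw [isWord_cons]; exact ⟨hs, hl⟩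
    have hrr : r * (r * z) = z := by rw [← mul_assoc, hr2, one_mul]
    obtain ⟨l1, a, l2, hl12, hp2⟩ := D.refl_exchange hK hr hw (by rw [hp, hrr]; omega)
    rw [hp, hrr] at hp2
    cases l1 with
    | nil =>
      simp at hl12
      obtain ⟨rfl, rfl⟩ := hl12
      simp at hp2
      apply hne
      rw [← hp, List.prod_cons, hp2]
    | cons b l1 =>
      simp only [List.cons_append, List.cons.injEq] at hl12
      obtain ⟨rfl, rfl⟩ := hl12
      have : s * z = (l1 ++ l2).prod := by
        rw [hp2, List.cons_append, List.prod_cons, D.mul_self_cancel hs]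
      have hw : D.IsWord (l1 ++ l2) := by
        intro x hx; apply hl; simp at hx ⊢; tauto
      have h3 := D.len_le hw
      rw [← this] at h3
      simp at hll h3
      omega
  refine ⟨main, ⟨⟨s * r * s, D.isRefl_conj hs hr, ?_⟩, by omega⟩⟩
  simp only [mul_assoc]
  rw [D.mul_self_cancel hs]

theorem le_len {x y : D.W} (h : D.BruhatLE x y) : D.len x ≤ D.len y := by
  induction h with
  | refl => exact le_rfl
  | tail _ h ih => have := h.2; omega

theorem le_eq {x y : D.W} (h : D.BruhatLE x y) (hl : D.len y ≤ D.len x) : x = y := by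
  cases h with
  | refl => rfl
  | tail h h' => have := D.le_len h; have := h'.2; omega

/-- Lifting: z ≤ y, then: if `sz > z`: either `s z ≤ y`, or all up and `s z ≤ s y`;
precisely `sz ≤ y` or (`sy > y` ) and always `sz ≤ max(y,sy)`. -/
theorem lift_up (hK : ∀ s ∈ D.S, D.Key s) {s : D.W} (hs : s ∈ D.S) {z y : D.W} (h : D.BruhatLE z y)
    (hz : D.len (s * z) = D.len z + 1) :
    (D.BruhatLE (s * z) y) ∨ (D.len (s * y) = D.len y + 1 ∧ D.BruhatLE (s * z) (s * y)) := by
  induction h with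
  | refl => exact Or.inr ⟨hz, Relation.ReflTransGen.refl⟩
  | @tail b c hb hc ih =>
    rcases ih with ih | ⟨h1, h2⟩
    · exact Or.inl (ih.tail hc)
    · by_cases hcs : c = s * b
      · left; rw [hcs]; exact h2
      · have := D.z_lemma hK hs hc h1 hcs
        exact Or.inr ⟨this.1, h2.tail this.2⟩

/-- if `z ≤ y` , `sz<z`, `sy<y` then `sz ≤ sy`; via descending version -/
theorem lift_down (hK : ∀ s ∈ D.S, D.Key s) {s : D.W} (hs : s ∈ D.S) {z y : D.W} (h : D.BruhatLE z y)
    (hy : D.len y = D.len (s * y) + 1) :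
    (D.BruhatLE z (s * y)) ∨ (D.len z = D.len (s * z) + 1 ∧ D.BruhatLE (s * z) (s * y)) := by
  induction h using Relation.ReflTransGen.head_induction_on with
  | refl => exact Or.inr ⟨hy, Relation.ReflTransGen.refl⟩
  | @head b c hb hc ih =>
    rcases ih with ih | ⟨h1, h2⟩
    · exact Or.inl (Relation.ReflTransGen.head hb ih)
    · by_cases hcs : c = s * b
      · left
        have : b = s * c := by rw [hcs, D.mul_self_cancel hs]
        rw [this]; exact h2
      · rcases D.len_mul_left_cases hK hs b with h | h
        · have := D.z_lemma hK hs hb h hcs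
          omega
        · right
          refine ⟨h, Relation.ReflTransGen.head ?_ h2⟩
          obtain ⟨⟨r, hr, rfl⟩, hl⟩ := hb
          refine ⟨⟨s * r * s, D.isRefl_conj hs hr, ?_⟩, by omega⟩
          simp only [mul_assoc]
          rw [D.mul_self_cancel hs]

theorem final_of_key (hK : ∀ s ∈ D.S, D.Key s) (x y s r : D.W) (hs : s ∈ D.S) (hr : D.IsRefl r) (hne : s ≠ r)
    (h1 : D.Cov x (s * x)) (h2 : D.Cov x (r * x))
    (h3 : D.BruhatLE (s * x) y) (h4 : D.BruhatLE (r * x) y)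
    (h5 : ¬ D.BruhatLE (s * r * x) y) :
    D.Cov y (s * y) ∧ D.BruhatLE (s * r * x) (s * y) ∧
      (∀ z : D.W, (D.BruhatLE (r * x) z ∧ D.BruhatLE z y) ↔
        (D.BruhatLE (s * r * x) (s * z) ∧ D.BruhatLE (s * z) (s * y))) ∧
      (∀ z z' : D.W, D.BruhatLE (r * x) z → D.BruhatLE z y →
        D.BruhatLE (r * x) z' → D.BruhatLE z' y →
        (D.BruhatLE z z' ↔ D.BruhatLE (s * z) (s * z'))) := by
  rw [mul_assoc] at h5 ⊢
  have hup := D.z_lemma hK hs h2 h1.2 (fun h => hne (mul_right_cancel h).symm)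
  -- every z in [rx, y] satisfies sz > z and s r x ≤ s z
  have hz : ∀ z, D.BruhatLE (r * x) z → D.BruhatLE z y →
      D.len (s * z) = D.len z + 1 ∧ D.BruhatLE (s * (r * x)) (s * z) := by
    intro z hz1 hz2
    rcases D.lift_up hK hs hz1 hup.1 with h | h
    · exact absurd (h.trans hz2) h5
    · exact h
  have hy := hz y h4 Relation.ReflTransGen.refl
  have hmono : ∀ z z', D.BruhatLE (r * x) z → D.BruhatLE z z' → D.BruhatLE z' y →
      D.BruhatLE (s * z) (s * z') := by
    intro z z' ha hb hc
    have hz' := hz z ha (hb.trans hc)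
    rcases D.lift_up hK hs hb hz'.1 with h | h
    · exact absurd (hz'.2.trans (h.trans hc)) h5
    · exact h.2
  have hback : ∀ z z', D.len (s * z) = D.len z + 1 → D.len (s * z') = D.len z' + 1 →
      D.BruhatLE (s * z) (s * z') → D.BruhatLE z z' := by
    intro z z' ha hb hc
    rcases D.lift_down hK hs hc (by rw [D.mul_self_cancel hs]; exact hb) with h | h
    · rw [D.mul_self_cancel hs] at h
      exact Relation.ReflTransGen.head (D.cov_simple hs ha) h
    · rw [D.mul_self_cancel hs, D.mul_self_cancel hs] at h
      exact h.2
  refine ⟨D.cov_simple hs hy.1, hy.2, ?_, ?_⟩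
  · intro z
    constructor
    · rintro ⟨ha, hb⟩
      exact ⟨(hz z ha hb).2, hmono z y ha hb Relation.ReflTransGen.refl⟩
    · rintro ⟨ha, hb⟩
      have hzup : D.len (s * z) = D.len z + 1 := by
        rcases D.len_mul_left_cases hK hs z with h | h
        · exact h
        · exfalso
          -- sz < z : then s r x ≤ s z ≤ y by lifting on sz ≤ sy
          rcases D.lift_down hK hs hb (by rw [D.mul_self_cancel hs]; exact hy.1) with h' | h'
          · rw [D.mul_self_cancel hs] at h'
            exact h5 (ha.trans h')
          · rw [D.mul_self_cancel hs] at h'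
            omega
      exact ⟨hback _ _ hup.1 hzup ha, hback _ _ hzup hy.1 hb⟩
  · intro z z' ha hb hc hd
    exact ⟨fun h => hmono z z' ha h hd, hback z z' (hz z ha hb).1 (hz z' hc hd).1⟩
end L5
end CoxeterRootSystem

namespace CoxeterRootSystem
section Setup
variable {V : Type} [NormedAddCommGroup V] [InnerProductSpace ℝ V] (D : CoxeterRootSystem V)

theorem zero_notMem : (0 : V) ∉ D.Φpos := fun h => D.hΦdisj 0 h (by simpa using h)

theorem alpha_ne {s : D.W} (hs : s ∈ D.S) : D.α s ≠ 0 :=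
  fun h => D.zero_notMem (h ▸ D.hα_mem s hs)

/-- scaling constant -/
def kk (s : D.W) : ℝ := ‖D.α s‖ / √2

/-- normalized simple roots, of squared norm 2 -/
def aa (s : D.W) : V := (√2 / ‖D.α s‖) • D.α s

theorem kk_pos {s : D.W} (hs : s ∈ D.S) : 0 < D.kk s := by
  have := norm_pos_iff.2 (D.alpha_ne hs)
  unfold kk; positivity

theorem alpha_eq {s : D.W} (hs : s ∈ D.S) : D.α s = D.kk s • D.aa s := by
  have := norm_pos_iff.2 (D.alpha_ne hs)
  have h2 : √2 ≠ 0 := by positivity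
  rw [kk, aa, smul_smul]
  rw [show ‖D.α s‖ / √2 * (√2 / ‖D.α s‖) = 1 by field_simp, one_smul]

theorem aa_sq {s : D.W} (hs : s ∈ D.S) : ⟪D.aa s, D.aa s⟫ = 2 := by
  have := norm_pos_iff.2 (D.alpha_ne hs)
  rw [aa, inner_smul_left, inner_smul_right, real_inner_self_eq_norm_sq]
  simp only [conj_trivial]
  rw [show √2 / ‖D.α s‖ * (√2 / ‖D.α s‖ * ‖D.α s‖ ^ 2) = √2 * √2 by field_simp]
  exact Real.mul_self_sqrt (by norm_num)

theorem rho_simple {s : D.W} (hs : s ∈ D.S) (v : V) :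
    D.ρ s v = v - ⟪D.aa s, v⟫ • D.aa s := by
  have hne := (D.kk_pos hs).ne'
  have hf : ∀ v, ⟪D.α s, v⟫ = 0 → D.ρ s v = v := by
    intro v hv
    have := D.hsβ_fix (D.α s) (D.hα_mem s hs) v hv
    rwa [D.hsβ_simple s hs] at this
  have hr : D.ρ s (D.aa s) = - D.aa s := by
    have := D.hsβ_reflect (D.α s) (D.hα_mem s hs)
    rw [D.hsβ_simple s hs, D.alpha_eq hs, map_smul, ← smul_neg] at this
    exact smul_right_injective _ hne this
  have hort : D.ρ s (v - (⟪D.aa s, v⟫/2) • D.aa s) = v - (⟪D.aa s, v⟫/2) • D.aa s := by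
    apply hf
    rw [D.alpha_eq hs, inner_smul_left, inner_sub_right, inner_smul_right, D.aa_sq hs]
    simp
  rw [map_sub, map_smul, hr] at hort
  have : D.ρ s v = v - (⟪D.aa s, v⟫/2) • D.aa s + (⟪D.aa s, v⟫/2) • (- D.aa s) := by
    rw [← hort]; abel
  rw [this, smul_neg]
  have h2 : ⟪D.aa s, v⟫ • D.aa s = (⟪D.aa s, v⟫/2) • D.aa s + (⟪D.aa s, v⟫/2) • D.aa s := by
    rw [← add_smul]; congr 1; ring
  rw [h2]; abel

theorem rho_mul (u w : D.W) (v : V) : D.ρ (u * w) v = D.ρ u (D.ρ w v) := by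
  rw [map_mul]; rfl

theorem rho_one (v : V) : D.ρ 1 v = v := by rw [map_one]; rfl

theorem rho_inv_rho (u : D.W) (v : V) : D.ρ u⁻¹ (D.ρ u v) = v := by
  rw [← rho_mul]; simp

theorem rho_rho_inv (u : D.W) (v : V) : D.ρ u (D.ρ u⁻¹ v) = v := by
  rw [← rho_mul]; simp

theorem rho_neg_self {s : D.W} (hs : s ∈ D.S) : D.ρ s (D.aa s) = - D.aa s := by
  rw [D.rho_simple hs, D.aa_sq hs, two_smul]; abel

/-- induction over words -/
theorem word_induction {p : D.W → Prop} (h1 : p 1)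
    (h2 : ∀ s ∈ D.S, ∀ w, p w → p (s * w)) (w : D.W) : p w := by
  obtain ⟨l, hl, rfl⟩ := D.exists_word w
  induction l with
  | nil => simpa using h1
  | cons a l ih =>
    rw [isWord_cons] at hl
    rw [List.prod_cons]
    exact h2 a hl.1 _ (ih hl.2)

theorem inner_rho (u : D.W) : ∀ v w : V, ⟪D.ρ u v, D.ρ u w⟫ = ⟪v, w⟫ := by
  induction u using D.word_induction with
  | h1 => intro v w; rw [rho_one, rho_one]
  | h2 s hs u ih =>
    intro v w
    rw [rho_mul, rho_mul, D.rho_simple hs, D.rho_simple hs, inner_sub_left, inner_sub_right,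
      inner_sub_right, inner_smul_left, inner_smul_right, inner_smul_right, inner_smul_left,
      D.aa_sq hs, ih, real_inner_comm (D.aa s)]
    simp only [conj_trivial]
    ring

theorem inner_rho_left (u : D.W) (v w : V) : ⟪D.ρ u v, w⟫ = ⟪v, D.ρ u⁻¹ w⟫ := by
  rw [← D.inner_rho u⁻¹, rho_inv_rho]

/-- the reflection attached to `w a_s` -/
theorem rho_conj {s : D.W} (hs : s ∈ D.S) (w : D.W) (v : V) :
    D.ρ (w * s * w⁻¹) v = v - ⟪D.ρ w (D.aa s), v⟫ • D.ρ w (D.aa s) := by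
  rw [rho_mul, rho_mul, D.rho_simple hs, map_sub, map_smul, rho_rho_inv, inner_rho_left]

theorem eq_of_rho {u v : D.W} (h : ∀ x, D.ρ u x = D.ρ v x) : u = v :=
  D.hρ_inj u v (LinearEquiv.ext h)

theorem comm_of_par {t s : D.W} (ht : t ∈ D.S) (hs : s ∈ D.S) {w : D.W}
    (h : D.ρ w (D.aa s) = D.aa t ∨ D.ρ w (D.aa s) = - D.aa t) : t * w = w * s := by
  have : w * s * w⁻¹ = t := by
    apply D.eq_of_rho
    intro x
    rw [D.rho_conj hs, D.rho_simple ht]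
    rcases h with h | h <;> rw [h]
    rw [inner_neg_left, neg_smul_neg]
  rw [← this]; group

/-- positivity of `v` in the orbit of `a_s` -/
def PP (s : D.W) (v : V) : Prop := D.kk s • v ∈ D.Φpos

theorem pos_iff {s : D.W} (hs : s ∈ D.S) (u : D.W) :
    D.len (u * s) = D.len u + 1 ↔ D.PP s (D.ρ u (D.aa s)) := by
  rw [D.hlen_geom u s hs, PP, ← map_smul, ← D.alpha_eq hs]

theorem PP_neg {s : D.W} (hs : s ∈ D.S) (u : D.W) :
    D.PP s (-D.ρ u (D.aa s)) ↔ ¬ D.PP s (D.ρ u (D.aa s)) := by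
  unfold PP
  rw [smul_neg, ← map_smul, ← D.alpha_eq hs]
  constructor
  · intro h h'; exact D.hΦdisj _ h' h
  · intro h
    exact (D.hΦperm u _ (D.hα_mem s hs)).resolve_left h

theorem PP_self {s : D.W} (hs : s ∈ D.S) : D.PP s (D.aa s) := by
  unfold PP; rw [← D.alpha_eq hs]; exact D.hα_mem s hs

theorem len_mul_right {s : D.W} (hs : s ∈ D.S) (u : D.W) :
    D.len (u * s) = D.len u + 1 ∨ D.len u = D.len (u * s) + 1 := by
  have h1 := D.pos_iff hs u
  have h2 := D.pos_iff hs (u * s)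
  rw [D.mul_cancel_self hs, rho_mul, D.rho_neg_self hs, map_neg, D.PP_neg hs] at h2
  tauto

theorem not_pos_iff {s : D.W} (hs : s ∈ D.S) (u : D.W) :
    D.len u = D.len (u * s) + 1 ↔ ¬ D.PP s (D.ρ u (D.aa s)) := by
  rw [← D.pos_iff hs]
  have := D.len_mul_right hs u
  constructor
  · intro h; omega
  · tauto

theorem len_mul_left {s : D.W} (hs : s ∈ D.S) (u : D.W) :
    D.len (s * u) = D.len u + 1 ∨ D.len u = D.len (s * u) + 1 := by
  have := D.len_mul_right hs u⁻¹
  rw [← D.len_inv (u⁻¹ * s), mul_inv_rev, D.inv_simple hs, inv_inv, D.len_inv] at this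
  exact this

theorem len_parity {l : List D.W} (hl : D.IsWord l) : D.len l.prod % 2 = l.length % 2 := by
  induction l with
  | nil => simp [D.len_one]
  | cons a l ih =>
    rw [isWord_cons] at hl
    have := ih hl.2
    rw [List.prod_cons, List.length_cons]
    have := D.len_mul_left hl.1 l.prod
    omega

/-- the commutation statement -/
def TT (t w s : D.W) : Prop := D.PP s (D.ρ (t * w) (D.aa s)) ↔ D.PP s (D.ρ w (D.aa s))

theorem TT_iff {t s : D.W} (hs : s ∈ D.S) (w : D.W) :
    D.TT t w s ↔ (D.len (t * w * s) = D.len (t * w) + 1 ↔ D.len (w * s) = D.len w + 1) := by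
  rw [TT, D.pos_iff hs, D.pos_iff hs]

theorem TT_symm {t s : D.W} (ht : t ∈ D.S) (hs : s ∈ D.S) (w : D.W) :
    D.TT t w s ↔ D.TT s w⁻¹ t := by
  rw [D.TT_iff hs, D.TT_iff ht]
  have e1 : D.len (s * w⁻¹ * t) = D.len (t * w * s) := by
    rw [← D.len_inv]; simp only [mul_inv_rev, inv_inv, D.inv_simple hs, D.inv_simple ht, mul_assoc]
  have e2 : D.len (s * w⁻¹) = D.len (w * s) := by
    rw [← D.len_inv]; simp only [mul_inv_rev, inv_inv, D.inv_simple hs]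
  have e3 : D.len (w⁻¹ * t) = D.len (t * w) := by
    rw [← D.len_inv]; simp only [mul_inv_rev, inv_inv, D.inv_simple ht]
  rw [e1, e2, e3, D.len_inv]
  have h1 := D.len_mul_right hs (t * w)
  have h2 := D.len_mul_right hs w
  have h3 := D.len_mul_left ht w
  have h4 := D.len_mul_left ht (w * s)
  rw [← mul_assoc] at h4
  omega

theorem TT_congr {t s : D.W} (hs : s ∈ D.S) {w w' : D.W}
    (h : D.ρ w (D.aa s) = D.ρ w' (D.aa s) ∨ D.ρ w (D.aa s) = - D.ρ w' (D.aa s)) :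
    D.TT t w s ↔ D.TT t w' s := by
  rcases h with h | h
  · unfold TT; rw [rho_mul, rho_mul, h]
  · unfold TT
    rw [rho_mul, h, map_neg, ← rho_mul, D.PP_neg hs, D.PP_neg hs, not_iff_not]

/-- invariance under the stabilizer of the line of `a_t` -/
theorem TT_conj {t s : D.W} (ht : t ∈ D.S) (hs : s ∈ D.S) {g w w' : D.W}
    (hg : D.ρ g (D.aa t) = D.aa t ∨ D.ρ g (D.aa t) = - D.aa t)
    (h : D.ρ g (D.ρ w (D.aa s)) = D.ρ w' (D.aa s) ∨
      D.ρ g (D.ρ w (D.aa s)) = - D.ρ w' (D.aa s)) :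
    D.TT t w s ↔ D.TT t w' s := by
  rw [← rho_mul] at h
  rw [← D.TT_congr hs h, D.TT_symm ht hs w, D.TT_symm ht hs (g * w)]
  apply D.TT_congr ht
  have e : ∀ x : V, D.ρ g x = D.aa t → D.ρ (g * w)⁻¹ (D.aa t) = D.ρ w⁻¹ x := by
    intro x hx
    rw [← hx, ← rho_mul, mul_inv_rev, inv_mul_cancel_right]
  rcases hg with hg | hg
  · left; rw [e _ hg]
  · right; rw [e (- D.aa t) (by rw [map_neg, hg, neg_neg]), map_neg, neg_neg]

theorem TT_of_orth {t s : D.W} (ht : t ∈ D.S) {w : D.W}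
    (h : ⟪D.aa t, D.ρ w (D.aa s)⟫ = 0) : D.TT t w s := by
  unfold TT
  rw [rho_mul, D.rho_simple ht, h, zero_smul, sub_zero]

theorem key_of_TT {s : D.W} (hs : s ∈ D.S)
    (h : ∀ t ∈ D.S, ∀ w, D.TT t w s ∨ t * w = w * s) : D.Key s := by
  classical
  refine ⟨fun g => decide (D.PP s (D.ρ g (D.aa s))), ?_, ?_⟩
  · intro g
    beta_reduce
    rw [rho_mul, D.rho_neg_self hs, map_neg, ← decide_not, decide_eq_decide]
    exact D.PP_neg hs g
  · intro t ht g hne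
    rcases h t ht g with h | h
    · exact absurd (decide_eq_decide.2 h) hne
    · exact h

/-- exact words -/
def Exact (l : List D.W) : Prop := D.IsWord l ∧ D.len l.prod = l.length

theorem TT_of_exact {t s : D.W} {l : List D.W} (h : D.Exact (t :: l ++ [s])) :
    D.TT t l.prod s := by
  obtain ⟨hw, hl⟩ := h
  have ht : t ∈ D.S := hw t (by simp)
  have hs : s ∈ D.S := hw s (by simp)
  have hlw : D.IsWord l := fun x hx => hw x (by simp [hx])
  rw [D.TT_iff hs]
  have e1 : (t :: l ++ [s]).prod = t * l.prod * s := by simp [mul_assoc]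
  have e2 : (t :: l ++ [s]).length = l.length + 2 := by simp
  rw [e1, e2] at hl
  have h0 := D.len_le hlw
  have h1 := D.len_mul_right hs (t * l.prod)
  have h2 := D.len_mul_right hs l.prod
  have h3 := D.len_mul_left ht l.prod
  have h4 := D.len_mul_left ht (l.prod * s)
  rw [← mul_assoc] at h4
  constructor <;> intro _ <;> omega

theorem PP_of_exact {s : D.W} {l : List D.W} (h : D.Exact (l ++ [s])) :
    D.PP s (D.ρ l.prod (D.aa s)) := by
  obtain ⟨hw, hl⟩ := h
  have hs : s ∈ D.S := hw s (by simp)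
  have hlw : D.IsWord l := fun x hx => hw x (by simp [hx])
  rw [← D.pos_iff hs]
  simp at hl
  have h0 := D.len_le hlw
  have h1 := D.len_mul_right hs l.prod
  omega

/-- coordinate functional -/
def co (s : D.W) (v : V) : ℝ := ⟪D.ω s, v⟫ / ⟪D.ω s, D.aa s⟫

theorem omega_aa_ne {s : D.W} (hs : s ∈ D.S) : ⟪D.ω s, D.aa s⟫ ≠ 0 := by
  have h := D.hω_dual s hs s hs
  have hn := D.alpha_ne hs
  intro h0
  rw [if_pos rfl, D.alpha_eq hs, inner_smul_right, h0, mul_zero, ← D.alpha_eq hs] at h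
  have : ⟪D.α s, D.α s⟫ = 0 := by linarith
  exact hn (inner_self_eq_zero.1 this)

theorem co_aa {s t : D.W} (hs : s ∈ D.S) (ht : t ∈ D.S) :
    D.co s (D.aa t) = if s = t then 1 else 0 := by
  unfold co
  split_ifs with h
  · rw [← h]; exact div_self (D.omega_aa_ne hs)
  · have h' := D.hω_dual s hs t ht
    rw [if_neg h, D.alpha_eq ht, inner_smul_right] at h'
    rw [(mul_eq_zero.1 h').resolve_left (D.kk_pos ht).ne', zero_div]

theorem co_sub (s : D.W) (v w : V) : D.co s (v - w) = D.co s v - D.co s w := by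
  unfold co; rw [inner_sub_right, sub_div]

theorem co_add (s : D.W) (v w : V) : D.co s (v + w) = D.co s v + D.co s w := by
  unfold co; rw [inner_add_right, add_div]

theorem co_smul (s : D.W) (c : ℝ) (v : V) : D.co s (c • v) = c * D.co s v := by
  unfold co; rw [inner_smul_right, mul_div_assoc]

theorem co_rho {s t : D.W} (hs : s ∈ D.S) (ht : t ∈ D.S) (h : s ≠ t) (v : V) :
    D.co s (D.ρ t v) = D.co s v := by
  rw [D.rho_simple ht, co_sub, co_smul, D.co_aa hs ht, if_neg h]; ring

theorem co_word {s : D.W} (hs : s ∈ D.S) {l : List D.W} (hl : D.IsWord l) (h : s ∉ l) (v : V) :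
    D.co s (D.ρ l.prod v) = D.co s v := by
  induction l with
  | nil => rw [List.prod_nil, rho_one]
  | cons a l ih =>
    rw [isWord_cons] at hl
    simp only [List.mem_cons, not_or] at h
    rw [List.prod_cons, rho_mul, D.co_rho hs hl.1 h.1, ih hl.2 h.2]

/-- support of a group element -/
def Supp (w s : D.W) : Prop := ∃ v, D.co s (D.ρ w v) ≠ D.co s v

theorem mem_of_supp {s : D.W} (hs : s ∈ D.S) {l : List D.W} (hl : D.IsWord l)
    (h : D.Supp l.prod s) : s ∈ l := by
  by_contra hn
  obtain ⟨v, hv⟩ := h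
  exact hv (D.co_word hs hl hn v)

theorem supp_of_once {s : D.W} (hs : s ∈ D.S) {l : List D.W} (hl : D.IsWord l)
    (h : l.count s = 1) : D.Supp l.prod s := by
  have hm : s ∈ l := List.count_pos_iff.1 (by omega)
  obtain ⟨l1, l2, rfl⟩ := List.append_of_mem hm
  rw [List.count_append, List.count_cons_self] at h
  have h1 : s ∉ l1 := List.count_eq_zero.1 (by omega)
  have h2 : s ∉ l2 := List.count_eq_zero.1 (by omega)
  have hl1 : D.IsWord l1 := fun x hx => hl x (by simp [hx])
  have hl2 : D.IsWord l2 := fun x hx => hl x (by simp [hx])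
  refine ⟨D.ρ l2.prod⁻¹ (D.aa s), ?_⟩
  rw [List.prod_append, List.prod_cons, rho_mul, rho_mul, rho_rho_inv, D.rho_neg_self hs,
    D.co_word hs hl1 h1, D.word_inv hl2,
    D.co_word hs (fun x hx => hl2 x (List.mem_reverse.1 hx)) (by simpa using h2)]
  rw [show -D.aa s = (-1 : ℝ) • D.aa s by simp, co_smul, D.co_aa hs hs, if_pos rfl]
  norm_num

theorem exact_of_nodup {l : List D.W} (hl : D.IsWord l) (hn : l.Nodup) : D.Exact l := by
  refine ⟨hl, le_antisymm (D.len_le hl) ?_⟩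
  obtain ⟨m, hm, hml, hmp⟩ := D.exists_reduced l.prod
  rw [← hml]
  apply (List.subperm_of_subset hn ?_).length_le
  intro x hx
  apply D.mem_of_supp (hl x hx) hm
  rw [hmp]
  exact D.supp_of_once (hl x hx) hl (List.count_eq_one_of_mem hn hx)

/-- exactness criterion; `F` is a list without repetition containing the letters of `l`,
all of them in the support. -/
theorem exact_crit {l F : List D.W} (hl : D.IsWord l) (hF : F.Nodup) (hlF : ∀ x ∈ l, x ∈ F)
    (hFs : ∀ x ∈ F, x ∈ D.S) (hsupp : ∀ x ∈ F, D.Supp l.prod x)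
    (hlen : l.length ≤ F.length + 3)
    (hcmp : l.length ≤ F.length + 1 ∨
      ∀ l' : List D.W, (∀ x ∈ l', x ∈ F) → l'.length + 2 = l.length → l'.prod ≠ l.prod) :
    D.Exact l := by
  refine ⟨hl, ?_⟩
  have hle := D.len_le hl
  have hpar := D.len_parity hl
  obtain ⟨m, hm, hml, hmp⟩ := D.exists_reduced l.prod
  have hFm : ∀ x ∈ F, x ∈ m := fun x hx =>
    D.mem_of_supp (hFs x hx) hm (hmp ▸ hsupp x hx)
  have hsub : F.length ≤ m.length := (List.subperm_of_subset hF hFm).length_le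
  by_contra hne
  rcases hcmp with hc | hc
  · omega
  · apply hc m ?_ (by omega) hmp
    intro x hx
    by_contra hxF
    have hx2 : m.count x ≠ 1 := by
      intro h1
      have := D.supp_of_once (hm x hx) hm h1
      rw [hmp] at this
      exact hxF (hlF x (D.mem_of_supp (hm x hx) hl this))
    have hx3 : 0 < m.count x := List.count_pos_iff.2 hx
    have : (x :: x :: F).Subperm m := by
      rw [List.subperm_ext_iff]
      intro y hy
      by_cases hyx : y = x
      · subst hyx
        rw [List.count_cons_self, List.count_cons_self, List.count_eq_zero.2 hxF]; omega
      · rw [List.count_cons_of_ne (Ne.symm hyx), List.count_cons_of_ne (Ne.symm hyx)]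
        have hyF : y ∈ F := by simpa [hyx] using hy
        rw [List.count_eq_one_of_mem hF hyF]
        exact List.count_pos_iff.2 (hFm y hyF)
    have := this.length_le
    simp at this
    omega

end Setup
end CoxeterRootSystem

namespace CoxeterRootSystem
section Comp
variable {V : Type} [NormedAddCommGroup V] [InnerProductSpace ℝ V] (D : CoxeterRootSystem V)

/-- `C` is a connected component of the non-orthogonality graph on `S`. -/
structure IsComp (C : Set D.W) : Prop where
  sub : ∀ t ∈ C, t ∈ D.S
  closed : ∀ t ∈ C, ∀ u ∈ D.S, ⟪D.aa t, D.aa u⟫ ≠ 0 → u ∈ C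
  conn : ∀ p : D.W → Prop, (∃ t ∈ C, p t) →
    (∀ t ∈ C, ∀ u ∈ C, ⟪D.aa t, D.aa u⟫ ≠ 0 → p t → p u) → ∀ u ∈ C, p u

theorem exists_comp {s : D.W} (hs : s ∈ D.S) : ∃ C, D.IsComp C ∧ s ∈ C := by
  let A : D.W → D.W → Prop := fun t u => t ∈ D.S ∧ u ∈ D.S ∧ ⟪D.aa t, D.aa u⟫ ≠ 0
  have hA : ∀ t u, A t u → A u t := fun t u h => ⟨h.2.1, h.1, by rw [real_inner_comm]; exact h.2.2⟩
  have hsymm : ∀ t u, Relation.ReflTransGen A t u → Relation.ReflTransGen A u t := by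
    intro t u h
    induction h with
    | refl => exact .refl
    | tail _ h ih => exact .head (hA _ _ h) ih
  have hS : ∀ t, Relation.ReflTransGen A s t → t ∈ D.S := by
    intro t h
    cases h with
    | refl => exact hs
    | tail _ h => exact h.2.1
  refine ⟨{t | Relation.ReflTransGen A s t}, ⟨hS, ?_, ?_⟩, .refl⟩
  · intro t ht u hu h
    exact Relation.ReflTransGen.tail ht ⟨hS t ht, hu, h⟩
  · rintro p ⟨t, ht, hpt⟩ hstep u hu
    have htu : Relation.ReflTransGen A t u := (hsymm _ _ ht).trans hu
    clear hu
    induction htu with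
    | refl => exact hpt
    | @tail b c hb hc ih =>
      exact hstep b (Relation.ReflTransGen.trans ht hb) c
        (Relation.ReflTransGen.trans ht (hb.tail hc)) hc.2.2 ih

/-- roots of the component `C` -/
def Root (C : Set D.W) (x : V) : Prop := ∃ w, ∃ t ∈ C, x = D.ρ w (D.aa t)

variable {D} {C : Set D.W}

theorem Root.sq (hC : D.IsComp C) {x : V} (h : D.Root C x) : ⟪x, x⟫ = 2 := by
  obtain ⟨w, t, ht, rfl⟩ := h
  rw [inner_rho, D.aa_sq (hC.sub t ht)]

theorem root_aa (w : D.W) {t : D.W} (ht : t ∈ C) : D.Root C (D.ρ w (D.aa t)) := ⟨w, t, ht, rfl⟩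

theorem root_aa' {t : D.W} (ht : t ∈ C) : D.Root C (D.aa t) := ⟨1, t, ht, by rw [rho_one]⟩

theorem Root.act {x : V} (h : D.Root C x) (g : D.W) : D.Root C (D.ρ g x) := by
  obtain ⟨w, t, ht, rfl⟩ := h
  exact ⟨g * w, t, ht, by rw [rho_mul]⟩

theorem Root.exR (hC : D.IsComp C) {x : V} (h : D.Root C x) :
    ∃ R : D.W, ∀ v, D.ρ R v = v - ⟪x, v⟫ • x := by
  obtain ⟨w, t, ht, rfl⟩ := h
  exact ⟨w * t * w⁻¹, fun v => D.rho_conj (hC.sub t ht) w v⟩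

theorem Root.neg (hC : D.IsComp C) {x : V} (h : D.Root C x) : D.Root C (-x) := by
  obtain ⟨R, hR⟩ := h.exR hC
  have := h.act R
  rw [hR, h.sq hC, two_smul] at this
  simpa using this

theorem Root.refl (hC : D.IsComp C) {x y : V} (hx : D.Root C x) (hy : D.Root C y) :
    D.Root C (y - ⟪x, y⟫ • x) := by
  obtain ⟨R, hR⟩ := hx.exR hC
  have := hy.act R
  rwa [hR] at this

theorem Root.ne_zero (hC : D.IsComp C) {x : V} (h : D.Root C x) : x ≠ 0 := by
  intro h0
  have := h.sq hC
  rw [h0] at this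
  simp at this

theorem span_act (hC : D.IsComp C) (w : D.W) : ∀ v ∈ Submodule.span ℝ (D.aa '' C),
    D.ρ w v ∈ Submodule.span ℝ (D.aa '' C) := by
  induction w using D.word_induction with
  | h1 => intro v hv; rwa [rho_one]
  | h2 s hs w ih =>
    intro v hv
    rw [rho_mul, D.rho_simple hs]
    have hw := ih v hv
    by_cases hsC : s ∈ C
    · exact Submodule.sub_mem _ hw (Submodule.smul_mem _ _ (Submodule.subset_span ⟨s, hsC, rfl⟩))
    · have : ⟪D.aa s, D.ρ w v⟫ = 0 := by
        refine Submodule.span_induction (p := fun v _ => ⟪D.aa s, v⟫ = 0) ?_ ?_ ?_ ?_ hw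
        · rintro _ ⟨t, ht, rfl⟩
          by_contra h
          exact hsC (hC.closed t ht s hs (by rwa [real_inner_comm]))
        · simp
        · intro a b _ _ ha hb; rw [inner_add_right, ha, hb, add_zero]
        · intro a b _ hb; rw [inner_smul_right, hb, mul_zero]
      rw [this, zero_smul, sub_zero]
      exact hw

theorem Root.mem_span (hC : D.IsComp C) {x : V} (h : D.Root C x) :
    x ∈ Submodule.span ℝ (D.aa '' C) := by
  obtain ⟨w, t, ht, rfl⟩ := h
  exact span_act hC w _ (Submodule.subset_span ⟨t, ht, rfl⟩)

theorem span_orth (hC : D.IsComp C) {s : D.W} (hs : s ∈ D.S) (hsC : s ∉ C) {v : V}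
    (hv : v ∈ Submodule.span ℝ (D.aa '' C)) : ⟪D.aa s, v⟫ = 0 := by
  refine Submodule.span_induction (p := fun v _ => ⟪D.aa s, v⟫ = 0) ?_ ?_ ?_ ?_ hv
  · rintro _ ⟨t, ht, rfl⟩
    by_contra h
    exact hsC (hC.closed t ht s hs (by rwa [real_inner_comm]))
  · simp
  · intro a b _ _ ha hb; rw [inner_add_right, ha, hb, add_zero]
  · intro a b _ hb; rw [inner_smul_right, hb, mul_zero]

theorem key_of_comp (hC : D.IsComp C) {s : D.W} (hs : s ∈ C)
    (h : ∀ t ∈ C, ∀ w, D.TT t w s ∨ t * w = w * s) : D.Key s := by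
  apply D.key_of_TT (hC.sub s hs)
  intro t ht w
  by_cases htC : t ∈ C
  · exact h t htC w
  · left
    exact D.TT_of_orth ht (span_orth hC ht htC (Root.mem_span hC (root_aa w hs)))

/-- rank two criterion -/
theorem key_rank2 (hC : D.IsComp C) {s : D.W} (hs : s ∈ C)
    (h : ∀ t ∈ C, ∃ q, ∀ u ∈ C, u = t ∨ u = q) : D.Key s := by
  classical
  apply key_of_comp hC hs
  intro t ht w
  obtain ⟨q, hq⟩ := h t ht
  have hsS := hC.sub s hs
  have htS := hC.sub t ht
  by_contra hcon
  rw [not_or] at hcon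
  obtain ⟨hT, hne⟩ := hcon
  -- words in C act as the filtered word on the span, filtered words
  have hfil : ∀ l : List D.W, D.IsWord l → ∀ v ∈ Submodule.span ℝ (D.aa '' C),
      D.ρ l.prod v = D.ρ (l.filter (· ∈ C)).prod v := by
    intro l hl v hv
    induction l with
    | nil => rfl
    | cons a l ih =>
      rw [isWord_cons] at hl
      rw [List.prod_cons, rho_mul, ih hl.2]
      by_cases ha : a ∈ C
      · rw [List.filter_cons_of_pos (by simpa using ha), List.prod_cons, rho_mul]
      · rw [List.filter_cons_of_neg (by simpa using ha), D.rho_simple hl.1,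
          span_orth hC hl.1 ha (span_act hC _ v hv), zero_smul, sub_zero]
  -- words in C act trivially on orthogonal complement
  have horth : ∀ l : List D.W, (∀ x ∈ l, x ∈ C) → ∀ v, (∀ x ∈ C, ⟪D.aa x, v⟫ = 0) →
      D.ρ l.prod v = v := by
    intro l hl v hv
    induction l with
    | nil => rw [List.prod_nil, rho_one]
    | cons a l ih =>
      rw [List.prod_cons, rho_mul, ih (fun x hx => hl x (by simp [hx])),
        D.rho_simple (hC.sub a (hl a (by simp))), hv a (hl a (by simp)), zero_smul, sub_zero]
  have hred : ∀ l : List D.W, (∀ x ∈ l, x ∈ C) → ∃ m : List D.W, (∀ x ∈ m, x ∈ C) ∧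
      m.prod = l.prod ∧ m.length = D.len l.prod := by
    intro l hl
    obtain ⟨m, hm, hml, hmp⟩ := D.exists_reduced l.prod
    have hmC : ∀ x ∈ m.filter (· ∈ C), x ∈ C := fun x hx => by simpa using (List.mem_filter.1 hx).2
    have hprod : (m.filter (· ∈ C)).prod = l.prod := by
      apply D.eq_of_rho
      intro v
      haveI : FiniteDimensional ℝ (Submodule.span ℝ (D.aa '' C)) :=
        FiniteDimensional.span_of_finite ℝ ((Set.toFinite C).image _)
      obtain ⟨y, hy, z, hz, rfl⟩ := (Submodule.span ℝ (D.aa '' C)).exists_add_mem_mem_orthogonal v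
      have hz' : ∀ x ∈ C, ⟪D.aa x, z⟫ = 0 := fun x hx =>
        (Submodule.mem_orthogonal _ _).1 hz _ (Submodule.subset_span ⟨x, hx, rfl⟩)
      rw [map_add, map_add, horth _ hmC z hz', horth l hl z hz', ← hfil m hm y hy, hmp]
    refine ⟨_, hmC, hprod, le_antisymm ?_ ?_⟩
    · rw [← hml]; exact List.length_filter_le _ _
    · rw [← hprod]; exact D.len_le (fun x hx => hC.sub x (hmC x hx))
  -- uniqueness of reduced words starting with q
  have huniq : ∀ n : ℕ, ∀ a b : D.W, (∀ u ∈ C, u = a ∨ u = b) → ∀ l m : List D.W,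
      (∀ x ∈ l, x ∈ C) → (∀ x ∈ m, x ∈ C) →
      l.length = n → m.length = n → D.len l.prod = n → D.len m.prod = n →
      (a ∈ C → D.len (a * l.prod) = n + 1) → (a ∈ C → D.len (a * m.prod) = n + 1) → l = m := by
    intro n
    induction n with
    | zero =>
      intro a b _ l m _ _ h1 h2 _ _ _ _
      rw [List.length_eq_zero_iff.1 h1, List.length_eq_zero_iff.1 h2]
    | succ n ih =>
      intro a b hab l m hl hm h1 h2 h3 h4 h5 h6
      obtain ⟨x, l, rfl⟩ := List.exists_cons_of_length_eq_add_one h1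
      obtain ⟨y, m, rfl⟩ := List.exists_cons_of_length_eq_add_one h2
      have hfirst : ∀ x : D.W, ∀ l : List D.W, (∀ u ∈ x :: l, u ∈ C) → (x :: l).length = n + 1 →
          (a ∈ C → D.len (a * (x :: l).prod) = n + 1 + 1) → x = b := by
        intro x l hl hn h5
        rcases hab x (hl x (by simp)) with rfl | h
        · exfalso
          have hxC := hl x (by simp)
          have h5' := h5 hxC
          rw [List.prod_cons, D.mul_self_cancel (hC.sub x hxC)] at h5'
          have := D.len_le (l := l) (fun u hu => hC.sub u (hl u (by simp [hu])))
          simp at hn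
          omega
        · exact h
      have hxb := hfirst x l hl h1 h5
      have hyb := hfirst y m hm h2 h6
      subst hyb
      subst hxb
      have hxC := hl x (by simp)
      have hlw : D.IsWord l := fun u hu => hC.sub u (hl u (by simp [hu]))
      have hmw : D.IsWord m := fun u hu => hC.sub u (hm u (by simp [hu]))
      simp only [List.length_cons, Nat.add_right_cancel_iff] at h1 h2
      rw [List.prod_cons] at h3 h4
      have e1 := D.len_le hlw
      have e2 := D.len_le hmw
      have e3 := D.len_mul_left_le (hC.sub x hxC) l.prod
      have e4 := D.len_mul_left_le (hC.sub x hxC) m.prod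
      rw [ih x a (fun u hu => (hab u hu).symm) l m (fun u hu => hl u (by simp [hu]))
        (fun u hu => hm u (by simp [hu])) h1 h2 (by omega) (by omega) (fun _ => by omega)
        (fun _ => by omega)]
  -- replace w by a word in C
  obtain ⟨l0, hl0, hl0p⟩ := D.exists_word w
  set u0 := (l0.filter (· ∈ C)).prod with hu0
  have hu0C : ∀ x ∈ l0.filter (· ∈ C), x ∈ C := fun x hx => by simpa using (List.mem_filter.1 hx).2
  have hwu : D.ρ w (D.aa s) = D.ρ u0 (D.aa s) := by
    rw [← hl0p, hfil l0 hl0 _ (Submodule.subset_span ⟨s, hs, rfl⟩)]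
  have hpar : ∀ u, (D.ρ w (D.aa s) = D.ρ u (D.aa s) ∨ D.ρ w (D.aa s) = -D.ρ u (D.aa s)) →
      t * u = u * s → False := by
    intro u h1 h2
    have h3 : u * s * u⁻¹ = w * s * w⁻¹ := by
      apply D.eq_of_rho
      intro v
      rw [D.rho_conj hsS, D.rho_conj hsS]
      rcases h1 with h1 | h1 <;> rw [h1]
      rw [inner_neg_left, neg_smul_neg]
    apply hne
    have h4 : t = u * s * u⁻¹ := by rw [← h2]; group
    rw [h4, h3]; group
  -- main claim
  have main : ∀ l : List D.W, (∀ x ∈ l, x ∈ C) → ¬ D.TT t l.prod s →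
      D.len (l.prod * s) = D.len l.prod + 1 → D.len (t * l.prod) = D.len l.prod + 1 →
      t * l.prod = l.prod * s := by
    intro l hl hT h1 h2
    rw [D.TT_iff hsS] at hT
    have h3 := D.len_mul_right hsS (t * l.prod)
    have h4 : D.len (t * l.prod * s) = D.len l.prod := by
      rcases h3 with h3 | h3
      · exact absurd ⟨fun _ => h1, fun _ => h3⟩ hT
      · omega
    obtain ⟨m1, hm1, hm1p, hm1l⟩ := hred l hl
    have hl' : ∀ x ∈ t :: l ++ [s], x ∈ C := by
      intro x hx
      simp at hx
      rcases hx with rfl | hx | rfl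
      · exact ht
      · exact hl x hx
      · exact hs
    have e1 : (t :: l ++ [s]).prod = t * l.prod * s := by simp [mul_assoc]
    obtain ⟨m2, hm2, hm2p, hm2l⟩ := hred _ hl'
    rw [e1] at hm2p hm2l
    have := huniq (D.len l.prod) t q hq m1 m2 hm1 hm2 (by omega) (by omega)
      (by rw [hm1p]) (by rw [hm2p, h4]) (fun _ => by rw [hm1p, h2])
      (fun _ => by rw [hm2p, mul_assoc, D.mul_self_cancel htS, h1])
    have h : t * l.prod * s = l.prod := by rw [← hm2p, ← this, hm1p]
    calc t * l.prod = t * l.prod * s * s := (D.mul_cancel_self hsS _).symm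
      _ = l.prod * s := by rw [h]
  have hT0 : ¬ D.TT t u0 s := by rwa [← D.TT_congr hsS (Or.inl hwu)]
  have hsneg : D.ρ (u0 * s) (D.aa s) = - D.ρ u0 (D.aa s) := by
    rw [rho_mul, D.rho_neg_self hsS, map_neg]
  have hl1 : ∀ x ∈ l0.filter (· ∈ C) ++ [s], x ∈ C := by
    intro x hx
    rcases List.mem_append.1 hx with h | h
    · exact hu0C x h
    · simp at h; rwa [h]
  have e2 : (l0.filter (· ∈ C) ++ [s]).prod = u0 * s := by simp [hu0]
  have hT1 : ¬ D.TT t (u0 * s) s := by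
    rwa [D.TT_congr hsS (w' := u0) (Or.inr hsneg)]
  -- choose the good representative
  have a1 := D.len_mul_right hsS u0
  have a2 := D.len_mul_left htS u0
  have a3 := D.len_mul_left htS (u0 * s)
  have a4 := D.len_mul_right hsS (t * u0)
  have hT0' := hT0
  rw [D.TT_iff hsS] at hT0'
  rw [← mul_assoc] at a3
  rcases a1 with a1 | a1
  · refine hpar u0 (Or.inl hwu) (main _ hu0C hT0 a1 ?_)
    rcases a2 with a2 | a2
    · exact a2
    · exfalso; rcases a4 with a4 | a4
      · exact hT0' ⟨fun _ => a1, fun _ => a4⟩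
      · rw [← hu0] at *; omega
  · refine hpar (u0 * s) (Or.inr (by rw [hsneg, neg_neg, hwu])) ?_
    rw [← e2]
    refine main _ hl1 (by rwa [e2]) ?_ ?_
    · rw [e2, D.mul_cancel_self hsS]; exact a1
    · rw [e2, ← mul_assoc]
      rcases a3 with a3 | a3
      · exact a3
      · exfalso; rcases a4 with a4 | a4
        · omega
        · exact hT0' ⟨fun _ => by omega, fun _ => by omega⟩
end Comp
end CoxeterRootSystem

namespace CoxeterRootSystem
section ListLemma
variable {V : Type} [NormedAddCommGroup V] [InnerProductSpace ℝ V] {D : CoxeterRootSystem V}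
  {C : Set D.W}

/-- `C` has at least three letters -/
def Big (C : Set D.W) : Prop := ∃ a ∈ C, ∃ b ∈ C, ∃ c ∈ C, a ≠ b ∧ a ≠ c ∧ b ≠ c

theorem exists_witness (hC : D.IsComp C) (hB : Big C) {x y : V} (hx : D.Root C x) :
    ∃ i ∈ C, D.aa i ∉ Submodule.span ℝ {x, y} ∧ (⟪x, D.aa i⟫ ≠ 0 ∨ ⟪y, D.aa i⟫ ≠ 0) := by
  classical
  by_contra hcon
  have hall : ∀ i ∈ C, (⟪x, D.aa i⟫ ≠ 0 ∨ ⟪y, D.aa i⟫ ≠ 0) → D.aa i ∈ Submodule.span ℝ {x, y} := by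
    intro i hi h
    by_contra h2
    exact hcon ⟨i, hi, h2, h⟩
  have hspan : ∀ i ∈ C, D.aa i ∈ Submodule.span ℝ {x, y} := by
    apply hC.conn
    · by_contra hno
      have h0 : ∀ i ∈ C, ⟪x, D.aa i⟫ = 0 := by
        intro i hi
        by_contra h
        exact hno ⟨i, hi, hall i hi (Or.inl h)⟩
      have : ⟪x, x⟫ = 0 := by
        refine Submodule.span_induction (p := fun v _ => ⟪x, v⟫ = 0) ?_ ?_ ?_ ?_ (hx.mem_span hC)
        · rintro _ ⟨t, ht, rfl⟩; exact h0 t ht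
        · simp
        · intro a b _ _ ha hb; rw [inner_add_right, ha, hb, add_zero]
        · intro a b _ hb; rw [inner_smul_right, hb, mul_zero]
      rw [hx.sq hC] at this
      norm_num at this
    · intro t _ u hu htu hpt
      apply hall u hu
      by_contra h
      rw [not_or, not_not, not_not] at h
      obtain ⟨a, b, hab⟩ := Submodule.mem_span_pair.1 hpt
      apply htu
      rw [← hab, inner_add_left, inner_smul_left, inner_smul_left, h.1, h.2]
      simp
  obtain ⟨a, ha, b, hb, c, hc, hab, hac, hbc⟩ := hB
  have hli : LinearIndependent ℝ ![D.aa a, D.aa b, D.aa c] := by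
    rw [Fintype.linearIndependent_iff]
    intro g hg
    have haS := hC.sub a ha
    have hbS := hC.sub b hb
    have hcS := hC.sub c hc
    simp only [Fin.sum_univ_three, Matrix.cons_val_zero, Matrix.cons_val_one,
      Matrix.cons_val] at hg
    have key : ∀ t, D.co t (g 0 • D.aa a + g 1 • D.aa b + g 2 • D.aa c) = 0 := by
      intro t; rw [hg]; simp [co]
    have k1 := key a
    have k2 := key b
    have k3 := key c
    simp only [co_add, co_smul, D.co_aa haS haS, D.co_aa haS hbS, D.co_aa haS hcS,
      D.co_aa hbS haS, D.co_aa hbS hbS, D.co_aa hbS hcS, D.co_aa hcS haS, D.co_aa hcS hbS,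
      D.co_aa hcS hcS, hab, hac, hbc, hab.symm, hac.symm, hbc.symm, if_true, if_false] at k1 k2 k3
    intro i
    fin_cases i
    · simpa using k1
    · simpa using k2
    · simpa using k3
  have hle := linearIndependent_le_span' _ hli ({x, y} : Set V) (by
    rintro _ ⟨i, rfl⟩
    fin_cases i
    · exact hspan a ha
    · exact hspan b hb
    · exact hspan c hc)
  have h2 : Fintype.card ({x, y} : Set V) ≤ 2 := by
    rw [← Set.toFinset_card]
    have : ({x, y} : Set V).toFinset = {x, y} := by ext; simp
    rw [this]; exact Finset.card_le_two
  have h3 : ((3 : ℕ) : Cardinal) ≤ ((2 : ℕ) : Cardinal) := by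
    refine le_trans ?_ (hle.trans (by exact_mod_cast h2))
    simp
  have := Nat.cast_le.1 h3
  omega

theorem bound3 (hC : D.IsComp C) {x y z : V} (hx : D.Root C x) (hy : D.Root C y)
    (hz : D.Root C z) (hzs : z ∉ Submodule.span ℝ {x, y}) (hzo : ⟪x, z⟫ ≠ 0 ∨ ⟪y, z⟫ ≠ 0)
    (hc : ⟪x, y⟫ ^ 2 < 4) : ⟪x, y⟫ ^ 2 < 3 := by
  by_contra hc3
  rw [not_lt] at hc3
  set c := ⟪x, y⟫ with hcdef
  have hyx : ⟪y, x⟫ = c := by rw [real_inner_comm]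
  have hxx := hx.sq hC
  have hyy := hy.sq hC
  obtain ⟨a0, b0, n, hzn, hxn, hyn⟩ : ∃ a0 b0 : ℝ, ∃ n : V, z = a0 • x + b0 • y + n ∧
      ⟪x, n⟫ = 0 ∧ ⟪y, n⟫ = 0 := by
    have h4 : 4 - c ^ 2 ≠ 0 := by linarith
    refine ⟨(2 * ⟪x, z⟫ - c * ⟪y, z⟫) / (4 - c ^ 2), (2 * ⟪y, z⟫ - c * ⟪x, z⟫) / (4 - c ^ 2),
      z - ((2 * ⟪x, z⟫ - c * ⟪y, z⟫) / (4 - c ^ 2)) • x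
        - ((2 * ⟪y, z⟫ - c * ⟪x, z⟫) / (4 - c ^ 2)) • y, by abel, ?_, ?_⟩
    · rw [inner_sub_right, inner_sub_right, inner_smul_right, inner_smul_right, hxx, ← hcdef]
      field_simp; ring
    · rw [inner_sub_right, inner_sub_right, inner_smul_right, inner_smul_right, hyy, hyx]
      field_simp; ring
  have hn0 : n ≠ 0 := by
    rintro rfl
    exact hzs (Submodule.mem_span_pair.2 ⟨a0, b0, by rw [hzn, add_zero]⟩)
  have hN : 0 < ⟪n, n⟫ := by
    rw [real_inner_self_eq_norm_sq]; have := norm_pos_iff.2 hn0; positivity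
  set N := ⟪n, n⟫ with hNdef
  have hnx : ⟪n, x⟫ = 0 := by rw [real_inner_comm, hxn]
  have hny : ⟪n, y⟫ = 0 := by rw [real_inner_comm, hyn]
  set E := Submodule.span ℝ {x, y, n} with hE
  have hxE : x ∈ E := Submodule.subset_span (by simp)
  have hyE : y ∈ E := Submodule.subset_span (by simp)
  have hnE : n ∈ E := Submodule.subset_span (by simp)
  have hzE : z ∈ E := by
    rw [hzn]
    exact E.add_mem (E.add_mem (E.smul_mem _ hxE) (E.smul_mem _ hyE)) hnE
  let G : Set D.W := {g | ∀ v ∈ E, D.ρ g v ∈ E ∧ D.ρ g⁻¹ v ∈ E}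
  have hGmul : ∀ g h, g ∈ G → h ∈ G → g * h ∈ G := by
    intro g h hg hh v hv
    rw [mul_inv_rev, rho_mul, rho_mul]
    exact ⟨(hg _ (hh v hv).1).1, (hh _ (hg v hv).2).2⟩
  have hGinv : ∀ g, g ∈ G → g⁻¹ ∈ G := by
    intro g hg v hv
    rw [inv_inv]; exact (hg v hv).symm
  have hGR : ∀ u ∈ E, ⟪u, u⟫ = 2 → ∀ R : D.W, (∀ v, D.ρ R v = v - ⟪u, v⟫ • u) → R ∈ G := by
    intro u hu huu R hR v hv
    have h1 : ∀ v, D.ρ R (D.ρ R v) = v := by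
      intro v
      rw [hR, hR, inner_sub_right, inner_smul_right, huu]
      module
    have h2 : D.ρ R⁻¹ v = D.ρ R v := by
      conv_lhs => rw [← h1 v]
      rw [rho_inv_rho]
    rw [h2, hR]
    have := E.sub_mem hv (E.smul_mem ⟪u, v⟫ hu)
    exact ⟨this, this⟩
  obtain ⟨Rx, hRx⟩ := hx.exR hC
  obtain ⟨Ry, hRy⟩ := hy.exR hC
  obtain ⟨Rz, hRz⟩ := hz.exR hC
  have hRxG := hGR x hxE hxx Rx hRx
  have hRyG := hGR y hyE hyy Ry hRy
  have hRzG := hGR z hzE (hz.sq hC) Rz hRz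
  have hzn' : ⟪z, n⟫ = N := by
    rw [hzn, inner_add_left, inner_add_left, inner_smul_left, inner_smul_left, hxn, hyn]; simp [hNdef]
  have hne : ({g | g ∈ G ∧ D.ρ g n ≠ n ∧ D.ρ g n ≠ -n} : Set D.W).Nonempty := by
    refine ⟨Rz, hRzG, ?_, ?_⟩
    · rw [hRz, hzn']
      intro h
      have : N • z = 0 := by simpa using h
      rcases smul_eq_zero.1 this with h | h
      · exact hN.ne' h
      · exact hz.ne_zero hC h
    · rw [hRz, hzn']
      intro h
      have h2 : N • z = (2 : ℝ) • n := by
        rw [two_smul]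
        rw [sub_eq_iff_eq_add] at h
        nth_rewrite 1 [h]
        abel
      have h3 : ⟪x, N • z⟫ = 0 := by rw [h2, inner_smul_right, hxn, mul_zero]
      have h4 : ⟪y, N • z⟫ = 0 := by rw [h2, inner_smul_right, hyn, mul_zero]
      rw [inner_smul_right, mul_eq_zero] at h3 h4
      rcases hzo with h | h
      · exact h (h3.resolve_left hN.ne')
      · exact h (h4.resolve_left hN.ne')
  obtain ⟨g, ⟨hgG, hg1, hg2⟩, hmax⟩ := Set.exists_max_image _ (fun g => ⟪D.ρ g n, n⟫)
    (Set.toFinite _) hne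
  obtain ⟨a, b, lam, hn'⟩ := Submodule.mem_span_triple.1 (hgG n hnE).1
  set v := D.ρ g n with hv
  have hvv : ⟪v, v⟫ = N := by rw [hv, inner_rho]
  have hX : ⟪x, v⟫ = 2 * a + b * c := by
    rw [← hn', inner_add_right, inner_add_right, inner_smul_right, inner_smul_right,
      inner_smul_right, hxx, hxn, ← hcdef]; ring
  have hY : ⟪y, v⟫ = a * c + 2 * b := by
    rw [← hn', inner_add_right, inner_add_right, inner_smul_right, inner_smul_right,
      inner_smul_right, hyy, hyn, hyx]; ring
  have hnv : ⟪n, v⟫ = lam * N := by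
    rw [← hn', inner_add_right, inner_add_right, inner_smul_right, inner_smul_right,
      inner_smul_right, hnx, hny]; ring
  have hP : a * (2 * a + b * c) + b * (a * c + 2 * b) + lam ^ 2 * N = N := by
    have : ⟪v, v⟫ = a * ⟪x, v⟫ + b * ⟪y, v⟫ + lam * ⟪n, v⟫ := by
      conv_lhs => rw [← hn']
      rw [inner_add_left, inner_add_left, inner_smul_left, inner_smul_left, inner_smul_left]
      simp only [conj_trivial]
      rw [hn']
    rw [hvv, hX, hY, hnv] at this
    linarith
  have hR : D.ρ (Rx * Ry) v = v - (a * c + 2 * b) • y -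
      ((2 * a + b * c) - (a * c + 2 * b) * c) • x := by
    rw [rho_mul, hRy, hRx, hY, inner_sub_right, inner_smul_right, hX, ← hcdef]
  have hRv : ⟪D.ρ (Rx * Ry) v, v⟫ = N - (4 - c ^ 2) * (N - lam ^ 2 * N) / 2 := by
    rw [hR, inner_sub_left, inner_sub_left, inner_smul_left, inner_smul_left, hvv, hX, hY]
    simp only [conj_trivial]
    have : N - lam ^ 2 * N = a * (2 * a + b * c) + b * (a * c + 2 * b) := by linarith
    rw [this]; ring
  have hPpos : 0 < N - lam ^ 2 * N := by
    have e : N - lam ^ 2 * N = 2 * (a + b * c / 2) ^ 2 + (4 - c ^ 2) / 2 * b ^ 2 := by linarith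
    have h1 : 0 ≤ N - lam ^ 2 * N := by
      rw [e]; have : 0 ≤ (4 - c ^ 2) / 2 := by linarith
      positivity
    rcases h1.lt_or_eq with h | h
    · exact h
    exfalso
    have hb : b = 0 := by
      have : 0 < (4 - c ^ 2) / 2 := by linarith
      by_contra hb
      have : 0 < (4 - c ^ 2) / 2 * b ^ 2 := by positivity
      nlinarith [sq_nonneg (a + b * c / 2)]
    have ha : a = 0 := by
      rw [← h, hb] at e
      have : a ^ 2 = 0 := by nlinarith
      exact pow_eq_zero_iff (two_ne_zero) |>.1 this
    have hl : lam ^ 2 = 1 := by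
      have : (1 - lam ^ 2) * N = 0 := by linarith
      rcases mul_eq_zero.1 this with h | h
      · linarith
      · exact absurd h hN.ne'
    rw [ha, hb] at hn'
    simp only [zero_smul, zero_add] at hn'
    rcases sq_eq_one_iff.1 hl with h | h
    · apply hg1; rw [← hn', h, one_smul]
    · apply hg2; rw [← hn', h, neg_one_smul]
  have hhG : g⁻¹ * (Rx * Ry) * g ∈ G :=
    hGmul _ _ (hGmul _ _ (hGinv _ hgG) (hGmul _ _ hRxG hRyG)) hgG
  have hhn : D.ρ (g⁻¹ * (Rx * Ry) * g) n = D.ρ g⁻¹ (D.ρ (Rx * Ry) v) := by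
    rw [rho_mul, rho_mul]
  have hinner : ⟪D.ρ (g⁻¹ * (Rx * Ry) * g) n, n⟫ = ⟪D.ρ (Rx * Ry) v, v⟫ := by
    rw [hhn, inner_rho_left, inv_inv]
  have hle := hmax (g⁻¹ * (Rx * Ry) * g) ⟨hhG, ?_, ?_⟩
  · rw [hinner, hRv, real_inner_comm, hnv] at hle
    have hl2 : 0 < 1 - lam ^ 2 := by
      have : 0 < (1 - lam ^ 2) * N := by linarith
      exact (mul_pos_iff_of_pos_right hN).1 this
    have hl1 : lam < 1 := by nlinarith only [hl2]
    have h5 : (4 - c ^ 2) * (N - lam ^ 2 * N) ≤ 1 * (N - lam ^ 2 * N) :=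
      mul_le_mul_of_nonneg_right (by linarith) hPpos.le
    have h6 : N * ((1 - lam) * (1 - lam)) ≤ 0 := by linarith
    have : 0 < N * ((1 - lam) * (1 - lam)) := by
      have : 0 < 1 - lam := by linarith
      positivity
    linarith
  · intro h
    rw [h, ← hNdef, hRv] at hinner
    have : 0 < (4 - c ^ 2) * (N - lam ^ 2 * N) := mul_pos (by linarith) hPpos
    linarith
  · intro h
    have h7 : D.ρ (Rx * Ry) v = -v := by
      rw [hhn] at h
      have := congrArg (D.ρ g) h
      rwa [rho_rho_inv, map_neg, ← hv] at this
    have h8 : ⟪n, D.ρ (Rx * Ry) v⟫ = lam * N := by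
      rw [hR, inner_sub_right, inner_sub_right, inner_smul_right, inner_smul_right, hnv, hnx, hny]
      ring
    rw [h7, inner_neg_right, hnv] at h8
    have hl0 : lam = 0 := by
      have : lam * N = 0 := by linarith
      exact (mul_eq_zero.1 this).resolve_right hN.ne'
    rw [h7, inner_neg_left, hvv, hl0] at hRv
    nlinarith

theorem list_arith {c : ℝ} (h0 : c ^ 2 < 4) (h1 : c ^ 2 < 3)
    (h2 : (c ^ 2 - 2) ^ 2 = 4 ∨ (c ^ 2 - 2) ^ 2 < 3)
    (h3 : (c ^ 3 - 3 * c) ^ 2 = 4 ∨ (c ^ 3 - 3 * c) ^ 2 < 3)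
    (h4 : (c ^ 4 - 4 * c ^ 2 + 2) ^ 2 = 4 ∨ (c ^ 4 - 4 * c ^ 2 + 2) ^ 2 < 3)
    (h5 : (c ^ 5 - 5 * c ^ 3 + 5 * c) ^ 2 = 4 ∨ (c ^ 5 - 5 * c ^ 3 + 5 * c) ^ 2 < 3) :
    c ^ 2 = 0 ∨ c ^ 2 = 1 ∨ c ^ 2 = 2 ∨ (c ^ 2) ^ 2 - 3 * c ^ 2 + 1 = 0 := by
  obtain ⟨d, hd⟩ : ∃ d, d = c ^ 2 := ⟨_, rfl⟩
  have e3 : (c ^ 3 - 3 * c) ^ 2 = 4 - (4 - d) * (d - 1) ^ 2 := by rw [hd]; ring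
  have e4 : (c ^ 4 - 4 * c ^ 2 + 2) ^ 2 = 4 - (4 - d) * (d * (d - 2) ^ 2) := by rw [hd]; ring
  have e5 : (c ^ 5 - 5 * c ^ 3 + 5 * c) ^ 2 = 4 - (4 - d) * (d ^ 2 - 3 * d + 1) ^ 2 := by
    rw [hd]; ring
  have e2 : (c ^ 2 - 2) ^ 2 = 4 - (4 - d) * d := by rw [hd]; ring
  have hd0 : 0 ≤ d := by rw [hd]; positivity
  rw [e2] at h2
  rw [e3] at h3
  rw [e4] at h4
  rw [e5] at h5
  rw [← hd] at h0 h1 ⊢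
  clear e2 e3 e4 e5 hd
  have p4 : 0 < 4 - d := by linarith
  have f2 : d = 0 ∨ 1 < (4 - d) * d := by
    rcases h2 with h | h
    · left
      have : (4 - d) * d = 0 := by linarith
      exact (mul_eq_zero.1 this).resolve_left p4.ne'
    · right; linarith
  have f3 : d = 1 ∨ 1 < (4 - d) * (d - 1) ^ 2 := by
    rcases h3 with h | h
    · left
      have : (4 - d) * (d - 1) ^ 2 = 0 := by linarith
      have := pow_eq_zero_iff two_ne_zero |>.1 ((mul_eq_zero.1 this).resolve_left p4.ne')
      linarith
    · right; linarith
  have f4 : d = 0 ∨ d = 2 ∨ 1 < (4 - d) * (d * (d - 2) ^ 2) := by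
    rcases h4 with h | h
    · have : (4 - d) * (d * (d - 2) ^ 2) = 0 := by linarith
      rcases mul_eq_zero.1 ((mul_eq_zero.1 this).resolve_left p4.ne') with h | h
      · left; exact h
      · right; left
        have := pow_eq_zero_iff two_ne_zero |>.1 h
        linarith
    · right; right; linarith
  have f5 : d ^ 2 - 3 * d + 1 = 0 ∨ 1 < (4 - d) * (d ^ 2 - 3 * d + 1) ^ 2 := by
    rcases h5 with h | h
    · left
      have : (4 - d) * (d ^ 2 - 3 * d + 1) ^ 2 = 0 := by linarith
      exact pow_eq_zero_iff two_ne_zero |>.1 ((mul_eq_zero.1 this).resolve_left p4.ne')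
    · right; linarith
  clear h2 h3 h4 h5
  rcases f2 with f2 | f2
  · exact Or.inl f2
  rcases f3 with f3 | f3
  · exact Or.inr (Or.inl f3)
  rcases f4 with f4 | f4 | f4
  · exact Or.inl f4
  · exact Or.inr (Or.inr (Or.inl f4))
  rcases f5 with f5 | f5
  · exact Or.inr (Or.inr (Or.inr f5))
  exfalso
  have g1 : 0.267 < d := by nlinarith
  rcases le_total d 0.5 with g2 | g2
  · -- |q5| ≤ 1/2
    have b1 : d ^ 2 - 3 * d + 1 ≤ 1 / 2 := by nlinarith
    have b2 : -(1 / 2) ≤ d ^ 2 - 3 * d + 1 := by nlinarith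
    have b3 : (d ^ 2 - 3 * d + 1) ^ 2 ≤ 1 / 4 := by nlinarith
    nlinarith
  rcases le_total d 1.6 with g3 | g3
  · have b1 : (d - 1) * ((d - 1) * (3 - d) - (d - 1)) ≤ 0 ∨ True := Or.inr trivial
    -- (4-d)(d-1)^2 ≤ 1 on [0.5,1.6]
    nlinarith [mul_nonneg (sub_nonneg.2 g2) (sub_nonneg.2 g3)]
  rcases le_total d 2.4 with g4 | g4
  · have b1 : (d - 2) ^ 2 ≤ 0.16 := by nlinarith
    have b2 : (4 - d) * d ≤ 4 := by nlinarith [sq_nonneg (d - 2)]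
    have : (4 - d) * (d * (d - 2) ^ 2) = ((4 - d) * d) * (d - 2) ^ 2 := by ring
    nlinarith [sq_nonneg (d - 2)]
  rcases le_total d 2.75 with g5 | g5
  · have b1 : d ^ 2 - 3 * d + 1 ≤ 0.4472 := by nlinarith
    have b2 : -0.4472 ≤ d ^ 2 - 3 * d + 1 := by nlinarith
    have b3 : (d ^ 2 - 3 * d + 1) ^ 2 ≤ 0.2 := by nlinarith
    nlinarith
  · have b1 : d ^ 2 - 3 * d + 1 ≤ d - 2 := by nlinarith
    have b2 : 0 ≤ d ^ 2 - 3 * d + 1 := by nlinarith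
    have b3 : (d ^ 2 - 3 * d + 1) ^ 2 ≤ (d - 2) ^ 2 := by nlinarith
    have b4 : (4 - d) * (d ^ 2 - 3 * d + 1) ^ 2 ≤ (4 - d) * (d - 2) ^ 2 :=
      mul_le_mul_of_nonneg_left b3 p4.le
    nlinarith [sq_nonneg (d - 3), mul_nonneg (sub_nonneg.2 g5) (sub_nonneg.2 h1.le)]

theorem bound4 (hC : D.IsComp C) (hB : Big C) {x y : V} (hx : D.Root C x) (hy : D.Root C y) :
    ⟪x, y⟫ ^ 2 = 4 ∨ ⟪x, y⟫ ^ 2 < 3 := by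
  obtain ⟨i, hi, h1, h2⟩ := exists_witness hC hB (y := y) hx
  have hcs := real_inner_mul_inner_self_le x y
  rw [hx.sq hC, hy.sq hC] at hcs
  have : ⟪x, y⟫ ^ 2 ≤ 4 := by nlinarith
  rcases this.lt_or_eq with h | h
  · right; exact bound3 hC hx hy (root_aa' hi) h1 h2 h
  · left; exact h

theorem eq_of_inner_two (hC : D.IsComp C) {x y : V} (hx : D.Root C x) (hy : D.Root C y)
    (h : ⟪x, y⟫ = 2) : x = y := by
  have : ⟪x - y, x - y⟫ = 0 := by
    rw [inner_sub_left, inner_sub_right, inner_sub_right, hx.sq hC, hy.sq hC, h,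
      real_inner_comm, h]; norm_num
  exact sub_eq_zero.1 (inner_self_eq_zero.1 this)

theorem list_lemma (hC : D.IsComp C) (hB : Big C) {x y : V} (hx : D.Root C x) (hy : D.Root C y) :
    ⟪x, y⟫ ^ 2 = 4 ∨ ⟪x, y⟫ ^ 2 = 0 ∨ ⟪x, y⟫ ^ 2 = 1 ∨ ⟪x, y⟫ ^ 2 = 2 ∨
      (⟪x, y⟫ ^ 2) ^ 2 - 3 * ⟪x, y⟫ ^ 2 + 1 = 0 := by
  rcases bound4 hC hB hx hy with h | h
  · exact Or.inl h
  right
  set c := ⟪x, y⟫ with hc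
  have step : ∀ u v : V, D.Root C u → D.Root C v → ⟪v, u⟫ = c → D.Root C (c • v - u) ∧
      ⟪c • v - u, v⟫ = c := by
    intro u v hu hv huv
    constructor
    · have := (hv.refl hC hu).neg hC
      rw [huv] at this
      convert this using 1
      abel
    · rw [inner_sub_left, inner_smul_left, hv.sq hC, real_inner_comm, huv]
      simp; ring
  have s2 := step x y hx hy (by rw [real_inner_comm])
  have s3 := step _ _ hy s2.1 s2.2
  have s4 := step _ _ s2.1 s3.1 s3.2
  have s5 := step _ _ s3.1 s4.1 s4.2
  have i2 : ⟪x, c • y - x⟫ = c ^ 2 - 2 := by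
    rw [inner_sub_right, inner_smul_right, hx.sq hC, ← hc]; ring
  have i3 : ⟪x, c • (c • y - x) - y⟫ = c ^ 3 - 3 * c := by
    rw [inner_sub_right, inner_smul_right, i2, ← hc]; ring
  have i4 : ⟪x, c • (c • (c • y - x) - y) - (c • y - x)⟫ = c ^ 4 - 4 * c ^ 2 + 2 := by
    rw [inner_sub_right, inner_smul_right, i3, i2]; ring
  have i5 : ⟪x, c • (c • (c • (c • y - x) - y) - (c • y - x)) - (c • (c • y - x) - y)⟫
      = c ^ 5 - 5 * c ^ 3 + 5 * c := by
    rw [inner_sub_right, inner_smul_right, i4, i3]; ring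
  apply list_arith (by linarith) h
  · rw [← i2]; exact bound4 hC hB hx s2.1
  · rw [← i3]; exact bound4 hC hB hx s3.1
  · rw [← i4]; exact bound4 hC hB hx s4.1
  · rw [← i5]; exact bound4 hC hB hx s5.1

end ListLemma
end CoxeterRootSystem

namespace CoxeterRootSystem
section Crys
variable {V : Type} [NormedAddCommGroup V] [InnerProductSpace ℝ V] {D : CoxeterRootSystem V}
  {C : Set D.W}

/-- no five-bonds inside `C` -/
def Crys (D : CoxeterRootSystem V) (C : Set D.W) : Prop := ∀ p ∈ C, ∀ q ∈ C,
  (⟪D.aa p, D.aa q⟫ ^ 2) ^ 2 - 3 * ⟪D.aa p, D.aa q⟫ ^ 2 + 1 ≠ 0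

/-- the ring of numbers `a + b √2` -/
def Z2 (c : ℝ) : Prop := ∃ a b : ℤ, c = a + b * √2

theorem Z2.mul {c d : ℝ} (hc : Z2 c) (hd : Z2 d) : Z2 (c * d) := by
  obtain ⟨a, b, rfl⟩ := hc
  obtain ⟨a', b', rfl⟩ := hd
  refine ⟨a * a' + 2 * b * b', a * b' + b * a', ?_⟩
  have : √2 * √2 = 2 := Real.mul_self_sqrt (by norm_num)
  push_cast
  linear_combination (b * b' : ℝ) * this

theorem Z2.sub {c d : ℝ} (hc : Z2 c) (hd : Z2 d) : Z2 (c - d) := by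
  obtain ⟨a, b, rfl⟩ := hc
  obtain ⟨a', b', rfl⟩ := hd
  exact ⟨a - a', b - b', by push_cast; ring⟩

theorem Z2.int (a : ℤ) : Z2 a := ⟨a, 0, by simp⟩

theorem sqrt2_indep {a b : ℤ} (h : (a : ℝ) + b * √2 = 0) : a = 0 ∧ b = 0 := by
  have hb : b = 0 := by
    by_contra hb
    have hirr := irrational_sqrt_two
    apply hirr
    refine ⟨-a / b, ?_⟩
    have : (b : ℝ) ≠ 0 := by exact_mod_cast hb
    push_cast
    field_simp
    linarith
  subst hb
  simpa using h

theorem Z2.not_five {c : ℝ} (hc : Z2 c) : (c ^ 2) ^ 2 - 3 * c ^ 2 + 1 ≠ 0 := by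
  intro h
  have hf : (c ^ 2 - c - 1) * (c ^ 2 + c - 1) = 0 := by linear_combination h
  obtain ⟨a, b, rfl⟩ := hc
  have h2 : √2 * √2 = 2 := Real.mul_self_sqrt (by norm_num)
  rcases mul_eq_zero.1 hf with h | h
  · have : ((a * a + 2 * b * b - a - 1 : ℤ) : ℝ) + ((2 * a * b - b : ℤ) : ℝ) * √2 = 0 := by
      push_cast; linear_combination h - (b * b : ℝ) * h2
    obtain ⟨h3, h4⟩ := sqrt2_indep this
    have hb : b = 0 := by
      have : b * (2 * a - 1) = 0 := by linarith
      rcases mul_eq_zero.1 this with h | h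
      · exact h
      · omega
    subst hb
    have : a * (a - 1) = 1 := by linarith
    rcases Int.eq_one_or_neg_one_of_mul_eq_one this with rfl | rfl <;> norm_num at this
  · have : ((a * a + 2 * b * b + a - 1 : ℤ) : ℝ) + ((2 * a * b + b : ℤ) : ℝ) * √2 = 0 := by
      push_cast; linear_combination h - (b * b : ℝ) * h2
    obtain ⟨h3, h4⟩ := sqrt2_indep this
    have hb : b = 0 := by
      have : b * (2 * a + 1) = 0 := by linarith
      rcases mul_eq_zero.1 this with h | h
      · exact h
      · omega
    subst hb
    have : a * (a + 1) = 1 := by linarith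
    rcases Int.eq_one_or_neg_one_of_mul_eq_one this with rfl | rfl <;> norm_num at this

theorem crys_Z2 (hC : D.IsComp C) (hB : Big C) (hcr : Crys D C) {x y : V} (hx : D.Root C x)
    (hy : D.Root C y) : Z2 ⟪x, y⟫ := by
  have hlet : ∀ p ∈ C, ∀ q ∈ C, Z2 ⟪D.aa p, D.aa q⟫ := by
    intro p hp q hq
    rcases list_lemma hC hB (root_aa' hp) (root_aa' hq) with h | h | h | h | h
    · have : (⟪D.aa p, D.aa q⟫ - 2) * (⟪D.aa p, D.aa q⟫ + 2) = 0 := by linear_combination h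
      rcases mul_eq_zero.1 this with h | h
      · exact ⟨2, 0, by push_cast; linarith⟩
      · exact ⟨-2, 0, by push_cast; linarith⟩
    · exact ⟨0, 0, by simpa using h⟩
    · rcases sq_eq_one_iff.1 h with h | h
      · exact ⟨1, 0, by push_cast; linarith⟩
      · exact ⟨-1, 0, by push_cast; linarith⟩
    · have h2 : √2 * √2 = 2 := Real.mul_self_sqrt (by norm_num)
      have : (⟪D.aa p, D.aa q⟫ - √2) * (⟪D.aa p, D.aa q⟫ + √2) = 0 := by
        linear_combination h - h2
      rcases mul_eq_zero.1 this with h | h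
      · exact ⟨0, 1, by push_cast; linarith⟩
      · exact ⟨0, -1, by push_cast; linarith⟩
    · exact absurd h (hcr p hp q hq)
  have hw : ∀ w : D.W, ∀ t ∈ C, ∀ s ∈ C, Z2 ⟪D.aa t, D.ρ w (D.aa s)⟫ := by
    intro w
    induction w using D.word_induction with
    | h1 => intro t ht s hs; rw [rho_one]; exact hlet t ht s hs
    | h2 u hu w ih =>
      intro t ht s hs
      rw [rho_mul, D.rho_simple hu, inner_sub_right, inner_smul_right]
      by_cases huC : u ∈ C
      · exact (ih t ht s hs).sub ((ih u huC s hs).mul (hlet t ht u huC))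
      · rw [span_orth hC hu huC (Root.mem_span hC (root_aa w hs)), zero_mul, sub_zero]
        exact ih t ht s hs
  obtain ⟨w, t, ht, rfl⟩ := hx
  obtain ⟨w', s, hs, rfl⟩ := hy
  rw [inner_rho_left, ← rho_mul]
  exact hw _ t ht s hs

theorem crys_list (hC : D.IsComp C) (hB : Big C) (hcr : Crys D C) {x y : V} (hx : D.Root C x)
    (hy : D.Root C y) : ⟪x, y⟫ ^ 2 = 4 ∨ ⟪x, y⟫ = 0 ∨ ⟪x, y⟫ ^ 2 = 1 ∨ ⟪x, y⟫ ^ 2 = 2 := by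
  rcases list_lemma hC hB hx hy with h | h | h | h | h
  · exact Or.inl h
  · exact Or.inr (Or.inl (by simpa using h))
  · exact Or.inr (Or.inr (Or.inl h))
  · exact Or.inr (Or.inr (Or.inr h))
  · exact absurd h (crys_Z2 hC hB hcr hx hy).not_five

/-- type of a nonzero inner product: `false` for `±1, ±2`, `true` for `±√2` -/
def Typ (q : Bool) (c : ℝ) : Prop := (q = false ∧ (c ^ 2 = 1 ∨ c ^ 2 = 4)) ∨ (q = true ∧ c ^ 2 = 2)

theorem Typ.ne_zero {q : Bool} {c : ℝ} (h : Typ q c) : c ≠ 0 := by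
  rintro rfl
  rcases h with ⟨_, h | h⟩ | ⟨_, h⟩ <;> norm_num at h

theorem exists_typ (hC : D.IsComp C) (hB : Big C) (hcr : Crys D C) {x y : V} (hx : D.Root C x)
    (hy : D.Root C y) (h : ⟪x, y⟫ ≠ 0) : ∃ q, Typ q ⟪x, y⟫ := by
  rcases crys_list hC hB hcr hx hy with h1 | h1 | h1 | h1
  · exact ⟨false, Or.inl ⟨rfl, Or.inr h1⟩⟩
  · exact absurd h1 h
  · exact ⟨false, Or.inl ⟨rfl, Or.inl h1⟩⟩
  · exact ⟨true, Or.inr ⟨rfl, h1⟩⟩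

theorem no_sq (m : ℤ) (n : ℤ) (h : (m : ℝ) ^ 2 = n) (hn : n = 8 ∨ n = 32 ∨ n = 128 ∨ n = 512) :
    False := by
  have h1 : m ^ 2 = n := by exact_mod_cast h
  have h2 : m.natAbs ^ 2 = n.natAbs := by rw [← h1, Int.natAbs_pow]
  have h3 : m.natAbs ≤ 23 := by
    by_contra hh
    have : 24 ^ 2 ≤ m.natAbs ^ 2 := Nat.pow_le_pow_left (by omega) 2
    rcases hn with rfl | rfl | rfl | rfl <;> norm_num at h2 <;> omega
  generalize m.natAbs = k at *
  rcases hn with rfl | rfl | rfl | rfl <;> norm_num at h2 <;> interval_cases k <;> omega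

theorem tri_arith {p q r : Bool} {a b c : ℝ} (ha : Typ p a) (hb : Typ q b) (hc : Typ r c)
    (h : (c - a * b) ^ 2 = 4 ∨ (c - a * b) = 0 ∨ (c - a * b) ^ 2 = 1 ∨ (c - a * b) ^ 2 = 2) :
    r = xor p q := by
  have key : ∀ A B C' : ℤ, a ^ 2 = A → b ^ 2 = B → c ^ 2 = C' →
      (4 * A * B * C' = 8 ∨ 4 * A * B * C' = 32 ∨ 4 * A * B * C' = 128 ∨ 4 * A * B * C' = 512) →
      False := by
    intro A B C' hA hB hC' hn
    have e : (c - a * b) ^ 2 = C' + A * B - 2 * a * b * c := by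
      rw [← hA, ← hB, ← hC']; ring
    have e2 : ∀ m : ℤ, (m : ℝ) = 2 * a * b * c → False := by
      intro m hm
      apply no_sq m _ _ hn
      push_cast
      rw [hm, ← hA, ← hB, ← hC']; ring
    rcases h with h | h | h | h
    · exact e2 (C' + A * B - 4) (by push_cast; linarith)
    · exact e2 (C' + A * B) (by rw [h] at e; push_cast; linarith)
    · exact e2 (C' + A * B - 1) (by push_cast; linarith)
    · exact e2 (C' + A * B - 2) (by push_cast; linarith)
  rcases ha with ⟨rfl, ha | ha⟩ | ⟨rfl, ha⟩ <;> rcases hb with ⟨rfl, hb | hb⟩ | ⟨rfl, hb⟩ <;>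
    rcases hc with ⟨rfl, hc | hc⟩ | ⟨rfl, hc⟩ <;> first | rfl | (exfalso; exact key _ _ _ (by rw [ha]; norm_cast) (by rw [hb]; norm_cast) (by rw [hc]; norm_cast) (by norm_num))

theorem prod_arith {p q r : Bool} {a b c : ℝ} (ha : Typ p a) (hb : Typ q b) (hc : Typ r c)
    (h : c ^ 2 = a ^ 2 * b ^ 2) : r = xor p q := by
  rcases ha with ⟨rfl, ha | ha⟩ | ⟨rfl, ha⟩ <;> rcases hb with ⟨rfl, hb | hb⟩ | ⟨rfl, hb⟩ <;>
    rcases hc with ⟨rfl, hc | hc⟩ | ⟨rfl, hc⟩ <;> first | rfl | (exfalso; rw [ha, hb, hc] at h; norm_num at h)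

theorem tri (hC : D.IsComp C) (hB : Big C) (hcr : Crys D C) {x y z : V} (hx : D.Root C x)
    (hy : D.Root C y) (hz : D.Root C z) {p q : Bool} (h1 : Typ p ⟪x, z⟫) (h2 : Typ q ⟪z, y⟫)
    (h3 : ⟪x, y⟫ ≠ 0) : Typ (xor p q) ⟪x, y⟫ := by
  obtain ⟨r, hr⟩ := exists_typ hC hB hcr hx hy h3
  have h4 := crys_list hC hB hcr hx (hz.refl hC hy)
  rw [inner_sub_right, inner_smul_right, mul_comm] at h4
  rw [← tri_arith h1 h2 hr h4]
  exact hr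

/-- walks of nonorthogonal roots with type -/
def Wk (D : CoxeterRootSystem V) (C : Set D.W) : ℕ → Bool → V → V → Prop
  | 0, p, x, y => x = y ∧ p = false
  | n + 1, p, x, y => ∃ z q, Wk D C n (xor p q) x z ∧ D.Root C z ∧ Typ q ⟪z, y⟫

theorem walk_typ (hC : D.IsComp C) (hB : Big C) (hcr : Crys D C) {x : V} (hx : D.Root C x) :
    ∀ n p (y : V), D.Root C y → Wk D C n p x y → ⟪x, y⟫ ≠ 0 → Typ p ⟪x, y⟫ := by
  intro n
  induction n with
  | zero =>
    rintro p y hy ⟨rfl, rfl⟩ _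
    exact Or.inl ⟨rfl, Or.inr (by rw [hx.sq hC]; norm_num)⟩
  | succ n ih =>
    rintro p y hy ⟨z, q, hw, hz, hq⟩ h0
    by_cases hxz : ⟪x, z⟫ = 0
    · cases n with
      | zero =>
        obtain ⟨rfl, _⟩ := hw
        rw [hx.sq hC] at hxz; norm_num at hxz
      | succ n =>
        obtain ⟨z2, q2, hw2, hz2, hq2⟩ := hw
        by_cases h2 : ⟪z2, y⟫ = 0
        · -- replace y by its reflection
          have hy' := hz.refl hC hy
          have e1 : ⟪z2, y - ⟪z, y⟫ • z⟫ = - (⟪z2, z⟫ * ⟪z, y⟫) := by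
            rw [inner_sub_right, inner_smul_right, h2]; ring
          have hne : ⟪z2, y - ⟪z, y⟫ • z⟫ ≠ 0 := by
            rw [e1, neg_ne_zero]; exact mul_ne_zero hq2.ne_zero hq.ne_zero
          obtain ⟨r, hr⟩ := exists_typ hC hB hcr hz2 hy' hne
          have e2 := prod_arith hq2 hq hr (by rw [e1]; ring)
          have e3 : ⟪x, y - ⟪z, y⟫ • z⟫ = ⟪x, y⟫ := by
            rw [inner_sub_right, inner_smul_right, hxz]; ring
          have := ih p _ hy' ⟨z2, r, by
            rw [e2]
            have : (p ^^ (q2 ^^ q)) = ((p ^^ q) ^^ q2) := by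
              cases p <;> cases q <;> cases q2 <;> rfl
            rw [this]; exact hw2, hz2, hr⟩ (by rw [e3]; exact h0)
          rwa [e3] at this
        · have h3 := tri hC hB hcr hz2 hy hz hq2 hq h2
          refine ih p y hy ⟨z2, _, ?_, hz2, h3⟩ h0
          have : (p ^^ (q2 ^^ q)) = ((p ^^ q) ^^ q2) := by
            cases p <;> cases q <;> cases q2 <;> rfl
          rw [this]; exact hw2
    · have h1 := ih _ z hz hw hxz
      have := tri hC hB hcr hx hy hz h1 hq h0
      simpa using this

theorem walk_act (hC : D.IsComp C) (hB : Big C) (hcr : Crys D C) {x v : V} {p : Bool}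
    (hv : D.Root C v) (g : D.W) (h : ∃ n, Wk D C n p x v) : ∃ n, Wk D C n p x (D.ρ g v) := by
  induction g using D.word_induction with
  | h1 => rwa [rho_one]
  | h2 s hs g ih =>
    obtain ⟨n, hn⟩ := ih
    rw [rho_mul]
    have hgv := hv.act g
    by_cases hsC : s ∈ C
    · by_cases h0 : ⟪D.aa s, D.ρ g v⟫ = 0
      · rw [D.rho_simple hs, h0, zero_smul, sub_zero]; exact ⟨n, hn⟩
      · have h0' : ⟪D.ρ g v, D.aa s⟫ ≠ 0 := by rwa [real_inner_comm]
        obtain ⟨q, hq⟩ := exists_typ hC hB hcr hgv (root_aa' hsC) h0'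
        refine ⟨n + 1 + 1, D.aa s, q, ⟨D.ρ g v, q, ?_, hgv, hq⟩, root_aa' hsC, ?_⟩
        · simpa using hn
        · have : ⟪D.aa s, D.ρ s (D.ρ g v)⟫ = -⟪D.ρ g v, D.aa s⟫ := by
            rw [D.rho_simple hs, inner_sub_right, inner_smul_right, D.aa_sq hs, real_inner_comm]
            ring
          rw [this]
          unfold Typ
          rw [neg_sq]
          exact hq
    · rw [D.rho_simple hs, span_orth hC hs hsC (hgv.mem_span hC), zero_smul, sub_zero]
      exact ⟨n, hn⟩

theorem typ_const (hC : D.IsComp C) (hB : Big C) (hcr : Crys D C) {x v : V} (hx : D.Root C x)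
    (hv : D.Root C v) {p : Bool} (h : Typ p ⟪x, v⟫) (g : D.W) (h0 : ⟪x, D.ρ g v⟫ ≠ 0) :
    Typ p ⟪x, D.ρ g v⟫ := by
  obtain ⟨n, hn⟩ := walk_act hC hB hcr hv g (x := x) (p := p) ⟨1, x, p, ⟨rfl, by simp⟩, hx, h⟩
  exact walk_typ hC hB hcr hx n p _ (hv.act g) hn h0

/-- stabilizer transitivity -/
theorem crys_trans (hC : D.IsComp C) (hB : Big C) (hcr : Crys D C) {x v0 : V} (hx : D.Root C x)
    (hv0 : D.Root C v0) (g : D.W) (hk : ⟪x, D.ρ g v0⟫ = ⟪x, v0⟫)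
    (hk2 : ⟪x, v0⟫ ^ 2 = 1 ∨ ⟪x, v0⟫ ^ 2 = 2) :
    ∃ h : D.W, (D.ρ h x = x ∧ D.ρ h v0 = D.ρ g v0) ∨ (D.ρ h x = -x ∧ D.ρ h v0 = -D.ρ g v0) := by
  set v := D.ρ g v0 with hv
  have hvr : D.Root C v := hv0.act g
  have hint : ⟪v, v0⟫ = 0 ∨ ⟪v, v0⟫ = 1 ∨ ⟪v, v0⟫ = -1 ∨ ⟪v, v0⟫ = 2 ∨ ⟪v, v0⟫ = -2 := by
    by_cases h0 : ⟪v, v0⟫ = 0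
    · exact Or.inl h0
    have h1 : Typ false ⟪v, v⟫ := Or.inl ⟨rfl, Or.inr (by rw [hvr.sq hC]; norm_num)⟩
    have h2 := typ_const hC hB hcr hvr hvr h1 g⁻¹ (by rw [hv, rho_inv_rho]; exact h0)
    rw [hv, rho_inv_rho, ← hv] at h2
    rcases h2 with ⟨_, h2 | h2⟩ | ⟨h2, _⟩
    · rcases sq_eq_one_iff.1 h2 with h | h <;> simp [h]
    · have : (⟪v, v0⟫ - 2) * (⟪v, v0⟫ + 2) = 0 := by linear_combination h2
      rcases mul_eq_zero.1 this with h | h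
      · right; right; right; left; linarith
      · right; right; right; right; linarith
    · exact absurd h2 (by simp)
  have good : ∀ v1, D.Root C v1 → ⟪x, v⟫ = ⟪x, v1⟫ → ⟪v, v1⟫ = 2 ∨ ⟪v, v1⟫ = 1 →
      ∃ h : D.W, D.ρ h x = x ∧ D.ρ h v1 = v := by
    intro v1 hv1 hxv hc
    rcases hc with hc | hc
    · exact ⟨1, rho_one _ _, by rw [rho_one]; exact (eq_of_inner_two hC hvr hv1 hc).symm⟩
    · have hr := hv1.refl hC hvr
      rw [real_inner_comm, hc, one_smul] at hr
      obtain ⟨R, hR⟩ := hr.exR hC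
      refine ⟨R, ?_, ?_⟩
      · rw [hR, real_inner_comm, inner_sub_right, hxv, sub_self, zero_smul, sub_zero]
      · rw [hR, inner_sub_left, hc, hv1.sq hC]
        module
  obtain ⟨Rx, hRx⟩ := hx.exR hC
  have second : (⟪v, v0⟫ = ⟪x, v0⟫ ^ 2 - 2 ∨ ⟪v, v0⟫ = ⟪x, v0⟫ ^ 2 - 1) →
      ∃ h : D.W, (D.ρ h x = x ∧ D.ρ h v0 = v) ∨ (D.ρ h x = -x ∧ D.ρ h v0 = -v) := by
    intro hc
    have hv1 := (hx.refl hC hv0).neg hC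
    have e1 : ⟪x, -(v0 - ⟪x, v0⟫ • x)⟫ = ⟪x, v0⟫ := by
      rw [inner_neg_right, inner_sub_right, inner_smul_right, hx.sq hC]; ring
    have e2 : ⟪v, -(v0 - ⟪x, v0⟫ • x)⟫ = ⟪x, v0⟫ ^ 2 - ⟪v, v0⟫ := by
      rw [inner_neg_right, inner_sub_right, inner_smul_right, real_inner_comm x v, hk]; ring
    obtain ⟨h, h1, h2⟩ := good _ hv1 (by rw [hk, e1]) (by
      rw [e2]; rcases hc with hc | hc
      · left; linarith
      · right; linarith)
    refine ⟨h * Rx, Or.inr ⟨?_, ?_⟩⟩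
    · rw [rho_mul, hRx, hx.sq hC, two_smul]
      rw [sub_add_cancel_left, map_neg, h1]
    · rw [rho_mul, hRx]
      rw [map_neg] at h2
      rw [← h2, neg_neg]
  have bad : ⟪v, v0⟫ = -2 → False := by
    intro h
    have : v = -v0 := eq_of_inner_two hC hvr (hv0.neg hC) (by rw [inner_neg_right, h]; norm_num)
    rw [this, inner_neg_right] at hk
    have : ⟪x, v0⟫ = 0 := by linarith
    rw [this] at hk2; norm_num at hk2
  have gd : (⟪v, v0⟫ = 2 ∨ ⟪v, v0⟫ = 1) →
      ∃ h : D.W, (D.ρ h x = x ∧ D.ρ h v0 = v) ∨ (D.ρ h x = -x ∧ D.ρ h v0 = -v) := by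
    intro hc
    obtain ⟨h, h1⟩ := good v0 hv0 hk hc
    exact ⟨h, Or.inl h1⟩
  rcases hint with h | h | h | h | h
  · apply second
    rw [h]
    rcases hk2 with e | e <;> rw [e] <;> norm_num
  · exact gd (Or.inr h)
  · rcases hk2 with e | e
    · apply second; rw [h, e]; norm_num
    · exfalso
      -- inner product 3 is impossible
      have hv1 := (hx.refl hC hv0).neg hC
      have e2 : ⟪v, -(v0 - ⟪x, v0⟫ • x)⟫ = ⟪x, v0⟫ ^ 2 - ⟪v, v0⟫ := by
        rw [inner_neg_right, inner_sub_right, inner_smul_right, real_inner_comm x v, hk]; ring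
      rw [h, e] at e2
      have := crys_list hC hB hcr hvr hv1
      rw [e2] at this
      norm_num at this
  · exact gd (Or.inl h)
  · exact absurd h bad

end Crys
end CoxeterRootSystem

namespace CoxeterRootSystem
section Crys2
variable {V : Type} [NormedAddCommGroup V] [InnerProductSpace ℝ V] {D : CoxeterRootSystem V}
  {C : Set D.W}

theorem rho_mul_self {s : D.W} (hs : s ∈ D.S) (w : D.W) :
    D.ρ (w * s) (D.aa s) = - D.ρ w (D.aa s) := by
  rw [rho_mul, D.rho_neg_self hs, map_neg]

theorem crys_sq_eq (hC : D.IsComp C) (hB : Big C) (hcr : Crys D C) {t s : D.W} (ht : t ∈ C)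
    (hs : s ∈ C) {w w' : D.W}
    (h1 : ⟪D.aa t, D.ρ w (D.aa s)⟫ ^ 2 = 1 ∨ ⟪D.aa t, D.ρ w (D.aa s)⟫ ^ 2 = 2)
    (h2 : ⟪D.aa t, D.ρ w' (D.aa s)⟫ ^ 2 = 1 ∨ ⟪D.aa t, D.ρ w' (D.aa s)⟫ ^ 2 = 2) :
    ⟪D.aa t, D.ρ w (D.aa s)⟫ ^ 2 = ⟪D.aa t, D.ρ w' (D.aa s)⟫ ^ 2 := by
  have e : D.ρ (w' * w⁻¹) (D.ρ w (D.aa s)) = D.ρ w' (D.aa s) := by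
    rw [← rho_mul, inv_mul_cancel_right]
  have hn : ⟪D.aa t, D.ρ w' (D.aa s)⟫ ≠ 0 := by
    intro h; rw [h] at h2; norm_num at h2
  rcases h1 with h1 | h1
  · have := typ_const hC hB hcr (root_aa' ht) (root_aa w hs) (p := false) (Or.inl ⟨rfl, Or.inl h1⟩)
      (w' * w⁻¹) (by rwa [e])
    rw [e] at this
    rcases this with ⟨_, h | h⟩ | ⟨h, _⟩
    · rw [h1, h]
    · rw [h] at h2; norm_num at h2
    · exact absurd h (by simp)
  · have := typ_const hC hB hcr (root_aa' ht) (root_aa w hs) (p := true) (Or.inr ⟨rfl, h1⟩)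
      (w' * w⁻¹) (by rwa [e])
    rw [e] at this
    rcases this with ⟨h, _⟩ | ⟨_, h⟩
    · exact absurd h (by simp)
    · rw [h1, h]

theorem crys_shell (hC : D.IsComp C) (hB : Big C) (hcr : Crys D C) {t s : D.W} (ht : t ∈ C)
    (hs : s ∈ C) {w w' : D.W}
    (h1 : ⟪D.aa t, D.ρ w (D.aa s)⟫ ^ 2 = 1 ∨ ⟪D.aa t, D.ρ w (D.aa s)⟫ ^ 2 = 2)
    (h2 : ⟪D.aa t, D.ρ w' (D.aa s)⟫ ^ 2 = 1 ∨ ⟪D.aa t, D.ρ w' (D.aa s)⟫ ^ 2 = 2) :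
    D.TT t w s ↔ D.TT t w' s := by
  have hsS := hC.sub s hs
  have htS := hC.sub t ht
  have main : ∀ u, ⟪D.aa t, D.ρ u (D.aa s)⟫ = ⟪D.aa t, D.ρ w (D.aa s)⟫ →
      (D.TT t w s ↔ D.TT t u s) := by
    intro u hu
    have e : D.ρ (u * w⁻¹) (D.ρ w (D.aa s)) = D.ρ u (D.aa s) := by
      rw [← rho_mul, inv_mul_cancel_right]
    obtain ⟨h, hh⟩ := crys_trans hC hB hcr (root_aa' ht) (root_aa w hs) (u * w⁻¹)
      (by rw [e, hu]) h1
    rw [e] at hh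
    rcases hh with ⟨a, b⟩ | ⟨a, b⟩
    · exact D.TT_conj htS hsS (Or.inl a) (Or.inl b)
    · exact D.TT_conj htS hsS (Or.inr a) (Or.inr b)
  have hsq := crys_sq_eq hC hB hcr ht hs h1 h2
  rcases sq_eq_sq_iff_eq_or_eq_neg.1 hsq with h | h
  · exact main w' h.symm
  · rw [main (w' * s) (by rw [rho_mul_self hsS, inner_neg_right, h])]
    exact D.TT_congr hsS (Or.inr (rho_mul_self hsS _))

/-- a minimal connecting word has no repetitions -/
theorem nodup_word (D : CoxeterRootSystem V) {s : D.W} (hs : s ∈ D.S) : ∀ n : ℕ, ∀ t ∈ D.S, t ≠ s →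
    (∃ l, D.IsWord l ∧ l.length = n ∧ ⟪D.aa t, D.ρ l.prod (D.aa s)⟫ ≠ 0) →
    (∀ l, D.IsWord l → l.length < n → ⟪D.aa t, D.ρ l.prod (D.aa s)⟫ = 0) →
    ∃ l, D.IsWord l ∧ ⟪D.aa t, D.ρ l.prod (D.aa s)⟫ ≠ 0 ∧ (t :: l ++ [s]).Nodup ∧
      l.length = n ∧
      ∀ u ∈ l, ∃ m, D.IsWord m ∧ m.length < n ∧ ⟪D.aa u, D.ρ m.prod (D.aa s)⟫ ≠ 0 := by
  intro n
  induction n with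
  | zero =>
    rintro t ht hts ⟨l, hl, hn, hc⟩ _
    rw [List.length_eq_zero_iff] at hn
    subst hn
    exact ⟨[], hl, hc, by simpa using hts, rfl, by simp⟩
  | succ n ih =>
    rintro t ht hts ⟨l, hl, hn, hc⟩ hmin
    have key : ∀ u ∈ D.S, ∀ m, D.IsWord m → m.length ≤ n → ⟪D.aa t, D.ρ (u :: m).prod (D.aa s)⟫ =
        - (⟪D.aa u, D.ρ m.prod (D.aa s)⟫ * ⟪D.aa t, D.aa u⟫) := by
      intro u hu m hm hmn
      rw [List.prod_cons, rho_mul, D.rho_simple hu, inner_sub_right, inner_smul_right,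
        hmin m hm (by omega), zero_sub]
    obtain ⟨u, l', rfl⟩ := List.exists_cons_of_length_eq_add_one hn
    rw [isWord_cons] at hl
    simp only [List.length_cons, Nat.add_right_cancel_iff] at hn
    rw [key u hl.1 l' hl.2 hn.le, neg_ne_zero] at hc
    have hc1 := left_ne_zero_of_mul hc
    have hc2 := right_ne_zero_of_mul hc
    have hus : u ≠ s := by
      rintro rfl
      exact hc2 (hmin [] (by simp [IsWord]) (by simp) |> fun h => by simpa [rho_one] using h)
    obtain ⟨m, hm, hmc, hmn, hml, hmd⟩ := ih u hl.1 hus ⟨l', hl.2, hn, hc1⟩ (by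
      intro m hm hmn
      by_contra h
      have := key u hl.1 m hm hmn.le
      rw [hmin (u :: m) (isWord_cons D |>.2 ⟨hl.1, hm⟩) (by simpa using hmn)] at this
      rw [eq_comm, neg_eq_zero] at this
      exact mul_ne_zero h hc2 this)
    have hd : ∀ x ∈ u :: m, ∃ m', D.IsWord m' ∧ m'.length < n + 1 ∧
        ⟪D.aa x, D.ρ m'.prod (D.aa s)⟫ ≠ 0 := by
      intro x hx
      rcases List.mem_cons.1 hx with rfl | hx
      · exact ⟨m, hm, by omega, hmc⟩
      · obtain ⟨m', a, b, c⟩ := hmd x hx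
        exact ⟨m', a, by omega, c⟩
    refine ⟨u :: m, isWord_cons D |>.2 ⟨hl.1, hm⟩, ?_, ?_, by simp [hml], hd⟩
    · rw [key u hl.1 m hm hml.le, neg_ne_zero]; exact mul_ne_zero hmc hc2
    · have : (t :: (u :: m) ++ [s]) = t :: (u :: m ++ [s]) := rfl
      rw [this, List.nodup_cons]
      refine ⟨?_, hmn⟩
      intro hx
      rcases List.mem_append.1 hx with h | h
      · obtain ⟨m', a, b, c⟩ := hd t h
        exact c (hmin m' a b)
      · exact hts (by simpa using h)

theorem par_of_four (hC : D.IsComp C) {t s : D.W} (ht : t ∈ C) (hs : s ∈ C) {w : D.W}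
    (h : ⟪D.aa t, D.ρ w (D.aa s)⟫ ^ 2 = 4) : t * w = w * s := by
  have : (⟪D.aa t, D.ρ w (D.aa s)⟫ - 2) * (⟪D.aa t, D.ρ w (D.aa s)⟫ + 2) = 0 := by
    linear_combination h
  apply D.comm_of_par (hC.sub t ht) (hC.sub s hs)
  rcases mul_eq_zero.1 this with h | h
  · left; exact (eq_of_inner_two hC (root_aa' ht) (root_aa w hs) (by linarith)).symm
  · right
    have := eq_of_inner_two hC (root_aa' ht) ((root_aa w hs).neg hC)
      (by rw [inner_neg_right]; linarith)
    rw [this, neg_neg]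

/-- `T t w s` when `t ≠ s` -/
theorem crys_TT_ne (hC : D.IsComp C) (hB : Big C) (hcr : Crys D C) {t s : D.W} (ht : t ∈ C)
    (hs : s ∈ C) (hts : t ≠ s) (w : D.W)
    (h1 : ⟪D.aa t, D.ρ w (D.aa s)⟫ ^ 2 = 1 ∨ ⟪D.aa t, D.ρ w (D.aa s)⟫ ^ 2 = 2) :
    D.TT t w s := by
  classical
  have hsS := hC.sub s hs
  have htS := hC.sub t ht
  have hn : ⟪D.aa t, D.ρ w (D.aa s)⟫ ≠ 0 := by
    intro h; rw [h] at h1; norm_num at h1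
  have hex : ∃ n, ∃ l, D.IsWord l ∧ l.length = n ∧ ⟪D.aa t, D.ρ l.prod (D.aa s)⟫ ≠ 0 := by
    obtain ⟨l, hl, hlp⟩ := D.exists_word w
    exact ⟨_, l, hl, rfl, by rwa [hlp]⟩
  obtain ⟨l, hl, hc, hnd, _⟩ := nodup_word D hsS (Nat.find hex) t htS hts (Nat.find_spec hex) (by
    intro l hl hlt
    by_contra h
    exact Nat.find_min hex hlt ⟨l, hl, rfl, h⟩)
  have hword : D.IsWord (t :: l ++ [s]) := by
    intro x hx
    simp at hx
    rcases hx with rfl | hx | rfl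
    · exact htS
    · exact hl x hx
    · exact hsS
  have hE := D.exact_of_nodup hword hnd
  rw [crys_shell hC hB hcr ht hs (w' := l.prod) h1 ?_]
  · exact D.TT_of_exact hE
  · rcases crys_list hC hB hcr (root_aa' ht) (root_aa l.prod hs) with h | h | h | h
    · exfalso
      have h2 := par_of_four hC ht hs h
      have h3 := hE.2
      have h4 : (t :: l ++ [s]).prod = l.prod := by
        simp only [List.prod_cons, List.prod_append, List.cons_append, List.prod_nil, mul_one]
        rw [← mul_assoc, h2, D.mul_cancel_self hsS]
      rw [h4] at h3
      have := D.len_le hl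
      simp at h3
      omega
    · exact absurd h hc
    · exact Or.inl h
    · exact Or.inr h

/-- failure of `T t w t` makes the sign symmetric -/
theorem PP_symm_of_not_TT {t : D.W} (ht : t ∈ D.S) {w : D.W} (h : ¬ D.TT t w t) :
    D.PP t (D.ρ w (D.aa t)) ↔ D.PP t (D.ρ w⁻¹ (D.aa t)) := by
  rw [← D.pos_iff ht, ← D.pos_iff ht]
  have e : D.len (w⁻¹ * t) = D.len (t * w) := by
    rw [← D.len_inv (t * w), mul_inv_rev, D.inv_simple ht]
  rw [D.TT_iff ht] at h
  rw [e, D.len_inv]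
  have h1 := D.len_mul_right ht w
  have h2 := D.len_mul_left ht w
  have h3 := D.len_mul_right ht (t * w)
  have h4 := D.len_mul_left ht (w * t)
  rw [← mul_assoc] at h4
  omega

theorem crys_TT_eq (hC : D.IsComp C) (hB : Big C) (hcr : Crys D C) {s : D.W}
    (hs : s ∈ C) (w0 : D.W)
    (h1 : ⟪D.aa s, D.ρ w0 (D.aa s)⟫ ^ 2 = 1 ∨ ⟪D.aa s, D.ρ w0 (D.aa s)⟫ ^ 2 = 2) :
    D.TT s w0 s := by
  have hsS := hC.sub s hs
  have hss : Typ false ⟪D.aa s, D.aa s⟫ :=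
    Or.inl ⟨rfl, Or.inr (by rw [D.aa_sq hsS]; norm_num)⟩
  have hw0 : ⟪D.aa s, D.ρ w0 (D.aa s)⟫ ^ 2 = 1 := by
    have := typ_const hC hB hcr (root_aa' hs) (root_aa' hs) hss w0
      (by intro h; rw [h] at h1; norm_num at h1)
    rcases this with ⟨_, h | h⟩ | ⟨h, _⟩
    · exact h
    · rw [h] at h1; norm_num at h1
    · exact absurd h (by simp)
  -- a neighbour
  obtain ⟨q, hq, hqs, hcq⟩ : ∃ q ∈ C, q ≠ s ∧ ⟪D.aa s, D.aa q⟫ ≠ 0 := by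
    by_contra hno
    have hall : ∀ u ∈ C, u = s := by
      apply hC.conn (fun u => u = s) ⟨s, hs, rfl⟩
      rintro t _ u hu htu rfl
      by_contra hus
      exact hno ⟨u, hu, hus, htu⟩
    obtain ⟨a, ha, b, hb, c, hc, hab, _⟩ := hB
    exact hab ((hall a ha).trans (hall b hb).symm)
  have hqS := hC.sub q hq
  rcases crys_list hC hB hcr (root_aa' hs) (root_aa' hq) with h | h | h | h
  · exfalso
    have := par_of_four hC hs hq (w := 1) (by rwa [rho_one])
    simp at this
    exact hqs this.symm
  · exact absurd h hcq
  · -- simple bond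
    have hE : D.Exact [s, q, s] := by
      refine D.exact_crit (F := [s, q]) ?_ ?_ ?_ ?_ ?_ (by simp) (Or.inl (by simp))
      · intro x hx; simp at hx; rcases hx with rfl | rfl | rfl <;> assumption
      · simpa using hqs.symm
      · intro x hx; simp at hx ⊢; tauto
      · intro x hx; simp at hx; rcases hx with rfl | rfl <;> assumption
      · intro x hx
        simp at hx
        rcases hx with rfl | rfl
        · refine ⟨D.aa q, ?_⟩
          have e : D.ρ [x, q, x].prod (D.aa q) = ⟪D.aa x, D.aa q⟫ • D.aa x := by
            have : [x, q, x].prod = x * (q * x) := by simp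
            rw [this, rho_mul, rho_mul, D.rho_simple hsS (D.aa q), map_sub, map_smul,
              D.rho_simple hqS (D.aa x), D.rho_neg_self hqS, map_sub, map_smul, map_sub, map_smul,
              map_neg, D.rho_neg_self hsS, D.rho_simple hsS (D.aa q),
              real_inner_comm (D.aa x) (D.aa q)]
            generalize ⟪D.aa x, D.aa q⟫ = c at h ⊢
            rcases sq_eq_one_iff.1 h with rfl | rfl <;> module
          rw [e, co_smul, D.co_aa hsS hsS, D.co_aa hsS hqS, if_pos rfl, if_neg hqs.symm, mul_one]
          exact hcq
        · apply D.supp_of_once hqS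
          · intro y hy; simp at hy; rcases hy with rfl | rfl | rfl <;> assumption
          · simp [hqs.symm]
    have hT : D.TT s [q].prod s := D.TT_of_exact hE
    rw [crys_shell hC hB hcr hs hs h1 (w' := [q].prod) ?_]
    · exact hT
    · left
      rw [List.prod_singleton, D.rho_simple hqS, inner_sub_right, inner_smul_right, D.aa_sq hsS,
        real_inner_comm (D.aa s) (D.aa q)]
      have e : ⟪D.aa s, D.aa q⟫ * ⟪D.aa s, D.aa q⟫ = 1 := by rw [← h]; ring
      rw [e]; norm_num
  · -- double bond
    by_contra hF
    have hfail : ∀ w, ⟪D.aa s, D.ρ w (D.aa s)⟫ ^ 2 = 1 → ¬ D.TT s w s := by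
      intro w hw
      rwa [crys_shell hC hB hcr hs hs (w' := w0) (Or.inl hw) h1]
    have hdet : ∀ w w', ⟪D.aa s, D.ρ w (D.aa s)⟫ ^ 2 = 1 →
        ⟪D.aa s, D.ρ w' (D.aa s)⟫ = ⟪D.aa s, D.ρ w (D.aa s)⟫ →
        (D.PP s (D.ρ w (D.aa s)) ↔ D.PP s (D.ρ w' (D.aa s))) := by
      intro w w' hw hww
      have e : D.ρ (w' * w⁻¹) (D.ρ w (D.aa s)) = D.ρ w' (D.aa s) := by
        rw [← rho_mul, inv_mul_cancel_right]
      obtain ⟨h, hh⟩ := crys_trans hC hB hcr (root_aa' hs) (root_aa w hs) (w' * w⁻¹)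
        (by rw [e, hww]) (Or.inl hw)
      rw [e] at hh
      have f : ∀ x : V, D.ρ h x = D.aa s → D.ρ (h * w)⁻¹ (D.aa s) = D.ρ w⁻¹ x := by
        intro x hx
        rw [← hx, ← rho_mul, mul_inv_rev, inv_mul_cancel_right]
      rw [PP_symm_of_not_TT hsS (hfail w hw)]
      rcases hh with ⟨a, b⟩ | ⟨a, b⟩
      · rw [← rho_mul] at b
        have hw2 : ⟪D.aa s, D.ρ (h * w) (D.aa s)⟫ ^ 2 = 1 := by rw [b, hww, hw]
        rw [← b, PP_symm_of_not_TT hsS (hfail _ hw2), f _ a]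
      · rw [← rho_mul] at b
        have hw2 : ⟪D.aa s, D.ρ (h * w) (D.aa s)⟫ ^ 2 = 1 := by
          rw [b, inner_neg_right, neg_sq, hww, hw]
        have := PP_symm_of_not_TT hsS (hfail _ hw2)
        rw [b, D.PP_neg hsS, f (-D.aa s) (by rw [map_neg, a, neg_neg]), map_neg,
          D.PP_neg hsS] at this
        exact (not_iff_not.1 this).symm
    have fin : ∀ w, ⟪D.aa s, D.ρ w (D.aa s)⟫ ^ 2 = 1 → ⟪D.aa q, D.ρ w (D.aa s)⟫ ≠ 0 → False := by
      intro w hw hqw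
      have hsw : Typ false ⟪D.aa s, D.ρ w (D.aa s)⟫ := Or.inl ⟨rfl, Or.inl hw⟩
      have hqs' : Typ true ⟪D.aa q, D.aa s⟫ := Or.inr ⟨rfl, by rw [real_inner_comm]; exact h⟩
      have hty := typ_const hC hB hcr (root_aa' hq) (root_aa' hs) hqs' w hqw
      have hq2 : ⟪D.aa q, D.ρ w (D.aa s)⟫ ^ 2 = 2 := by
        rcases hty with ⟨h, _⟩ | ⟨_, h⟩
        · exact absurd h (by simp)
        · exact h
      have hT := crys_TT_ne hC hB hcr hq hs hqs w (Or.inr hq2)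
      have e : ⟪D.aa s, D.ρ (q * w) (D.aa s)⟫ = ⟪D.aa s, D.ρ w (D.aa s)⟫ -
          ⟪D.aa q, D.ρ w (D.aa s)⟫ * ⟪D.aa s, D.aa q⟫ := by
        rw [rho_mul, D.rho_simple hqS, inner_sub_right, inner_smul_right]
      have hneg : ⟪D.aa s, D.ρ (q * w) (D.aa s)⟫ = -⟪D.aa s, D.ρ w (D.aa s)⟫ := by
        have hl := crys_list hC hB hcr (root_aa' hs) (root_aa (q * w) hs)
        rw [e] at hl ⊢
        have hm : (⟪D.aa q, D.ρ w (D.aa s)⟫ * ⟪D.aa s, D.aa q⟫) ^ 2 = 4 := by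
          rw [mul_pow, hq2, h]; norm_num
        generalize ⟪D.aa q, D.ρ w (D.aa s)⟫ * ⟪D.aa s, D.aa q⟫ = m at hm hl ⊢
        have : (m - 2) * (m + 2) = 0 := by linear_combination hm
        rcases sq_eq_one_iff.1 hw with hw | hw <;> rw [hw] at hl ⊢ <;>
          rcases mul_eq_zero.1 this with hm | hm
        · have : m = 2 := by linarith
          rw [this]; norm_num
        · have : m = -2 := by linarith
          rw [this] at hl; norm_num at hl
        · have : m = 2 := by linarith
          rw [this] at hl; norm_num at hl
        · have : m = -2 := by linarith
          rw [this]; norm_num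
      have h5 := hdet w (q * w * s) hw (by
        rw [rho_mul_self hsS, inner_neg_right, hneg, neg_neg])
      rw [rho_mul_self hsS, D.PP_neg hsS] at h5
      unfold TT at hT
      tauto
    by_cases h0 : ⟪D.aa q, D.ρ w0 (D.aa s)⟫ = 0
    · apply fin (s * w0)
      · rw [rho_mul, D.rho_simple hsS, inner_sub_right, inner_smul_right, D.aa_sq hsS]
        rw [← hw0]; ring
      · rw [rho_mul, D.rho_simple hsS, inner_sub_right, inner_smul_right, h0, zero_sub, neg_ne_zero]
        refine mul_ne_zero ?_ ?_
        · intro h; rw [h] at hw0; norm_num at hw0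
        · rw [real_inner_comm]; exact hcq
    · exact fin w0 hw0 h0

theorem key_crys (hC : D.IsComp C) (hB : Big C) (hcr : Crys D C) {s : D.W} (hs : s ∈ C) :
    D.Key s := by
  apply key_of_comp hC hs
  intro t ht w
  have hTT : (⟪D.aa t, D.ρ w (D.aa s)⟫ ^ 2 = 1 ∨ ⟪D.aa t, D.ρ w (D.aa s)⟫ ^ 2 = 2) →
      D.TT t w s := by
    intro h
    by_cases hts : t = s
    · subst hts; exact crys_TT_eq hC hB hcr ht w h
    · exact crys_TT_ne hC hB hcr ht hs hts w h
  rcases crys_list hC hB hcr (root_aa' ht) (root_aa w hs) with h | h | h | h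
  · exact Or.inr (par_of_four hC ht hs h)
  · exact Or.inl (D.TT_of_orth (hC.sub t ht) h)
  · exact Or.inl (hTT (Or.inl h))
  · exact Or.inl (hTT (Or.inr h))

end Crys2
end CoxeterRootSystem

namespace CoxeterRootSystem
section Exact2
variable {V : Type} [NormedAddCommGroup V] [InnerProductSpace ℝ V] (D : CoxeterRootSystem V)

theorem not_reduced_of_twice {s : D.W} (hs : s ∈ D.S) {l : List D.W} (hl : D.IsWord l)
    (h : l.count s = 2) (hn : ¬ D.Supp l.prod s) : D.len l.prod < l.length := by
  have hm : s ∈ l := List.count_pos_iff.1 (by omega)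
  obtain ⟨l1, l2, rfl⟩ := List.append_of_mem hm
  have hnd : ∃ A B E : List D.W, l1 ++ s :: l2 = A ++ s :: (B ++ s :: E) := by
    by_cases h1 : s ∈ l1
    · obtain ⟨A, B, rfl⟩ := List.append_of_mem h1
      exact ⟨A, B, l2, by simp⟩
    · rw [List.count_append, List.count_cons_self, List.count_eq_zero.2 h1] at h
      have h2 : s ∈ l2 := List.count_pos_iff.1 (by omega)
      obtain ⟨B, E, rfl⟩ := List.append_of_mem h2
      exact ⟨l1, B, E, by simp⟩
  obtain ⟨A, B, E, he⟩ := hnd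
  rw [he] at hl hn h ⊢
  simp only [List.count_append, List.count_cons_self] at h
  have hA : s ∉ A := List.count_eq_zero.1 (by omega)
  have hB : s ∉ B := List.count_eq_zero.1 (by omega)
  have hE : s ∉ E := List.count_eq_zero.1 (by omega)
  have wA : D.IsWord A := fun x hx => hl x (by simp [hx])
  have wB : D.IsWord B := fun x hx => hl x (by simp [hx])
  have wE : D.IsWord E := fun x hx => hl x (by simp [hx])
  have hfix : D.ρ B.prod (D.aa s) = D.aa s := by
    have key : ∀ v, ⟪D.aa s, D.ρ B.prod (D.ρ s v)⟫ = - ⟪D.aa s, v⟫ := by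
      intro v
      have h0 : D.co s (D.ρ (A ++ s :: (B ++ s :: E)).prod (D.ρ E.prod⁻¹ v)) =
          D.co s (D.ρ E.prod⁻¹ v) := by
        by_contra hc
        exact hn ⟨_, hc⟩
      rw [D.word_inv wE, D.co_word hs (fun x hx => wE x (List.mem_reverse.1 hx))
        (by simpa using hE), ← D.word_inv wE, List.prod_append, List.prod_cons,
        List.prod_append, List.prod_cons, rho_mul, rho_mul, rho_mul, rho_mul, rho_rho_inv,
        D.co_word hs wA hA, D.rho_simple hs (D.ρ B.prod _), co_sub, co_smul,
        D.co_word hs wB hB, D.rho_simple hs v, co_sub, co_smul, D.co_aa hs hs, if_pos rfl] at h0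
      rw [D.rho_simple hs v]
      linarith
    have k := key (D.aa s)
    rw [D.rho_neg_self hs, map_neg, inner_neg_right, D.aa_sq hs] at k
    have : ⟪D.aa s - D.ρ B.prod (D.aa s), D.aa s - D.ρ B.prod (D.aa s)⟫ = 0 := by
      rw [inner_sub_left, inner_sub_right, inner_sub_right, inner_rho, D.aa_sq hs,
        real_inner_comm]
      rw [real_inner_comm] at k
      rw [real_inner_comm]
      have k' := k
      rw [real_inner_comm] at k'
      linarith
    exact (sub_eq_zero.1 (inner_self_eq_zero.1 this)).symm
  have hcomm := D.comm_of_par hs hs (w := B.prod) (Or.inl hfix)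
  have hp : (A ++ s :: (B ++ s :: E)).prod = (A ++ (B ++ E)).prod := by
    simp only [List.prod_append, List.prod_cons]
    have : s * (B.prod * (s * E.prod)) = B.prod * E.prod := by
      rw [← mul_assoc, hcomm, mul_assoc, D.mul_self_cancel hs]
    rw [this]
  rw [hp]
  have := D.len_le (l := A ++ (B ++ E)) (fun x hx => hl x (by
    simp only [List.mem_append, List.mem_cons] at hx ⊢; tauto))
  simp only [List.length_append, List.length_cons] at this ⊢
  omega

/-- improved exactness criterion -/
theorem exact_crit2 {l F : List D.W} (hl : D.IsWord l) (hl0 : l ≠ []) (hF : F.Nodup)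
    (hlF : ∀ x ∈ l, x ∈ F)
    (hFs : ∀ x ∈ F, x ∈ D.S) (hsupp : ∀ x ∈ F, D.Supp l.prod x)
    (hlen : l.length ≤ F.length + 4)
    (hc : ∀ l' : List D.W, (∀ x ∈ l', x ∈ F) → l'.length + 2 = l.length → l'.prod ≠ l.prod) :
    D.Exact l := by
  refine ⟨hl, ?_⟩
  have hle := D.len_le hl
  have hpar := D.len_parity hl
  obtain ⟨m, hm, hml, hmp⟩ := D.exists_reduced l.prod
  have hFm : ∀ x ∈ F, x ∈ m := fun x hx =>
    D.mem_of_supp (hFs x hx) hm (hmp ▸ hsupp x hx)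
  by_contra hne
  have hmF : ∀ x ∈ m, x ∈ F := by
    intro x hx
    by_contra hxF
    have hns : ¬ D.Supp m.prod x := by
      intro h
      rw [hmp] at h
      exact hxF (hlF x (D.mem_of_supp (hm x hx) hl h))
    have hx2 : m.count x ≠ 1 := fun h1 => hns (D.supp_of_once (hm x hx) hm h1)
    have hx4 : m.count x ≠ 2 := by
      intro h2
      have := D.not_reduced_of_twice (hm x hx) hm h2 hns
      rw [hmp] at this
      omega
    have hx3 : 0 < m.count x := List.count_pos_iff.2 hx
    have : (x :: x :: x :: F).Subperm m := by
      rw [List.subperm_ext_iff]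
      intro y hy
      by_cases hyx : y = x
      · subst hyx
        rw [List.count_cons_self, List.count_cons_self, List.count_cons_self,
          List.count_eq_zero.2 hxF]; omega
      · rw [List.count_cons_of_ne (Ne.symm hyx), List.count_cons_of_ne (Ne.symm hyx),
          List.count_cons_of_ne (Ne.symm hyx)]
        have hyF : y ∈ F := by simpa [hyx] using hy
        rw [List.count_eq_one_of_mem hF hyF]
        exact List.count_pos_iff.2 (hFm y hyF)
    have := this.length_le
    simp at this
    omega
  obtain ⟨f, hf⟩ := List.exists_mem_of_ne_nil l hl0
  have hpad : ∀ k, (m ++ List.replicate (2 * k) f).prod = l.prod := by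
    intro k
    rw [List.prod_append, hmp, List.prod_replicate, pow_mul, pow_two, D.hS_inv f (hl f hf),
      one_pow, mul_one]
  obtain ⟨k, hk⟩ : ∃ k, m.length + 2 * k + 2 = l.length := ⟨(l.length - m.length - 2) / 2, by omega⟩
  refine hc (m ++ List.replicate (2 * k) f) ?_ (by simp; omega) (hpad k)
  intro x hx
  rcases List.mem_append.1 hx with h | h
  · exact hmF x h
  · rw [List.eq_of_mem_replicate h]; exact hlF f hf

end Exact2
end CoxeterRootSystem

/-- elements `a + b φ` of the golden ring, as pairs of integers -/
abbrev Zp := ℤ × ℤ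

namespace Zp
/-- sum -/
def zadd (x y : Zp) : Zp := (x.1 + y.1, x.2 + y.2)
/-- difference -/
def zsub (x y : Zp) : Zp := (x.1 - y.1, x.2 - y.2)
/-- opposite -/
def zneg (x : Zp) : Zp := (-x.1, -x.2)
/-- product, `φ ^ 2 = φ + 1` -/
def zmul (x y : Zp) : Zp := (x.1 * y.1 + x.2 * y.2, x.1 * y.2 + x.2 * y.1 + x.2 * y.2)
/-- dot product -/
def zdot : List Zp → List Zp → Zp
  | [], _ => (0, 0)
  | _ :: _, [] => (0, 0)
  | a :: u, b :: v => zadd (zmul a b) (zdot u v)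
/-- action of the `i`-th reflection -/
def zact (G : List (List Zp)) (i : ℕ) (v : List Zp) : List Zp :=
  v.set i (zsub (v.getD i (0, 0)) (zdot (G.getD i []) v))
/-- action of a word -/
def zword (G : List (List Zp)) (l : List ℕ) (v : List Zp) : List Zp := l.foldr (zact G) v
/-- basis vector -/
def zb (n i : ℕ) : List Zp := (List.replicate n ((0, 0) : Zp)).set i (1, 0)
/-- negative vector -/
def znegv (v : List Zp) : List Zp := v.map zneg
/-- is the value allowed as an inner product of roots? -/
def zok (c : Zp) : Bool :=
  let d := zmul c c
  (d == (0, 0)) || (d == (1, 0)) || (d == (4, 0)) || (d == (2, 0)) ||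
    (zadd (zsub (zmul d d) (zmul (3, 0) d)) (1, 0) == (0, 0))
/-- all words of given length -/
def zwords (F : List ℕ) : ℕ → List (List ℕ)
  | 0 => [[]]
  | k + 1 => (zwords F k).flatMap fun w => F.map fun i => i :: w
/-- all images of a vector under words of given length -/
def zimgs (G : List (List Zp)) (F : List ℕ) (v : List Zp) : ℕ → List (List Zp)
  | 0 => [v]
  | k + 1 => (zimgs G F v k).flatMap fun w => F.map fun i => zact G i w

/-- evaluation -/
def ev (φ : ℝ) (z : Zp) : ℝ := z.1 + z.2 * φ

variable {φ : ℝ}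

@[simp] theorem ev_add (x y : Zp) : ev φ (zadd x y) = ev φ x + ev φ y := by
  simp [ev, zadd]; ring
@[simp] theorem ev_sub (x y : Zp) : ev φ (zsub x y) = ev φ x - ev φ y := by
  simp [ev, zsub]; ring
@[simp] theorem ev_neg (x : Zp) : ev φ (zneg x) = - ev φ x := by
  simp [ev, zneg]; ring
@[simp] theorem ev_zero : ev φ (0, 0) = 0 := by simp [ev]
@[simp] theorem ev_one : ev φ (1, 0) = 1 := by simp [ev]
theorem ev_mul (h : φ ^ 2 = φ + 1) (x y : Zp) : ev φ (zmul x y) = ev φ x * ev φ y := by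
  simp [ev, zmul]
  linear_combination (-(x.2 : ℝ) * y.2) * h

theorem ev_inj (h : φ ^ 2 = φ + 1) {x y : Zp} (hxy : ev φ x = ev φ y) : x = y := by
  have key : ∀ a b : ℤ, (a : ℝ) + b * φ = 0 → a = 0 ∧ b = 0 := by
    intro a b hab
    have h1 : ((2 * a + b : ℤ) : ℝ) ^ 2 = 5 * (b : ℝ) ^ 2 := by
      push_cast
      linear_combination (4 * (a : ℝ) + 4 * b - 4 * b * φ) * hab + 4 * (b : ℝ) ^ 2 * h
    have hb : b = 0 := by
      by_contra hb
      have h5 : Irrational (√(5 : ℝ)) := by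
        have := Nat.Prime.irrational_sqrt (p := 5) (by norm_num)
        simpa using this
      have hb' : (b : ℝ) ≠ 0 := by exact_mod_cast hb
      apply h5
      refine ⟨|((2 * a + b : ℤ) : ℚ) / b|, ?_⟩
      push_cast
      rw [← Real.sqrt_sq_eq_abs]
      congr 1
      push_cast at h1
      rw [div_pow, h1]
      field_simp
    subst hb
    simp at hab
    exact ⟨hab, rfl⟩
  have := key (x.1 - y.1) (x.2 - y.2) (by
    simp only [ev] at hxy
    push_cast
    linear_combination hxy)
  exact Prod.ext (by omega) (by omega)

theorem zok_of (h : φ ^ 2 = φ + 1) {c : Zp}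
    (hc : ev φ c ^ 2 = 4 ∨ ev φ c ^ 2 = 0 ∨ ev φ c ^ 2 = 1 ∨ ev φ c ^ 2 = 2 ∨
      (ev φ c ^ 2) ^ 2 - 3 * ev φ c ^ 2 + 1 = 0) : zok c = true := by
  have hd : ev φ (zmul c c) = ev φ c ^ 2 := by rw [ev_mul h]; ring
  have e4 : ev φ (4, 0) = 4 := by simp [ev]
  have e2 : ev φ (2, 0) = 2 := by simp [ev]
  have e3 : ev φ (3, 0) = 3 := by simp [ev]
  unfold zok
  simp only [Bool.or_eq_true, beq_iff_eq]
  rcases hc with hc | hc | hc | hc | hc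
  · exact Or.inl (Or.inl (Or.inr (ev_inj h (by rw [hd, hc, e4]))))
  · exact Or.inl (Or.inl (Or.inl (Or.inl (ev_inj h (by rw [hd, hc, ev_zero])))))
  · exact Or.inl (Or.inl (Or.inl (Or.inr (ev_inj h (by rw [hd, hc, ev_one])))))
  · exact Or.inl (Or.inr (ev_inj h (by rw [hd, hc, e2])))
  · right
    apply ev_inj h
    simp only [ev_add, ev_sub, ev_mul h, e3, ev_one, ev_zero]
    linear_combination hc

section vec
variable {V : Type} [NormedAddCommGroup V] [InnerProductSpace ℝ V]

/-- linear combination with golden coefficients -/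
def evv (φ : ℝ) : (ℕ → V) → List Zp → V
  | _, [] => 0
  | x, a :: v => ev φ a • x 0 + evv φ (fun k => x (k + 1)) v

theorem inner_evv (h : φ ^ 2 = φ + 1) (y : V) : ∀ (v : List Zp) (x : ℕ → V) (row : List Zp),
    (∀ j < v.length, ⟪y, x j⟫ = ev φ (row.getD j (0, 0))) →
    ⟪y, evv φ x v⟫ = ev φ (zdot row v) := by
  intro v
  induction v with
  | nil => intro x row _; cases row <;> simp [evv, zdot]
  | cons a v ih =>
    intro x row hr
    rw [evv, inner_add_right, inner_smul_right, hr 0 (by simp)]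
    rw [ih (fun k => x (k + 1)) row.tail]
    · cases row with
      | nil => 
        cases v <;> simp [zdot]
      | cons b row => simp [zdot, ev_mul h]; ring
    · intro j hj
      rw [hr (j + 1) (by simpa using hj)]
      cases row <;> simp

theorem evv_set (i : ℕ) (b : Zp) : ∀ (v : List Zp) (x : ℕ → V), i < v.length →
    evv φ x (v.set i b) = evv φ x v + (ev φ b - ev φ (v.getD i (0, 0))) • x i := by
  induction i with
  | zero =>
    intro v x hi
    cases v with
    | nil => simp at hi
    | cons a v => simp [evv, sub_smul]; abel
  | succ i ih =>
    intro v x hi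
    cases v with
    | nil => simp at hi
    | cons a v =>
      rw [List.set_cons_succ, evv, evv, ih v _ (by simpa using hi)]
      simp; abel

theorem evv_neg : ∀ (v : List Zp) (x : ℕ → V), evv φ x (znegv v) = - evv φ x v := by
  intro v
  induction v with
  | nil => intro x; simp [znegv, evv]
  | cons a v ih =>
    intro x
    have := ih (fun k => x (k + 1))
    simp only [znegv] at this
    simp [znegv, evv, this]; abel

theorem evv_zero : ∀ (n : ℕ) (x : ℕ → V), evv φ x (List.replicate n ((0, 0) : Zp)) = 0 := by
  intro n
  induction n with
  | zero => intro x; simp [evv]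
  | succ n ih => intro x; rw [List.replicate_succ, evv, ih]; simp

theorem evv_zb {n i : ℕ} (hi : i < n) (x : ℕ → V) : evv φ x (zb n i) = x i := by
  rw [zb, evv_set _ _ _ _ (by simpa using hi), evv_zero]
  simp [hi]

end vec

theorem zact_length (G : List (List Zp)) (i : ℕ) (v : List Zp) :
    (zact G i v).length = v.length := by simp [zact]

theorem zword_length (G : List (List Zp)) (l : List ℕ) (v : List Zp) :
    (zword G l v).length = v.length := by
  induction l with
  | nil => rfl
  | cons a l ih => rw [← ih]; exact zact_length _ _ _

theorem zb_length (n i : ℕ) : (zb n i).length = n := by simp [zb]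

theorem mem_zimgs (G : List (List Zp)) (F : List ℕ) (v : List Zp) :
    ∀ l : List ℕ, (∀ i ∈ l, i ∈ F) → zword G l v ∈ zimgs G F v l.length := by
  intro l
  induction l with
  | nil => intro _; simp [zword, zimgs]
  | cons a l ih =>
    intro h
    rw [List.length_cons, zimgs, List.mem_flatMap]
    exact ⟨_, ih (fun i hi => h i (by simp [hi])),
      List.mem_map.2 ⟨a, h a (by simp), rfl⟩⟩

/-- exactness certificate -/
def exactCheck (n : ℕ) (G : List (List Zp)) (F l : List ℕ) (v : List Zp) : Bool :=
  decide F.Nodup && F.all (fun i => decide (i < n)) && l.all (fun i => F.contains i) &&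
    decide (v.length = n) && decide (2 ≤ l.length) && decide (l.length ≤ F.length + 4) &&
    F.all (fun i => decide ((zword G l v).getD i (0, 0) ≠ v.getD i (0, 0))) &&
    (zimgs G F v (l.length - 2 - (l.length - 2) / 2)).all fun u =>
      (zimgs G F (zword G l v) ((l.length - 2) / 2)).all fun u' => u != u'

end Zp

namespace CoxeterRootSystem
open Zp
section H
variable {V : Type} [NormedAddCommGroup V] [InnerProductSpace ℝ V] {D : CoxeterRootSystem V}
variable {C : Set D.W} {φ : ℝ}

/-- a family of letters with a golden Gram matrix -/
structure Frame (D : CoxeterRootSystem V) (C : Set D.W) (φ : ℝ) (n : ℕ) (G : List (List Zp))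
    (a : ℕ → D.W) (x : ℕ → V) : Prop where
  comp : D.IsComp C
  big : Big C
  gold : φ ^ 2 = φ + 1
  mem : ∀ i < n, a i ∈ C
  inj : ∀ i < n, ∀ j < n, a i = a j → i = j
  sgn : ∀ i < n, x i = D.aa (a i) ∨ x i = - D.aa (a i)
  gram : ∀ i < n, ∀ j < n, ⟪x i, x j⟫ = ev φ ((G.getD i []).getD j (0, 0))

namespace Frame
variable {n : ℕ} {G : List (List Zp)} {a : ℕ → D.W} {x : ℕ → V}

theorem act (h : D.Frame C φ n G a x) {i : ℕ} (hi : i < n) {v : List Zp} (hv : v.length = n) :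
    D.ρ (a i) (evv φ x v) = evv φ x (zact G i v) := by
  have hS := h.comp.sub _ (h.mem i hi)
  have e : D.ρ (a i) (evv φ x v) = evv φ x v - ⟪x i, evv φ x v⟫ • x i := by
    rw [D.rho_simple hS]
    rcases h.sgn i hi with e | e <;> rw [e] <;> simp
  rw [e, inner_evv h.gold (x i) v x (G.getD i []) (fun j hj => h.gram i hi j (hv ▸ hj)), zact,
    evv_set _ _ _ _ (by omega), ev_sub]
  rw [sub_eq_add_neg, ← neg_smul]
  congr 2
  ring

theorem word (h : D.Frame C φ n G a x) {l : List ℕ} (hl : ∀ i ∈ l, i < n) {v : List Zp}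
    (hv : v.length = n) : D.ρ (l.map a).prod (evv φ x v) = evv φ x (zword G l v) := by
  induction l with
  | nil => simp [zword]
  | cons b l ih =>
    rw [List.map_cons, List.prod_cons, rho_mul, ih (fun i hi => hl i (by simp [hi])),
      h.act (hl b (by simp)) (by rw [zword_length, hv])]
    rfl

theorem word_b (h : D.Frame C φ n G a x) {l : List ℕ} (hl : ∀ i ∈ l, i < n) {s : ℕ}
    (hs : s < n) : D.ρ (l.map a).prod (x s) = evv φ x (zword G l (zb n s)) := by
  rw [← h.word hl (zb_length n s), evv_zb hs]

theorem co_evv (h : D.Frame C φ n G a x) {i : ℕ} (hi : i < n) {v : List Zp}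
    (hv : v.length = n) : D.co (a i) (evv φ x v) = ev φ (v.getD i (0, 0)) * D.co (a i) (x i) := by
  have gen : ∀ (v : List Zp) (y : ℕ → V) (k : ℕ), 
      (∀ j < v.length, j ≠ k → D.co (a i) (y j) = 0) →
      D.co (a i) (evv φ y v) = ev φ (v.getD k (0, 0)) * D.co (a i) (y k) := by
    intro v
    induction v with
    | nil => intro y k _; simp [evv, co]
    | cons b v ih =>
      intro y k hk
      rw [evv, co_add, co_smul]
      cases k with
      | zero =>
        have : ∀ (v : List Zp) (y : ℕ → V), (∀ j < v.length, D.co (a i) (y j) = 0) →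
            D.co (a i) (evv φ y v) = 0 := by
          intro v
          induction v with
          | nil => intro y _; simp [evv, co]
          | cons b v ih =>
            intro y hy
            rw [evv, co_add, co_smul, hy 0 (by simp),
              ih _ (fun j hj => hy (j + 1) (by simpa using hj))]
            simp
        rw [this v _ (fun j hj => hk (j + 1) (by simpa using hj) (by omega))]
        simp
      | succ k =>
        rw [ih _ k (fun j hj hjk => hk (j + 1) (by simpa using hj) (by omega)),
          hk 0 (by simp) (by omega)]
        simp
  apply gen
  intro j hj hji
  have hj' : j < n := hv ▸ hj
  have e0 : D.co (a i) (D.aa (a j)) = 0 := by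
    rw [D.co_aa (h.comp.sub _ (h.mem i hi)) (h.comp.sub _ (h.mem j hj')), if_neg]
    intro e
    exact hji (h.inj i hi j hj' e).symm
  rcases h.sgn j hj' with e | e <;> rw [e]
  · exact e0
  · rw [← neg_one_smul ℝ, co_smul, e0, mul_zero]

theorem co_ne (h : D.Frame C φ n G a x) {i : ℕ} (hi : i < n) : D.co (a i) (x i) ≠ 0 := by
  have e0 : D.co (a i) (D.aa (a i)) = 1 := by
    rw [D.co_aa (h.comp.sub _ (h.mem i hi)) (h.comp.sub _ (h.mem i hi)), if_pos rfl]
  rcases h.sgn i hi with e | e <;> rw [e]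
  · rw [e0]; norm_num
  · rw [← neg_one_smul ℝ, co_smul, e0]; norm_num

theorem evv_inj (h : D.Frame C φ n G a x) {v w : List Zp} (hv : v.length = n)
    (hw : w.length = n) (e : evv φ x v = evv φ x w) : v = w := by
  apply List.ext_getElem (by omega)
  intro i h1 h2
  have hi : i < n := by omega
  have e1 := h.co_evv hi hv
  rw [e, h.co_evv hi hw] at e1
  have := ev_inj h.gold (mul_right_cancel₀ (h.co_ne hi) e1)
  simpa [List.getD_eq_getElem, h1, h2] using this.symm

theorem root (h : D.Frame C φ n G a x) {i : ℕ} (hi : i < n) : D.Root C (x i) := by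
  rcases h.sgn i hi with e | e <;> rw [e]
  · exact root_aa' (h.mem i hi)
  · exact Root.neg h.comp (root_aa' (h.mem i hi))

theorem exact (h : D.Frame C φ n G a x) {F l : List ℕ} {v : List Zp}
    (hc : exactCheck n G F l v = true) : D.Exact (l.map a) := by
  simp only [exactCheck, Bool.and_eq_true, decide_eq_true_eq, List.all_eq_true,
    List.contains_iff_mem, bne_iff_ne] at hc
  obtain ⟨⟨⟨⟨⟨⟨⟨hF, hFn⟩, hlF⟩, hv⟩, h2⟩, h3⟩, hsupp⟩, himg⟩ := hc
  have hln : ∀ i ∈ l, i < n := fun i hi => hFn i (hlF i hi)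
  refine D.exact_crit2 (F := F.map a) ?_ ?_ ?_ ?_ ?_ ?_ (by simpa using h3) ?_
  · intro y hy
    obtain ⟨i, hi, rfl⟩ := List.mem_map.1 hy
    exact h.comp.sub _ (h.mem i (hln i hi))
  · intro h0
    rw [List.map_eq_nil_iff.1 h0] at h2
    simp at h2
  · exact List.Nodup.map_on (fun i hi j hj e => h.inj i (hFn i hi) j (hFn j hj) e) hF
  · intro y hy
    obtain ⟨i, hi, rfl⟩ := List.mem_map.1 hy
    exact List.mem_map.2 ⟨i, hlF i hi, rfl⟩
  · intro y hy
    obtain ⟨i, hi, rfl⟩ := List.mem_map.1 hy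
    exact h.comp.sub _ (h.mem i (hFn i hi))
  · intro y hy
    obtain ⟨i, hi, rfl⟩ := List.mem_map.1 hy
    have hi' := hFn i hi
    refine ⟨evv φ x v, ?_⟩
    rw [h.word hln hv, h.co_evv hi' hv, h.co_evv hi' (by rw [zword_length, hv])]
    intro e
    exact hsupp i hi (ev_inj h.gold (mul_right_cancel₀ (h.co_ne hi') e))
  · intro l' hl' hlen heq
    obtain ⟨m, hm, rfl⟩ : ∃ m : List ℕ, (∀ i ∈ m, i ∈ F) ∧ m.map a = l' := by
      clear hlen heq
      induction l' with
      | nil => exact ⟨[], by simp, rfl⟩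
      | cons b l' ih =>
        obtain ⟨m, hm, rfl⟩ := ih (fun y hy => hl' y (by simp [hy]))
        obtain ⟨i, hi, rfl⟩ := List.mem_map.1 (hl' b (by simp))
        exact ⟨i :: m, by simpa using ⟨hi, hm⟩, rfl⟩
    have hml : m.length = l.length - 2 := by simp at hlen; omega
    obtain ⟨m1, m2, rfl, hm1⟩ : ∃ m1 m2, m = m1 ++ m2 ∧ m1.length = (l.length - 2) / 2 :=
      ⟨m.take ((l.length - 2) / 2), m.drop ((l.length - 2) / 2),
        (List.take_append_drop _ _).symm, by rw [List.length_take]; omega⟩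
    have hm2 : m2.length = l.length - 2 - (l.length - 2) / 2 := by
      rw [List.length_append] at hml; omega
    have hF1 : ∀ i ∈ m1, i ∈ F := fun i hi => hm i (by simp [hi])
    have hF2 : ∀ i ∈ m2, i ∈ F := fun i hi => hm i (by simp [hi])
    have hF1' : ∀ i ∈ m1.reverse, i ∈ F := fun i hi => hF1 i (List.mem_reverse.1 hi)
    have g2 := mem_zimgs G F v m2 hF2
    have g1 := mem_zimgs G F (zword G l v) m1.reverse hF1'
    rw [hm2] at g2
    rw [List.length_reverse, hm1] at g1
    apply himg _ g2 _ g1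
    apply h.evv_inj (by rw [zword_length, hv]) (by rw [zword_length, zword_length, hv])
    rw [← h.word (fun i hi => hFn i (hF2 i hi)) hv,
      ← h.word (fun i hi => hFn i (hF1' i hi)) (by rw [zword_length, hv]),
      ← h.word hln hv, ← heq, List.map_append, List.prod_append, rho_mul, List.map_reverse,
      ← D.word_inv, rho_inv_rho]
    intro y hy
    obtain ⟨i, hi, rfl⟩ := List.mem_map.1 hy
    exact h.comp.sub _ (h.mem i (hFn i (hF1 i hi)))

end Frame
end H
end CoxeterRootSystem

namespace Zp

/-- certificate: a forbidden inner product -/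
def badA (n : ℕ) (G : List (List Zp)) : List ℕ → ℕ → Bool
  | [], _ => false
  | i :: w, s =>
    let v := zword G w (zb n s)
    let c := zdot (G.getD i []) v
    decide (i < n) && w.all (fun j => decide (j < n)) && decide (s < n) &&
      (!(zok c) || ((c == (2, 0) || c == (-2, 0)) && v != zb n i && v != znegv (zb n i)))

/-- certificate: two exact words with opposite roots -/
def badV (n : ℕ) (G : List (List Zp)) (F1 w1 F2 w2 : List ℕ) (s : ℕ) (v : List Zp) : Bool :=
  (zword G w1 (zb n s) == znegv (zword G w2 (zb n s))) &&
    exactCheck n G F1 (w1 ++ [s]) v && exactCheck n G F2 (w2 ++ [s]) v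

end Zp

namespace CoxeterRootSystem
open Zp
section H
variable {V : Type} [NormedAddCommGroup V] [InnerProductSpace ℝ V] {D : CoxeterRootSystem V}
variable {C : Set D.W} {φ : ℝ}
namespace Frame
variable {n : ℕ} {G : List (List Zp)} {a : ℕ → D.W} {x : ℕ → V}

theorem refA (h : D.Frame C φ n G a x) {w : List ℕ} {s : ℕ} (hb : badA n G w s = true) :
    False := by
  cases w with
  | nil => simp [badA] at hb
  | cons i w =>
    simp only [badA, Bool.and_eq_true, decide_eq_true_eq, List.all_eq_true, Bool.or_eq_true,
      Bool.not_eq_true', beq_iff_eq, bne_iff_ne] at hb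
    obtain ⟨⟨⟨hi, hw⟩, hs⟩, hb⟩ := hb
    have hvl : (zword G w (zb n s)).length = n := by rw [zword_length, zb_length]
    have hr : D.Root C (evv φ x (zword G w (zb n s))) := by
      rw [← h.word_b hw hs]; exact (h.root hs).act _
    have hin := inner_evv h.gold (x i) (zword G w (zb n s)) x (G.getD i [])
      (fun j hj => h.gram i hi j (hvl ▸ hj))
    rcases hb with hb | ⟨⟨hb, h1⟩, h2⟩
    · have := list_lemma h.comp h.big (h.root hi) hr
      rw [hin] at this
      rw [zok_of h.gold this] at hb
      exact absurd hb (by simp)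
    · rcases hb with hb | hb <;> rw [hb] at hin
      · have := eq_of_inner_two h.comp (h.root hi) hr (by rw [hin]; simp [ev])
        apply h1
        apply h.evv_inj hvl (zb_length _ _)
        rw [evv_zb hi, this]
      · have := eq_of_inner_two h.comp (h.root hi) (Root.neg h.comp hr)
          (by rw [inner_neg_right, hin]; simp [ev])
        apply h2
        apply h.evv_inj hvl (by simp [znegv, zb_length])
        rw [evv_neg, evv_zb hi, this, neg_neg]

theorem lt_of_exactCheck {F l : List ℕ} {v : List Zp} (hc : exactCheck n G F l v = true) :
    ∀ i ∈ l, i < n := by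
  simp only [exactCheck, Bool.and_eq_true, decide_eq_true_eq, List.all_eq_true,
    List.contains_iff_mem] at hc
  obtain ⟨⟨⟨⟨⟨⟨⟨hF, hFn⟩, hlF⟩, hv⟩, h2⟩, h3⟩, hsupp⟩, himg⟩ := hc
  exact fun i hi => hFn i (hlF i hi)

theorem refV (h : D.Frame C φ n G a x) {F1 w1 F2 w2 : List ℕ} {s : ℕ} {v : List Zp}
    (hb : badV n G F1 w1 F2 w2 s v = true) : False := by
  simp only [badV, Bool.and_eq_true, beq_iff_eq] at hb
  obtain ⟨⟨he, h1⟩, h2⟩ := hb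
  have hl1 := lt_of_exactCheck h1
  have hl2 := lt_of_exactCheck h2
  have hs : s < n := hl1 s (by simp)
  have hw1 : ∀ i ∈ w1, i < n := fun i hi => hl1 i (by simp [hi])
  have hw2 : ∀ i ∈ w2, i < n := fun i hi => hl2 i (by simp [hi])
  have hS := h.comp.sub _ (h.mem s hs)
  have e1 := h.exact h1
  have e2 := h.exact h2
  rw [List.map_append, List.map_cons, List.map_nil] at e1 e2
  have p1 := D.PP_of_exact e1
  have p2 := D.PP_of_exact e2
  have hx : D.ρ (w1.map a).prod (x s) = - D.ρ (w2.map a).prod (x s) := by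
    rw [h.word_b hw1 hs, h.word_b hw2 hs, he, evv_neg]
  have : D.ρ (w1.map a).prod (D.aa (a s)) = - D.ρ (w2.map a).prod (D.aa (a s)) := by
    rcases h.sgn s hs with e | e
    · rwa [e] at hx
    · rw [e, map_neg, map_neg] at hx
      exact neg_injective hx
  rw [this] at p1
  exact (D.PP_neg hS _).1 p1 p2

end Frame
end H
end CoxeterRootSystem

namespace Zp

/-- possible inner products of distinct letters -/
def zE : List Zp := [(0, 0), (1, 0), (-1, 0), (0, 1), (0, -1), (1, -1), (-1, 1)]
/-- rank three Gram matrix -/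
def G3 (a b : Zp) : List (List Zp) :=
  [[(2, 0), (0, -1), a], [(0, -1), (2, 0), b], [a, b, (2, 0)]]
/-- rank four Gram matrix -/
def G4 (a b c : Zp) : List (List Zp) :=
  [[(2, 0), (0, -1), (0, 0), a], [(0, -1), (2, 0), (-1, 0), b], [(0, 0), (-1, 0), (2, 0), c],
    [a, b, c, (2, 0)]]
/-- rank five Gram matrix -/
def G5 (a b : Zp) : List (List Zp) :=
  [[(2, 0), (0, -1), (0, 0), (0, 0), (0, 0)], [(0, -1), (2, 0), (-1, 0), (0, 0), (0, 0)],
    [(0, 0), (-1, 0), (2, 0), (-1, 0), a], [(0, 0), (0, 0), (-1, 0), (2, 0), b],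
    [(0, 0), (0, 0), a, b, (2, 0)]]

/-- certificates -/
def cA3 : List (List ℕ × ℕ) :=
  [([1, 2], 0),
    ([2, 0], 1),
    ([2, 1], 0)]
/-- certificates -/
def cV3 : List (List ℕ × List ℕ × List ℕ × List ℕ × ℕ) :=
  [([0, 1, 2], [0, 2, 1, 0], [0, 1, 2], [1, 0, 2, 1, 2], 1),
    ([0, 1], [0, 1, 0, 1], [0, 1, 2], [2, 1, 0, 2], 0),
    ([0, 1, 2], [0, 1, 0, 1, 2], [0, 1, 2], [2, 0, 1], 0),
    ([0, 1, 2], [0, 1, 2], [0, 1, 2], [1, 0, 2, 1, 0], 1),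
    ([0, 1, 2], [1, 0, 1, 0, 2], [0, 1, 2], [2, 1, 0], 1),
    ([0, 1], [0, 1, 0, 1], [0, 1, 2], [2, 0, 1, 2], 0),
    ([0, 1, 2], [0, 1, 2, 0, 1], [0, 1, 2], [1, 2, 0, 2], 0),
    ([0, 1, 2], [0, 1, 2, 0, 1], [0, 1, 2], [1, 0, 2], 0)]
/-- certificates -/
def cA4 : List (List ℕ × ℕ) :=
  [([3, 2], 1),
    ([3, 2, 1], 0),
    ([3, 1, 2, 0], 1),
    ([1, 0, 3, 2, 1], 0),
    ([2, 3, 2, 0, 1], 0)]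
/-- certificates -/
def cV4 : List (List ℕ × List ℕ × List ℕ × List ℕ × ℕ) :=
  [([0, 1, 2], [0, 1, 0, 2, 1], [0, 1, 2, 3], [1, 3, 0, 2, 3], 2),
    ([0, 1, 2, 3], [0, 1, 0, 2, 3], [0, 1, 2, 3], [3, 0, 2, 1], 0),
    ([1, 2, 3], [1, 2, 3], [1, 2, 3], [3, 2, 1], 2),
    ([1, 2, 3], [1, 2, 3, 1], [2, 3], [3, 2, 3, 2], 3),
    ([0, 1, 2, 3], [0, 1, 0, 1, 3, 2, 3], [0, 1, 2, 3], [2, 1, 3, 2, 1, 0, 1], 2)]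
/-- certificates -/
def cA5 : List (List ℕ × ℕ) :=
  [([4, 3], 2),
    ([4, 3, 2, 1], 0),
    ([4, 2, 3, 1, 2, 0], 1),
    ([4, 2, 3, 1, 2, 4, 3, 2, 0], 1),
    ([4, 2, 1, 0, 1, 2, 3, 0, 1, 2, 0], 1),
    ([3, 4, 2, 1, 0, 1, 2, 3, 0, 1, 2, 0], 1),
    ([4, 3, 2, 1, 0, 1, 2, 3, 0, 1, 2, 0], 1)]

/-- run the certificates -/
def runA (n : ℕ) (G : List (List Zp)) (c : List (List ℕ × ℕ)) : Bool :=
  c.any fun p => badA n G p.1 p.2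
/-- run the certificates -/
def runV (n : ℕ) (G : List (List Zp)) (v : List Zp)
    (c : List (List ℕ × List ℕ × List ℕ × List ℕ × ℕ)) : Bool :=
  c.any fun p => badV n G p.1 p.2.1 p.2.2.1 p.2.2.2.1 p.2.2.2.2 v

theorem chk3 : (zE.all fun a => zE.all fun b =>
    ([((0, 0), (0, 0)), ((0, 0), (1, 0)), ((0, 0), (-1, 0)), ((1, 0), (0, 0)),
      ((-1, 0), (0, 0))] : List (Zp × Zp)).contains (a, b) ||
    runA 3 (G3 a b) cA3 || runV 3 (G3 a b) [(1, 0), (3, 0), (7, 0)] cV3) = true := by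
  decide +kernel

theorem chk4 : (([((0, 0), (0, 0)), ((0, 0), (1, 0)), ((0, 0), (-1, 0)), ((1, 0), (0, 0)),
      ((-1, 0), (0, 0))] : List (Zp × Zp)).all fun p => zE.all fun c =>
    (p == ((0, 0), (0, 0)) && ([(0, 0), (1, 0), (-1, 0)] : List Zp).contains c) ||
    runA 4 (G4 p.1 p.2 c) cA4 ||
    runV 4 (G4 p.1 p.2 c) [(1, 0), (3, 0), (7, 0), (19, 0)] cV4) = true := by
  decide +kernel

theorem chk5 : (([(0, 0), (1, 0), (-1, 0)] : List Zp).all fun a => zE.all fun b =>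
    (a == (0, 0) && b == (0, 0)) || runA 5 (G5 a b) cA5) = true := by
  decide +kernel

/-- positive roots -/
def posH3 : List (List Zp) :=
  [[(1, 0), (0, 0), (0, 0)],
    [(0, 0), (1, 0), (0, 0)],
    [(0, 0), (0, 0), (1, 0)],
    [(1, 0), (0, 1), (0, 0)],
    [(0, 1), (1, 0), (0, 0)],
    [(0, 0), (1, 0), (1, 0)],
    [(0, 1), (0, 1), (0, 0)],
    [(1, 0), (0, 1), (0, 1)],
    [(0, 1), (1, 0), (1, 0)],
    [(0, 1), (0, 1), (0, 1)],
    [(0, 1), (1, 1), (1, 0)],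
    [(0, 1), (1, 1), (0, 1)],
    [(1, 1), (1, 1), (1, 0)],
    [(1, 1), (1, 1), (0, 1)],
    [(1, 1), (0, 2), (0, 1)]]

/-- positive roots -/
def posH4 : List (List Zp) :=
  [[(1, 0), (0, 0), (0, 0), (0, 0)],
    [(0, 0), (1, 0), (0, 0), (0, 0)],
    [(0, 0), (0, 0), (1, 0), (0, 0)],
    [(0, 0), (0, 0), (0, 0), (1, 0)],
    [(1, 0), (0, 1), (0, 0), (0, 0)],
    [(0, 1), (1, 0), (0, 0), (0, 0)],
    [(0, 0), (1, 0), (1, 0), (0, 0)],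
    [(0, 0), (0, 0), (1, 0), (1, 0)],
    [(0, 1), (0, 1), (0, 0), (0, 0)],
    [(1, 0), (0, 1), (0, 1), (0, 0)],
    [(0, 1), (1, 0), (1, 0), (0, 0)],
    [(0, 0), (1, 0), (1, 0), (1, 0)],
    [(0, 1), (0, 1), (0, 1), (0, 0)],
    [(1, 0), (0, 1), (0, 1), (0, 1)],
    [(0, 1), (1, 1), (1, 0), (0, 0)],
    [(0, 1), (1, 0), (1, 0), (1, 0)],
    [(0, 1), (1, 1), (0, 1), (0, 0)],
    [(0, 1), (0, 1), (0, 1), (0, 1)],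
    [(1, 1), (1, 1), (1, 0), (0, 0)],
    [(0, 1), (1, 1), (1, 0), (1, 0)],
    [(1, 1), (1, 1), (0, 1), (0, 0)],
    [(0, 1), (1, 1), (0, 1), (0, 1)],
    [(1, 1), (1, 1), (1, 0), (1, 0)],
    [(0, 1), (1, 1), (1, 1), (1, 0)],
    [(1, 1), (0, 2), (0, 1), (0, 0)],
    [(1, 1), (1, 1), (0, 1), (0, 1)],
    [(0, 1), (1, 1), (1, 1), (0, 1)],
    [(1, 1), (1, 1), (1, 1), (1, 0)],
    [(1, 1), (0, 2), (0, 1), (0, 1)],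
    [(1, 1), (1, 1), (1, 1), (0, 1)],
    [(1, 1), (1, 2), (1, 1), (1, 0)],
    [(1, 1), (0, 2), (0, 2), (0, 1)],
    [(1, 1), (1, 2), (1, 1), (0, 1)],
    [(1, 2), (1, 2), (1, 1), (1, 0)],
    [(1, 1), (1, 2), (0, 2), (0, 1)],
    [(1, 2), (1, 2), (1, 1), (0, 1)],
    [(1, 2), (2, 2), (1, 1), (1, 0)],
    [(1, 2), (1, 2), (0, 2), (0, 1)],
    [(1, 2), (2, 2), (1, 1), (0, 1)],
    [(1, 2), (2, 2), (2, 1), (1, 0)],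
    [(1, 2), (1, 3), (0, 2), (0, 1)],
    [(1, 2), (2, 2), (1, 2), (0, 1)],
    [(1, 2), (2, 2), (2, 1), (1, 1)],
    [(2, 2), (1, 3), (0, 2), (0, 1)],
    [(1, 2), (1, 3), (1, 2), (0, 1)],
    [(1, 2), (2, 2), (1, 2), (1, 1)],
    [(2, 2), (1, 3), (1, 2), (0, 1)],
    [(1, 2), (1, 3), (1, 2), (1, 1)],
    [(2, 2), (2, 3), (1, 2), (0, 1)],
    [(2, 2), (1, 3), (1, 2), (1, 1)],
    [(1, 3), (2, 3), (1, 2), (0, 1)],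
    [(2, 2), (2, 3), (1, 2), (1, 1)],
    [(1, 3), (2, 3), (1, 2), (1, 1)],
    [(2, 2), (2, 3), (2, 2), (1, 1)],
    [(1, 3), (2, 3), (2, 2), (1, 1)],
    [(1, 3), (3, 3), (2, 2), (1, 1)],
    [(2, 3), (3, 3), (2, 2), (1, 1)],
    [(2, 3), (2, 4), (2, 2), (1, 1)],
    [(2, 3), (2, 4), (1, 3), (1, 1)],
    [(2, 3), (2, 4), (1, 3), (0, 2)]]


/-- certificate for a list of positive roots -/
def posCheck (n : ℕ) (G : List (List Zp)) (P : List (List Zp)) : Bool :=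
  P.all (fun v => decide (v.length = n) && !(P.contains (znegv v)) &&
    (List.range n).all fun i => v == zb n i || P.contains (zact G i v)) &&
  (List.range n).all fun i => P.contains (zb n i)

theorem chkH3 : posCheck 3 (G3 (0, 0) (-1, 0)) posH3 = true := by decide +kernel

theorem chkH4 : posCheck 4 (G4 (0, 0) (0, 0) (-1, 0)) posH4 = true := by decide +kernel

end Zp

namespace CoxeterRootSystem
open Zp
section H
variable {V : Type} [NormedAddCommGroup V] [InnerProductSpace ℝ V] {D : CoxeterRootSystem V}
variable {C : Set D.W} {φ : ℝ}
namespace Frame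
variable {n : ℕ} {G : List (List Zp)} {a : ℕ → D.W} {x : ℕ → V}

theorem runA_false (h : D.Frame C φ n G a x) {c : List (List ℕ × ℕ)} :
    runA n G c = false := by
  rw [Bool.eq_false_iff]
  intro hc
  obtain ⟨p, _, hp⟩ := List.any_eq_true.1 hc
  exact h.refA hp

theorem runV_false (h : D.Frame C φ n G a x) {v : List Zp}
    {c : List (List ℕ × List ℕ × List ℕ × List ℕ × ℕ)} : runV n G v c = false := by
  rw [Bool.eq_false_iff]
  intro hc
  obtain ⟨p, _, hp⟩ := List.any_eq_true.1 hc
  exact h.refV hp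

theorem key_pos (h : D.Frame C φ n G a x) (hall : ∀ u ∈ C, ∃ i < n, u = a i)
    {P : List (List Zp)} (hP : posCheck n G P = true) {s : D.W} (hs : s ∈ C) : D.Key s := by
  classical
  simp only [posCheck, Bool.and_eq_true, decide_eq_true_eq, List.all_eq_true, List.mem_range,
    List.contains_iff_mem, Bool.or_eq_true, beq_iff_eq, Bool.not_eq_true'] at hP
  obtain ⟨hP, hPb⟩ := hP
  have hsS := h.comp.sub s hs
  obtain ⟨i, hi, rfl⟩ := hall s hs
  let Q : V → Prop := fun y => ∃ v ∈ P, y = evv φ x v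
  have hQdis : ∀ y, Q y → Q (-y) → False := by
    rintro y ⟨v, hv, rfl⟩ ⟨w, hw, e⟩
    have hvl := (hP v hv).1.1
    have hwl := (hP w hw).1.1
    rw [← evv_neg] at e
    have := h.evv_inj (by simp [znegv, hvl]) hwl e
    have hc := (hP v hv).1.2
    rw [this, Bool.eq_false_iff, ne_eq, List.contains_iff_mem] at hc
    exact hc hw
  have hQact : ∀ j < n, ∀ y, Q y → Q (D.ρ (a j) y) ∨ y = x j := by
    rintro j hj y ⟨v, hv, rfl⟩
    rcases (hP v hv).2 j hj with e | e
    · right; rw [e, evv_zb hj]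
    · left; exact ⟨_, e, h.act hj (hP v hv).1.1⟩
  have hQx : ∀ j < n, Q (x j) := fun j hj => ⟨_, hPb j hj, (evv_zb hj x).symm⟩
  have hxj : ∀ j < n, D.ρ (a j) (x j) = - x j := by
    intro j hj
    have := D.rho_neg_self (h.comp.sub _ (h.mem j hj))
    rcases h.sgn j hj with e | e <;> rw [e]
    · exact this
    · rw [map_neg, this]
  have hout : ∀ t ∈ D.S, t ∉ C → ∀ g, D.ρ t (D.ρ g (x i)) = D.ρ g (x i) := by
    intro t ht htC g
    rw [D.rho_simple ht, span_orth h.comp ht htC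
      (Root.mem_span h.comp ((h.root hi).act g)), zero_smul, sub_zero]
  have hdich : ∀ g, Q (D.ρ g (x i)) ∨ Q (-D.ρ g (x i)) := by
    intro g
    induction g using D.word_induction with
    | h1 => left; rw [rho_one]; exact hQx i hi
    | h2 t ht g ih =>
      rw [rho_mul]
      by_cases htC : t ∈ C
      · obtain ⟨j, hj, rfl⟩ := hall t htC
        rcases ih with ih | ih
        · rcases hQact j hj _ ih with e | e
          · exact Or.inl e
          · right; rw [e, hxj j hj, neg_neg]; exact hQx j hj
        · rcases hQact j hj _ ih with e | e
          · right; rwa [map_neg] at e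
          · left; rw [neg_eq_iff_eq_neg.1 e, map_neg, hxj j hj, neg_neg]; exact hQx j hj
      · rw [hout t ht htC]; exact ih
  have hpar : ∀ j < n, ∀ g, (D.ρ g (x i) = x j ∨ D.ρ g (x i) = - x j) →
      a j * g = g * a i := by
    intro j hj g hg
    apply D.comm_of_par (h.comp.sub _ (h.mem j hj)) hsS
    rcases h.sgn i hi with e | e <;> rcases h.sgn j hj with e' | e' <;> rw [e, e'] at hg
    · exact hg
    · rw [neg_neg] at hg; exact hg.symm
    · rw [map_neg, neg_inj, neg_eq_iff_eq_neg] at hg; exact hg.symm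
    · rw [map_neg, neg_inj, neg_neg, neg_eq_iff_eq_neg] at hg; exact hg
  refine ⟨fun g => decide (Q (D.ρ g (x i))), ?_, ?_⟩
  · intro g
    beta_reduce
    rw [rho_mul, hxj i hi, map_neg, ← decide_not, decide_eq_decide]
    constructor
    · intro h1 h2; exact hQdis _ h2 h1
    · intro h1; exact (hdich g).resolve_left h1
  · intro t ht g hne
    by_cases htC : t ∈ C
    · obtain ⟨j, hj, rfl⟩ := hall t htC
      by_contra hcon
      apply hne
      rw [decide_eq_decide, rho_mul]
      rcases hdich g with e | e
      · rcases hQact j hj _ e with e' | e'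
        · tauto
        · exact absurd (hpar j hj g (Or.inl e')) hcon
      · rcases hQact j hj _ e with e' | e'
        · rw [map_neg] at e'
          constructor
          · intro h1; exact absurd e' (fun h2 => hQdis _ h1 h2)
          · intro h1; exact absurd e (fun h2 => hQdis _ h1 h2)
        · exact absurd (hpar j hj g (Or.inr (neg_eq_iff_eq_neg.1 e'))) hcon
    · exfalso; apply hne
      beta_reduce
      rw [rho_mul, hout t ht htC]

end Frame

end H
end CoxeterRootSystem

namespace Zp

/-- possible squares of inner products -/
def zL : List Zp := [(4, 0), (0, 0), (1, 0), (2, 0), (1, 1), (2, -1)]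

/-- test excluding inner products `± √2` -/
def nsB (b : Zp) : Bool :=
  zL.all fun d => zmul (8, 8) b !=
    zmul (zsub (zsub d b) (2, 2)) (zsub (zsub d b) (2, 2))

theorem nsB_zL : ∀ b ∈ zL, nsB b = true := by decide +kernel

/-- the admissible values -/
def LL (c : ℝ) : Prop :=
  c ^ 2 = 4 ∨ c ^ 2 = 0 ∨ c ^ 2 = 1 ∨ c ^ 2 = 2 ∨ (c ^ 2) ^ 2 - 3 * c ^ 2 + 1 = 0

theorem gold_cases {φ c : ℝ} (h : φ ^ 2 = φ + 1) (hc : (c ^ 2) ^ 2 - 3 * c ^ 2 + 1 = 0) :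
    c = φ ∨ c = -φ ∨ c = 1 - φ ∨ c = -1 + φ := by
  have : (c - φ) * (c + φ) * ((c - (1 - φ)) * (c - (-1 + φ))) = 0 := by
    linear_combination hc + (-2 * c ^ 2 + φ ^ 2 - φ + 1) * h
  rcases mul_eq_zero.1 this with h1 | h1 <;> rcases mul_eq_zero.1 h1 with h1 | h1
  · left; linarith
  · right; left; linarith
  · right; right; left; linarith
  · right; right; right; linarith

theorem LL_sq {φ c : ℝ} (h : φ ^ 2 = φ + 1) (hc : LL c) : ∃ z ∈ zL, c ^ 2 = ev φ z := by
  rcases hc with hc | hc | hc | hc | hc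
  · exact ⟨(4, 0), by decide, by simp [ev, hc]⟩
  · exact ⟨(0, 0), by decide, by simp [ev, hc]⟩
  · exact ⟨(1, 0), by decide, by simp [ev, hc]⟩
  · exact ⟨(2, 0), by decide, by simp [ev, hc]⟩
  · rcases gold_cases h hc with e | e | e | e <;> rw [e]
    · exact ⟨(1, 1), by decide, by simp [ev]; linarith⟩
    · exact ⟨(1, 1), by decide, by simp [ev]; linarith⟩
    · exact ⟨(2, -1), by decide, by simp [ev]; linarith⟩
    · exact ⟨(2, -1), by decide, by simp [ev]; linarith⟩

theorem LL_class {φ c : ℝ} (h : φ ^ 2 = φ + 1) (hc : LL c) :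
    c ^ 2 = 4 ∨ c ^ 2 = 2 ∨ ∃ z ∈ zE, c = ev φ z := by
  rcases hc with hc | hc | hc | hc | hc
  · exact Or.inl hc
  · exact Or.inr (Or.inr ⟨(0, 0), by decide, by simpa [ev] using hc⟩)
  · rcases mul_eq_zero.1 (show (c - 1) * (c + 1) = 0 by linear_combination hc) with e | e
    · exact Or.inr (Or.inr ⟨(1, 0), by decide, by simp [ev]; linarith⟩)
    · exact Or.inr (Or.inr ⟨(-1, 0), by decide, by simp [ev]; linarith⟩)
  · exact Or.inr (Or.inl hc)
  · right; right
    rcases gold_cases h hc with e | e | e | e <;> rw [e]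
    · exact ⟨(0, 1), by decide, by simp [ev]⟩
    · exact ⟨(0, -1), by decide, by simp [ev]⟩
    · exact ⟨(1, -1), by decide, by simp [ev]; ring⟩
    · exact ⟨(-1, 1), by decide, by simp [ev]⟩

theorem no_sqrt {φ c b : ℝ} (h : φ ^ 2 = φ + 1) (hc : c ^ 2 = 2) (hd : LL (φ * c + b))
    {B : Zp} (hb : b ^ 2 = ev φ B) (hB : nsB B = true) : False := by
  obtain ⟨d, hd, e⟩ := LL_sq h hd
  have := List.all_eq_true.1 hB d hd
  rw [bne_iff_ne] at this
  apply this
  apply ev_inj h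
  simp only [ev_mul h, ev_sub, ← hb, ← e]
  simp only [ev]
  push_cast
  have e2 : φ ^ 2 * c ^ 2 = 2 + 2 * φ := by rw [h, hc]; ring
  have e3 : (φ * c + b) ^ 2 - b ^ 2 - (2 + 2 * φ) = 2 * φ * c * b := by
    linear_combination e2
  rw [e3]
  linear_combination (-4 * b ^ 2) * e2

end Zp

namespace CoxeterRootSystem
open Zp
section H
variable {V : Type} [NormedAddCommGroup V] [InnerProductSpace ℝ V] {D : CoxeterRootSystem V}
variable {C : Set D.W} {φ : ℝ}

/-- rank two Gram matrix -/
def G2 : List (List Zp) := [[(2, 0), (0, -1)], [(0, -1), (2, 0)]]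

namespace Frame
variable {n : ℕ} {G : List (List Zp)} {a : ℕ → D.W} {x : ℕ → V}

theorem snoc (h : D.Frame C φ n G a x) {r : D.W} {y : V} (hr : r ∈ C) (hne : ∀ i < n, a i ≠ r)
    (hy : y = D.aa r ∨ y = - D.aa r) {G' : List (List Zp)} {row : ℕ → Zp}
    (hrow : ∀ i < n, ⟪x i, y⟫ = ev φ (row i))
    (hG : ∀ i < n, ∀ j < n, (G'.getD i []).getD j (0, 0) = (G.getD i []).getD j (0, 0))
    (hG1 : ∀ i < n, (G'.getD i []).getD n (0, 0) = row i ∧ (G'.getD n []).getD i (0, 0) = row i)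
    (hG2 : (G'.getD n []).getD n (0, 0) = (2, 0)) :
    D.Frame C φ (n + 1) G' (Function.update a n r) (Function.update x n y) := by
  have hrS := h.comp.sub r hr
  have key : ∀ i < n + 1, i < n ∨ i = n := fun i hi => by omega
  refine ⟨h.comp, h.big, h.gold, ?_, ?_, ?_, ?_⟩
  · intro i hi
    rcases key i hi with hi | rfl
    · rw [Function.update_of_ne (by omega)]; exact h.mem i hi
    · simpa using hr
  · intro i hi j hj e
    rcases key i hi with hi | rfl <;> rcases key j hj with hj | rfl
    · rw [Function.update_of_ne (by omega), Function.update_of_ne (by omega)] at e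
      exact h.inj i hi j hj e
    · rw [Function.update_of_ne (by omega), Function.update_self] at e
      exact absurd e (hne i hi)
    · rw [Function.update_self, Function.update_of_ne (by omega)] at e
      exact absurd e.symm (hne j hj)
    · rfl
  · intro i hi
    rcases key i hi with hi | rfl
    · rw [Function.update_of_ne (by omega), Function.update_of_ne (by omega)]; exact h.sgn i hi
    · simpa using hy
  · intro i hi j hj
    rcases key i hi with hi | rfl <;> rcases key j hj with hj | rfl
    · rw [Function.update_of_ne (by omega), Function.update_of_ne (by omega), hG i hi j hj]
      exact h.gram i hi j hj
    · rw [Function.update_of_ne (by omega), Function.update_self, (hG1 i hi).1]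
      exact hrow i hi
    · rw [Function.update_self, Function.update_of_ne (by omega), (hG1 j hj).2, real_inner_comm]
      exact hrow j hj
    · rw [Function.update_self, hG2]
      have hyy : ⟪y, y⟫ = 2 := by
        rcases hy with rfl | rfl
        · exact D.aa_sq hrS
        · rw [inner_neg_neg]; exact D.aa_sq hrS
      rw [hyy]; simp [ev]

theorem restrict (h : D.Frame C φ n G a x) {m : ℕ} (hm : m ≤ n) {G' : List (List Zp)}
    (hG : ∀ i < m, ∀ j < m, (G'.getD i []).getD j (0, 0) = (G.getD i []).getD j (0, 0)) :
    D.Frame C φ m G' a x :=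
  ⟨h.comp, h.big, h.gold, fun i hi => h.mem i (by omega),
    fun i hi j hj => h.inj i (by omega) j (by omega), fun i hi => h.sgn i (by omega),
    fun i hi j hj => by rw [hG i hi j hj]; exact h.gram i (by omega) j (by omega)⟩

theorem LLr (h : D.Frame C φ n G a x) {y z : V} (hy : D.Root C y) (hz : D.Root C z) :
    LL ⟪y, z⟫ := list_lemma h.comp h.big hy hz

theorem row_class (h : D.Frame C φ n G a x) {i : ℕ} (hi : i < n) {r : D.W} {y : V}
    (hr : r ∈ C) (hne : a i ≠ r) (hy : y = D.aa r ∨ y = - D.aa r) :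
    ⟪x i, y⟫ ^ 2 = 2 ∨ ∃ z ∈ zE, ⟪x i, y⟫ = ev φ z := by
  have hyr : D.Root C y := by
    rcases hy with rfl | rfl
    · exact root_aa' hr
    · exact Root.neg h.comp (root_aa' hr)
  rcases LL_class h.gold (h.LLr (h.root hi) hyr) with e | e | e
  · exfalso
    have : ⟪D.aa (a i), D.ρ 1 (D.aa r)⟫ ^ 2 = 4 := by
      rw [rho_one, ← e]
      rcases h.sgn i hi with e1 | e1 <;> rcases hy with e2 | e2 <;> rw [e1, e2] <;> simp
    have := par_of_four h.comp (h.mem i hi) hr this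
    simp at this
    exact hne this
  · exact Or.inl e
  · exact Or.inr e

theorem next (h : D.Frame C φ n G a x) (hn : 0 < n) : (∀ u ∈ C, ∃ i < n, u = a i) ∨
    ∃ t ∈ C, (∀ i < n, a i ≠ t) ∧ ∃ i < n, ⟪x i, D.aa t⟫ ≠ 0 := by
  by_contra hcon
  rw [not_or] at hcon
  obtain ⟨h1, h2⟩ := hcon
  apply h1
  apply h.comp.conn (fun u => ∃ i < n, u = a i) ⟨a 0, h.mem 0 hn, 0, hn, rfl⟩
  rintro t _ u hu htu ⟨i, hi, rfl⟩
  by_contra hno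
  apply h2
  refine ⟨u, hu, fun j hj e => hno ⟨j, hj, e.symm⟩, i, hi, ?_⟩
  rcases h.sgn i hi with e | e <;> rw [e]
  · exact htu
  · simpa using htu

theorem root_y (h : D.Frame C φ n G a x) {r : D.W} {y : V} (hr : r ∈ C)
    (hy : y = D.aa r ∨ y = - D.aa r) : D.Root C y := by
  rcases hy with rfl | rfl
  · exact root_aa' hr
  · exact Root.neg h.comp (root_aa' hr)

theorem step3 (h : D.Frame C φ 2 G2 a x) {r : D.W} {y : V}
    (hr : r ∈ C) (hne : ∀ i < 2, a i ≠ r) (hy : y = D.aa r ∨ y = - D.aa r) :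
    ∃ p ∈ ([((0, 0), (0, 0)), ((0, 0), (1, 0)), ((0, 0), (-1, 0)), ((1, 0), (0, 0)),
      ((-1, 0), (0, 0))] : List (Zp × Zp)), ⟪x 0, y⟫ = ev φ p.1 ∧ ⟪x 1, y⟫ = ev φ p.2 := by
  have hyr := h.root_y hr hy
  have h0 := h.root (i := 0) (by omega)
  have h1 := h.root (i := 1) (by omega)
  have g01 : ⟪x 0, x 1⟫ = -φ := by rw [h.gram 0 (by omega) 1 (by omega)]; simp [G2, ev]
  have hA : D.Root C (x 1 + φ • x 0) := by
    have := Root.refl h.comp h0 h1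
    rwa [g01, neg_smul, sub_neg_eq_add] at this
  have hB : D.Root C (x 0 + φ • x 1) := by
    have := Root.refl h.comp h1 h0
    rwa [real_inner_comm, g01, neg_smul, sub_neg_eq_add] at this
  have c0 : ∃ z ∈ zE, ⟪x 0, y⟫ = ev φ z := by
    refine (h.row_class (by omega) hr (hne 0 (by omega)) hy).resolve_left fun e => ?_
    obtain ⟨z, hz, hz'⟩ := LL_sq h.gold (h.LLr h1 hyr)
    refine no_sqrt h.gold e ?_ hz' (nsB_zL z hz)
    have := h.LLr hA hyr
    rwa [inner_add_left, real_inner_smul_left, add_comm] at this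
  have c1 : ∃ z ∈ zE, ⟪x 1, y⟫ = ev φ z := by
    refine (h.row_class (by omega) hr (hne 1 (by omega)) hy).resolve_left fun e => ?_
    obtain ⟨z, hz, hz'⟩ := LL_sq h.gold (h.LLr h0 hyr)
    refine no_sqrt h.gold e ?_ hz' (nsB_zL z hz)
    have := h.LLr hB hyr
    rwa [inner_add_left, real_inner_smul_left, add_comm] at this
  obtain ⟨z0, hz0, e0⟩ := c0
  obtain ⟨z1, hz1, e1⟩ := c1
  have hF := h.snoc (G' := G3 z0 z1) (row := fun i => if i = 0 then z0 else z1) hr hne hy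
    (by intro i hi; interval_cases i
        · simpa using e0
        · simpa using e1)
    (by intro i hi j hj; interval_cases i <;> interval_cases j <;> rfl)
    (by intro i hi; interval_cases i <;> exact ⟨rfl, rfl⟩) rfl
  have := List.all_eq_true.1 (List.all_eq_true.1 chk3 z0 hz0) z1 hz1
  rw [hF.runA_false, hF.runV_false, Bool.or_false, Bool.or_false, List.contains_iff_mem] at this
  exact ⟨_, this, e0, e1⟩

theorem step4 (h : D.Frame C φ 3 (G3 (0, 0) (-1, 0)) a x) {r : D.W} {y : V}
    (hr : r ∈ C) (hne : ∀ i < 3, a i ≠ r) (hy : y = D.aa r ∨ y = - D.aa r) :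
    ⟪x 0, y⟫ = 0 ∧ ⟪x 1, y⟫ = 0 ∧
      ∃ c ∈ ([(0, 0), (1, 0), (-1, 0)] : List Zp), ⟪x 2, y⟫ = ev φ c := by
  have hyr := h.root_y hr hy
  have h' : D.Frame C φ 2 G2 a x := h.restrict (by omega)
    (by intro i hi j hj; interval_cases i <;> interval_cases j <;> rfl)
  obtain ⟨p, hp, e0, e1⟩ := h'.step3 hr (fun i hi => hne i (by omega)) hy
  have hR : D.Root C (φ • x 0 + (1 + φ) • x 1 + φ • x 2) := by
    have := (h.root (i := 2) (by omega)).act (([2, 1, 0, 1].map a).prod)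
    rw [h.word_b (by simp) (by omega),
      show zword (G3 (0, 0) (-1, 0)) [2, 1, 0, 1] (zb 3 2) = [(0, 1), (1, 1), (0, 1)] by
        decide +kernel] at this
    simpa [evv, ev, add_assoc] using this
  have c2 : ∃ z ∈ zE, ⟪x 2, y⟫ = ev φ z := by
    refine (h.row_class (by omega) hr (hne 2 (by omega)) hy).resolve_left fun e => ?_
    have hL := h.LLr hR hyr
    rw [inner_add_left, inner_add_left, real_inner_smul_left, real_inner_smul_left,
      real_inner_smul_left, add_comm, e0, e1] at hL
    refine no_sqrt h.gold e hL
      (B := zmul (zadd (zmul (0, 1) p.1) (zmul (1, 1) p.2))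
        (zadd (zmul (0, 1) p.1) (zmul (1, 1) p.2))) ?_ ?_
    · simp only [ev_mul h.gold, ev_add]
      simp only [ev]
      push_cast
      ring
    · have hall : ∀ p ∈ ([((0, 0), (0, 0)), ((0, 0), (1, 0)), ((0, 0), (-1, 0)), ((1, 0), (0, 0)),
      ((-1, 0), (0, 0))] : List (Zp × Zp)), nsB (zmul (zadd (zmul (0, 1) p.1) (zmul (1, 1) p.2))
          (zadd (zmul (0, 1) p.1) (zmul (1, 1) p.2))) = true := by
        decide +kernel
      exact hall p hp
  obtain ⟨z, hz, e2⟩ := c2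
  have hF := h.snoc (G' := G4 p.1 p.2 z)
    (row := fun i => if i = 0 then p.1 else if i = 1 then p.2 else z) hr hne hy
    (by intro i hi; interval_cases i
        · simpa using e0
        · simpa using e1
        · simpa using e2)
    (by intro i hi j hj; interval_cases i <;> interval_cases j <;> rfl)
    (by intro i hi; interval_cases i <;> exact ⟨rfl, rfl⟩) rfl
  have := List.all_eq_true.1 (List.all_eq_true.1 chk4 p hp) z hz
  rw [hF.runA_false, hF.runV_false, Bool.or_false, Bool.or_false, Bool.and_eq_true,
    List.contains_iff_mem, beq_iff_eq] at this
  obtain ⟨rfl, hz'⟩ := this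
  exact ⟨by simpa using e0, by simpa using e1, z, hz', e2⟩

theorem step5 (h : D.Frame C φ 4 (G4 (0, 0) (0, 0) (-1, 0)) a x) {r : D.W} {y : V}
    (hr : r ∈ C) (hne : ∀ i < 4, a i ≠ r) (hy : y = D.aa r ∨ y = - D.aa r) :
    ∀ i < 4, ⟪x i, y⟫ = 0 := by
  have hyr := h.root_y hr hy
  have h' : D.Frame C φ 3 (G3 (0, 0) (-1, 0)) a x := h.restrict (by omega)
    (by intro i hi j hj; interval_cases i <;> interval_cases j <;> rfl)
  obtain ⟨e0, e1, c, hc, e2⟩ := h'.step4 hr (fun i hi => hne i (by omega)) hy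
  have hR : D.Root C (φ • x 0 + (1 + φ) • x 1 + φ • x 2 + φ • x 3) := by
    have := (h.root (i := 2) (by omega)).act (([3, 2, 1, 0, 1].map a).prod)
    rw [h.word_b (by simp) (by omega),
      show zword (G4 (0, 0) (0, 0) (-1, 0)) [3, 2, 1, 0, 1] (zb 4 2) =
        [(0, 1), (1, 1), (0, 1), (0, 1)] by decide +kernel] at this
    simpa [evv, ev, add_assoc] using this
  have c3 : ∃ z ∈ zE, ⟪x 3, y⟫ = ev φ z := by
    refine (h.row_class (by omega) hr (hne 3 (by omega)) hy).resolve_left fun e => ?_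
    have hL := h.LLr hR hyr
    rw [inner_add_left, inner_add_left, inner_add_left, real_inner_smul_left,
      real_inner_smul_left, real_inner_smul_left, real_inner_smul_left, add_comm, e0, e1, e2,
      mul_zero, mul_zero, add_zero, zero_add] at hL
    refine no_sqrt h.gold e hL (B := zmul (zmul (0, 1) c) (zmul (0, 1) c)) ?_ ?_
    · simp only [ev_mul h.gold]
      simp only [ev]
      push_cast
      ring
    · have hall : ∀ c ∈ ([(0, 0), (1, 0), (-1, 0)] : List Zp),
          nsB (zmul (zmul (0, 1) c) (zmul (0, 1) c)) = true := by
        decide +kernel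
      exact hall c hc
  obtain ⟨z, hz, e3⟩ := c3
  have hF := h.snoc (G' := G5 c z)
    (row := fun i => if i = 2 then c else if i = 3 then z else (0, 0)) hr hne hy
    (by intro i hi; interval_cases i
        · simpa using e0
        · simpa using e1
        · simpa using e2
        · simpa using e3)
    (by intro i hi j hj; interval_cases i <;> interval_cases j <;> rfl)
    (by intro i hi; interval_cases i <;> exact ⟨rfl, rfl⟩) rfl
  have := List.all_eq_true.1 (List.all_eq_true.1 chk5 c hc) z hz
  rw [hF.runA_false, Bool.or_false, Bool.and_eq_true, beq_iff_eq, beq_iff_eq] at this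
  obtain ⟨rfl, rfl⟩ := this
  intro i hi
  interval_cases i
  · exact e0
  · exact e1
  · simpa using e2
  · simpa using e3

theorem key4 (h : D.Frame C φ 4 (G4 (0, 0) (0, 0) (-1, 0)) a x) {s : D.W} (hs : s ∈ C) :
    D.Key s := by
  rcases h.next (by omega) with hall | ⟨t, ht, hne, i, hi, hti⟩
  · exact h.key_pos hall chkH4 hs
  · exact absurd (h.step5 ht hne (Or.inl rfl) i hi) hti

theorem key3 (h : D.Frame C φ 3 (G3 (0, 0) (-1, 0)) a x) {s : D.W} (hs : s ∈ C) :
    D.Key s := by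
  rcases h.next (by omega) with hall | ⟨t, ht, hne, i, hi, hti⟩
  · exact h.key_pos hall chkH3 hs
  · obtain ⟨e0, e1, c, hc, e2⟩ := h.step4 ht hne (Or.inl rfl)
    obtain ⟨y, hy, e0, e1, e2⟩ : ∃ y, (y = D.aa t ∨ y = - D.aa t) ∧ ⟪x 0, y⟫ = 0 ∧
        ⟪x 1, y⟫ = 0 ∧ ⟪x 2, y⟫ = -1 := by
      simp only [List.mem_cons, List.not_mem_nil, or_false] at hc
      rcases hc with rfl | rfl | rfl
      · exfalso
        apply hti
        interval_cases i
        · exact e0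
        · exact e1
        · simpa using e2
      · exact ⟨_, Or.inr rfl, by simpa using e0, by simpa using e1, by simpa using e2⟩
      · exact ⟨_, Or.inl rfl, e0, e1, by simpa [ev] using e2⟩
    have hF := h.snoc (G' := G4 (0, 0) (0, 0) (-1, 0))
      (row := fun i => if i = 2 then (-1, 0) else (0, 0)) ht hne hy
      (by intro i hi; interval_cases i
          · simpa using e0
          · simpa using e1
          · simpa [ev] using e2)
      (by intro i hi j hj; interval_cases i <;> interval_cases j <;> rfl)
      (by intro i hi; interval_cases i <;> exact ⟨rfl, rfl⟩) rfl
    exact hF.key4 hs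

theorem key2 (h : D.Frame C φ 2 G2 a x) {t : D.W} (ht : t ∈ C) (hne : ∀ i < 2, a i ≠ t)
    (e0 : ⟪x 0, D.aa t⟫ = 0) (e1 : ⟪x 1, D.aa t⟫ = 1 ∨ ⟪x 1, D.aa t⟫ = -1)
    {s : D.W} (hs : s ∈ C) : D.Key s := by
  obtain ⟨y, hy, e0, e1⟩ : ∃ y, (y = D.aa t ∨ y = - D.aa t) ∧ ⟪x 0, y⟫ = 0 ∧
      ⟪x 1, y⟫ = -1 := by
    rcases e1 with e1 | e1
    · exact ⟨_, Or.inr rfl, by simpa using e0, by simpa using e1⟩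
    · exact ⟨_, Or.inl rfl, e0, e1⟩
  have hF := h.snoc (G' := G3 (0, 0) (-1, 0))
    (row := fun i => if i = 1 then (-1, 0) else (0, 0)) ht hne hy
    (by intro i hi; interval_cases i
        · simpa using e0
        · simpa [ev] using e1)
    (by intro i hi j hj; interval_cases i <;> interval_cases j <;> rfl)
    (by intro i hi; interval_cases i <;> exact ⟨rfl, rfl⟩) rfl
  exact hF.key3 hs

theorem swap (h : D.Frame C φ 2 G2 a x) :
    D.Frame C φ 2 G2 (fun k => a (1 - k)) (fun k => x (1 - k)) := by
  refine ⟨h.comp, h.big, h.gold, fun i hi => h.mem _ (by omega), ?_,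
    fun i hi => h.sgn _ (by omega), ?_⟩
  · intro i hi j hj e
    have := h.inj _ (by omega) _ (by omega) e
    omega
  · intro i hi j hj
    have := h.gram (1 - i) (by omega) (1 - j) (by omega)
    rw [this]
    interval_cases i <;> interval_cases j <;> rfl

theorem key2' (h : D.Frame C φ 2 G2 a x) {s : D.W} (hs : s ∈ C) : D.Key s := by
  rcases h.next (by omega) with hall | ⟨t, ht, hne, i, hi, hti⟩
  · exfalso
    obtain ⟨p, hp, q, hq, r, hr, h1, h2, h3⟩ := h.big
    obtain ⟨i, hi, rfl⟩ := hall p hp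
    obtain ⟨j, hj, rfl⟩ := hall q hq
    obtain ⟨k, hk, rfl⟩ := hall r hr
    have h1' : i ≠ j := fun e => h1 (by rw [e])
    have h2' : i ≠ k := fun e => h2 (by rw [e])
    have h3' : j ≠ k := fun e => h3 (by rw [e])
    omega
  · obtain ⟨p, hp, e0, e1⟩ := h.step3 ht hne (Or.inl rfl)
    simp only [List.mem_cons, List.not_mem_nil, or_false] at hp
    rcases hp with rfl | rfl | rfl | rfl | rfl
    · exfalso
      apply hti
      interval_cases i
      · simpa using e0
      · simpa using e1
    · exact h.key2 ht hne (by simpa using e0) (Or.inl (by simpa [ev] using e1)) hs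
    · exact h.key2 ht hne (by simpa using e0) (Or.inr (by simpa [ev] using e1)) hs
    · exact h.swap.key2 ht (fun i hi => hne _ (by omega)) (by simpa using e1)
        (Or.inl (by simpa [ev] using e0)) hs
    · exact h.swap.key2 ht (fun i hi => hne _ (by omega)) (by simpa using e1)
        (Or.inr (by simpa [ev] using e0)) hs

end Frame

theorem key_gold (hC : D.IsComp C) (hB : Big C) {p q : D.W} (hp : p ∈ C) (hq : q ∈ C)
    (hpq : (⟪D.aa p, D.aa q⟫ ^ 2) ^ 2 - 3 * ⟪D.aa p, D.aa q⟫ ^ 2 + 1 = 0)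
    {s : D.W} (hs : s ∈ C) : D.Key s := by
  have hpS := hC.sub p hp
  have hqS := hC.sub q hq
  have hne : p ≠ q := by
    rintro rfl
    rw [D.aa_sq hpS] at hpq
    norm_num at hpq
  obtain ⟨φ, y, hφ, hy, e⟩ : ∃ φ : ℝ, ∃ y, φ ^ 2 = φ + 1 ∧ (y = D.aa q ∨ y = - D.aa q) ∧
      ⟪D.aa p, y⟫ = -φ := by
    have : (⟪D.aa p, D.aa q⟫ ^ 2 - ⟪D.aa p, D.aa q⟫ - 1) *
        (⟪D.aa p, D.aa q⟫ ^ 2 + ⟪D.aa p, D.aa q⟫ - 1) = 0 := by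
      linear_combination hpq
    rcases mul_eq_zero.1 this with h | h
    · exact ⟨⟪D.aa p, D.aa q⟫, - D.aa q, by linarith, Or.inr rfl, by rw [inner_neg_right]⟩
    · exact ⟨-⟪D.aa p, D.aa q⟫, D.aa q, by linear_combination h, Or.inl rfl, by ring⟩
  have hF : D.Frame C φ 2 G2 (fun k => if k = 0 then p else q)
      (fun k => if k = 0 then D.aa p else y) := by
    refine ⟨hC, hB, hφ, ?_, ?_, ?_, ?_⟩
    · intro i hi; interval_cases i <;> simpa
    · intro i hi j hj
      interval_cases i <;> interval_cases j <;> simp [hne, hne.symm]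
    · intro i hi; interval_cases i
      · simp
      · simpa using hy
    · have hyy : ⟪y, y⟫ = 2 := by
        rcases hy with rfl | rfl
        · exact D.aa_sq hqS
        · rw [inner_neg_neg]; exact D.aa_sq hqS
      intro i hi j hj
      interval_cases i <;> interval_cases j
      · change ⟪D.aa p, D.aa p⟫ = ev φ (2, 0)
        rw [D.aa_sq hpS]; simp [ev]
      · simp [G2, ev, e]
      · simp [G2, ev]; rw [real_inner_comm]; exact e
      · change ⟪y, y⟫ = ev φ (2, 0)
        rw [hyy]; simp [ev]
  exact hF.key2' hs

theorem key_all {s : D.W} (hs : s ∈ D.S) : D.Key s := by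
  obtain ⟨C, hC, hsC⟩ := D.exists_comp hs
  by_cases hB : Big C
  · by_cases hcr : Crys D C
    · exact key_crys hC hB hcr hsC
    · unfold Crys at hcr
      push Not at hcr
      obtain ⟨p, hp, q, hq, h⟩ := hcr
      exact key_gold hC hB hp hq h hsC
  · apply key_rank2 hC hsC
    intro t ht
    by_contra hno
    push Not at hno
    obtain ⟨u, hu, hut, _⟩ := hno t
    obtain ⟨v, hv, hvt, hvu⟩ := hno u
    exact hB ⟨t, ht, u, hu, v, hv, hut.symm, hvt.symm, hvu.symm⟩

end H
end CoxeterRootSystem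

variable {V : Type} [NormedAddCommGroup V] [InnerProductSpace ℝ V]
/-- Let `s ∈ S` and a reflection `r` with `s ≠ r`, and suppose
`x ≺ sx, rx ≤ y` in Bruhat order while `srx ≰ y`. Then `y ≺ sy`, `srx ≤ sy`, and the Bruhat
intervals `[rx, y]` and `[srx, sy]` are isomorphic as posets via `w ↦ sw`. -/
theorem bruhat_interval_iso_of_not_le
    (D : CoxeterRootSystem V) (x y s r : D.W) (hs : s ∈ D.S) (hr : D.IsRefl r) (hne : s ≠ r)
    (h1 : D.Cov x (s * x)) (h2 : D.Cov x (r * x))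
    (h3 : D.BruhatLE (s * x) y) (h4 : D.BruhatLE (r * x) y)
    (h5 : ¬ D.BruhatLE (s * r * x) y) :
    D.Cov y (s * y) ∧ D.BruhatLE (s * r * x) (s * y) ∧
      (∀ z : D.W, (D.BruhatLE (r * x) z ∧ D.BruhatLE z y) ↔
        (D.BruhatLE (s * r * x) (s * z) ∧ D.BruhatLE (s * z) (s * y))) ∧
      (∀ z z' : D.W, D.BruhatLE (r * x) z → D.BruhatLE z y →
        D.BruhatLE (r * x) z' → D.BruhatLE z' y →
        (D.BruhatLE z z' ↔ D.BruhatLE (s * z) (s * z'))) := by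
  exact D.final_of_key (fun s hs => CoxeterRootSystem.key_all hs) x y s r hs hr hne h1 h2 h3 h4 h5
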